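/- arXiv:math/9201214 — 3 statements merged into one kernel-verified Lean document; each statement's English description precedes it below -/
import Mathlib

section
/- Let X be a complemented subspace of X_p which is isomorphic to a complemented subspace of ℓ_p ⊕ ℓ_2. Then there exist a subspace Z of X and positive constants ε, β, β' with ε ≤ 1 such that (a) r(z) ≥ β' for all nonzero z ∈ Z, and (b) for every x ∈ X with r(x) > β there exists z ∈ Z with |x − z|_2 < ε·|x|_2. -/
open scoped ENNReal

noncomputable section

/-- The sequence space `ℓ_p` (of real sequences), for a real exponent `p`. -/
abbrev SeqP (p : ℝ) := lp (fun _ : ℕ => ℝ) (ENNReal.ofReal p)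

/-- The sequence space `ℓ_2` (of real sequences). -/
abbrev Seq2 := lp (fun _ : ℕ => ℝ) 2

/-- The space `X_{p,w}`, realized as the submodule of `ℓ_p ⊕_∞ ℓ_2` consisting of the
pairs `(x, y)` with `y n = w n * x n`.  Since the norm on the product is the maximum of
the two norms, this is exactly the completion of the finitely supported sequences under
`‖a‖ = max {|a|_p, |a|_{2,w}}`, the element with coordinates `a` being identified with
the pair `(a, w·a)`. -/
def XpwMod (p : ℝ) (w : ℕ → ℝ) : Submodule ℝ (SeqP p × Seq2) where
  carrier := {z | ∀ n, (z.2 : ℕ → ℝ) n = w n * (z.1 : ℕ → ℝ) n}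
  add_mem' := by
    intro a b ha hb n
    simp only [Prod.fst_add, Prod.snd_add, lp.coeFn_add, Pi.add_apply, ha n, hb n]
    ring
  zero_mem' := by
    intro n
    simp
  smul_mem' := by
    intro c a ha n
    simp only [Prod.smul_fst, Prod.smul_snd, lp.coeFn_smul, Pi.smul_apply, ha n,
      smul_eq_mul]
    ring

/-- The space `X_{p,w}` with its natural norm `‖a‖ = max {|a|_p, |a|_{2,w}}`. -/
def Xpw (p : ℝ) (w : ℕ → ℝ) : Type := ↥(XpwMod p w)

variable {p : ℝ} {w : ℕ → ℝ}

instance [Fact (1 ≤ ENNReal.ofReal p)] : NormedAddCommGroup (Xpw p w) :=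
  inferInstanceAs (NormedAddCommGroup ↥(XpwMod p w))

instance [Fact (1 ≤ ENNReal.ofReal p)] : NormedSpace ℝ (Xpw p w) :=
  inferInstanceAs (NormedSpace ℝ ↥(XpwMod p w))

/-- The pair of coordinates (in `ℓ_p` and in weighted `ℓ_2`) of an element of `X_{p,w}`. -/
def Xpw.pair (x : Xpw p w) : SeqP p × Seq2 := (show ↥(XpwMod p w) from x).val

/-- The underlying sequence of coordinates of an element of `X_{p,w}`. -/
def seq (x : Xpw p w) : ℕ → ℝ := (Xpw.pair x).1

/-- `|x|_p` for `x ∈ X_{p,w}`. -/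
def nrmP (x : Xpw p w) : ℝ := ‖(Xpw.pair x).1‖

/-- `|x|_2 = |x|_{2,w}` for `x ∈ X_{p,w}`. -/
def nrm2 (x : Xpw p w) : ℝ := ‖(Xpw.pair x).2‖

/-- The ratio `r(x) = |x|_2 / |x|_p`. -/
def ratio (x : Xpw p w) : ℝ := nrm2 x / nrmP x

/-- `ω(E) = ∑_{n ∈ E} w_n^{2p/(p-2)}`. -/
def omegaE (p : ℝ) (w : ℕ → ℝ) (E : Set ℕ) : ℝ :=
  ∑' n : E, w (n : ℕ) ^ (2 * p / (p - 2))

/-- The pairing `⟨x, y⟩ = ∑_n x_n y_n w_n²`. -/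
def pairW (w : ℕ → ℝ) (x y : Xpw p w) : ℝ :=
  ∑' n, seq x n * seq y n * w n ^ 2

/-- `w` is a weight sequence suitable for Rosenthal's space `X_p`: it is positive and for
every `ε > 0`, `∑_{w_n < ε} w_n^{2p/(p-2)} = ∞`. -/
def IsXpWeight (p : ℝ) (w : ℕ → ℝ) : Prop :=
  (∀ n, 0 < w n) ∧
    ∀ ε : ℝ, 0 < ε →
      (∑' n : {n : ℕ | w n < ε}, ENNReal.ofReal (w (n : ℕ) ^ (2 * p / (p - 2)))) = ⊤

theorem memℓp_indicator {q : ℝ≥0∞} (E : Set ℕ) {f : ℕ → ℝ} (hf : Memℓp f q) :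
    Memℓp (E.indicator f) q := by
  rcases ENNReal.trichotomy q with hq | hq | hq
  · subst hq
    refine memℓp_zero ((memℓp_zero_iff.mp hf).subset ?_)
    intro i hi
    simp only [Set.mem_setOf_eq] at hi ⊢
    intro h
    exact hi (by simp [Set.indicator_apply, h])
  · subst hq
    obtain ⟨C, hC⟩ := (memℓp_infty_iff.mp hf)
    refine memℓp_infty ⟨C, ?_⟩
    rintro x ⟨i, rfl⟩
    exact le_trans (norm_indicator_le_norm_self f i) (hC ⟨i, rfl⟩)
  · refine memℓp_gen (Summable.of_nonneg_of_le (fun i => ?_) (fun i => ?_)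
      (hf.summable hq))
    · positivity
    · exact Real.rpow_le_rpow (norm_nonneg _) (norm_indicator_le_norm_self f i) hq.le

/-- The restriction `x ↦ x_{|E}` of elements of `X_{p,w}` to a set `E` of coordinates. -/
def restrict (E : Set ℕ) (x : Xpw p w) : Xpw p w :=
  show ↥(XpwMod p w) from
  ⟨(⟨E.indicator ((Xpw.pair x).1 : ℕ → ℝ), memℓp_indicator E (lp.memℓp (Xpw.pair x).1)⟩,
    ⟨E.indicator ((Xpw.pair x).2 : ℕ → ℝ), memℓp_indicator E (lp.memℓp (Xpw.pair x).2)⟩), by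
    intro n
    by_cases hn : n ∈ E
    · have h : ((Xpw.pair x).2 : ℕ → ℝ) n = w n * ((Xpw.pair x).1 : ℕ → ℝ) n :=
        (show ↥(XpwMod p w) from x).2 n
      simpa [Set.indicator_of_mem hn] using h
    · simp [Set.indicator_of_notMem hn]⟩

open scoped InnerProductSpace

/-- square root iteration in a Banach algebra -/
theorem sqrtIter {A : Type*} [NormedRing A] [NormedAlgebra ℝ A] [CompleteSpace A]
    (S : A) (hS : ‖S‖ ≤ 1) (h1 : ‖(1:A)‖ ≤ 1) :
    ∃ Y : A, (1 - Y) * (1 - Y) = 1 - S ∧ ‖Y‖ ≤ 1 ∧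
      ∀ C : Set A, IsClosed C → (0 : A) ∈ C →
        (∀ a ∈ C, Commute a S → (1/2 : ℝ) • (S + a * a) ∈ C) → Y ∈ C := by
  let Y : ℕ → A := fun n => Nat.rec 0 (fun _ a => (1/2 : ℝ) • (S + a * a)) n
  let y : ℕ → ℝ := fun n => Nat.rec 0 (fun _ a => (1/2 : ℝ) * (1 + a * a)) n
  have Y0 : Y 0 = 0 := rfl
  have Ys : ∀ n, Y (n+1) = (1/2 : ℝ) • (S + Y n * Y n) := fun n => rfl
  have y0 : y 0 = 0 := rfl
  have ys : ∀ n, y (n+1) = (1/2 : ℝ) * (1 + y n * y n) := fun n => rfl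
  have hy : ∀ n, 0 ≤ y n ∧ y n ≤ 1 := by
    intro n
    induction n with
    | zero => simp [y0]
    | succ n ih => rw [ys]; constructor <;> nlinarith
  have hmono : Monotone y := monotone_nat_of_le_succ (fun n => by rw [ys]; nlinarith [sq_nonneg (y n - 1)])
  have hcS : ∀ n, Commute (Y n) S := by
    intro n
    induction n with
    | zero => simp [Y0]
    | succ n ih =>
      rw [Ys]
      exact ((Commute.refl S).add_left (ih.mul_left ih)).smul_left _
  have hcYY : ∀ n, Commute (Y n) (Y (n+1)) := by
    intro n
    rw [Ys]
    exact ((hcS n).add_right ((Commute.refl _).mul_right (Commute.refl _))).smul_right _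
  have hYy : ∀ n, ‖Y n‖ ≤ y n := by
    intro n
    induction n with
    | zero => simp [Y0, y0]
    | succ n ih =>
      rw [Ys, ys, norm_smul]
      have : ‖S + Y n * Y n‖ ≤ 1 + y n * y n := by
        refine (norm_add_le _ _).trans (add_le_add hS ((norm_mul_le _ _).trans ?_))
        exact mul_le_mul ih ih (norm_nonneg _) (hy n).1
      norm_num
      linarith
  have hdiff : ∀ n, ‖Y (n+1) - Y n‖ ≤ y (n+1) - y n := by
    intro n
    induction n with
    | zero =>
      rw [Y0, y0, sub_zero, sub_zero]; exact hYy 1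
    | succ n ih =>
      have e : Y (n+1+1) - Y (n+1) = (1/2 : ℝ) • ((Y (n+1) + Y n) * (Y (n+1) - Y n)) := by
        rw [Ys (n+1)]
        nth_rewrite 3 [Ys n]
        rw [← smul_sub, add_mul, mul_sub, mul_sub, (hcYY n).eq]
        congr 1
        abel
      have e' : y (n+1+1) - y (n+1) = (1/2 : ℝ) * ((y (n+1) + y n) * (y (n+1) - y n)) := by
        rw [ys (n+1)]
        nth_rewrite 3 [ys n]
        ring
      rw [e, e', norm_smul]
      have : ‖(Y (n+1) + Y n) * (Y (n+1) - Y n)‖ ≤ (y (n+1) + y n) * (y (n+1) - y n) := by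
        refine (norm_mul_le _ _).trans (mul_le_mul ?_ ih (norm_nonneg _) ?_)
        · exact (norm_add_le _ _).trans (add_le_add (hYy (n+1)) (hYy n))
        · exact add_nonneg (hy (n+1)).1 (hy n).1
      norm_num
      linarith
  have hsum : Summable (fun n => y (n+1) - y n) := by
    refine summable_of_sum_range_le (c := 1) (fun n => sub_nonneg.2 (hmono n.le_succ)) (fun n => ?_)
    rw [Finset.sum_range_sub, y0, sub_zero]; exact (hy n).2
  have hcau : CauchySeq Y := by
    refine cauchySeq_of_dist_le_of_summable _ (fun n => ?_) hsum
    rw [dist_comm, dist_eq_norm]; exact hdiff n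
  obtain ⟨L, hL⟩ := cauchySeq_tendsto_of_complete hcau
  have hfix : L = (1/2 : ℝ) • (S + L * L) := by
    have h1 := (Filter.tendsto_add_atTop_iff_nat 1).2 hL
    refine tendsto_nhds_unique h1 ?_
    simp only [Ys]
    exact (tendsto_const_nhds.add (hL.mul hL)).const_smul _
  refine ⟨L, ?_, ?_, ?_⟩
  · have h2 : (2:ℝ) • L = S + L * L := by
      nth_rewrite 1 [hfix]; rw [smul_smul]; norm_num
    rw [two_smul] at h2
    have : S = L + L - L * L := by rw [h2]; abel
    rw [this]; noncomm_ring
  · exact le_of_tendsto hL.norm (Filter.Eventually.of_forall fun n => (hYy n).trans (hy n).2)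
  · intro C hC h0 hst
    refine hC.mem_of_tendsto hL (Filter.Eventually.of_forall fun n => ?_)
    induction n with
    | zero => exact h0
    | succ n ih => exact hst _ ih (hcS n)

/-- absolute value of a contraction self-adjoint operator -/
theorem absOp {G : Type*} [NormedAddCommGroup G] [InnerProductSpace ℝ G] [CompleteSpace G]
    (D : G →L[ℝ] G) (hD : ∀ u v, ⟪D u, v⟫_ℝ = ⟪u, D v⟫_ℝ) (hn : ‖D‖ ≤ 1) :
    ∃ R : G →L[ℝ] G, (∀ u v, ⟪R u, v⟫_ℝ = ⟪u, R v⟫_ℝ) ∧ (∀ u, 0 ≤ ⟪R u, u⟫_ℝ) ∧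
      R * R = D * D ∧ Commute R D := by
  have hle : ∀ u, ‖D u‖ ≤ ‖u‖ := fun u => by
    simpa using D.le_of_opNorm_le hn u
  have hS : ‖(1 : G →L[ℝ] G) - D * D‖ ≤ 1 := by
    refine ContinuousLinearMap.opNorm_le_bound _ zero_le_one (fun u => ?_)
    rw [one_mul]
    refine le_of_sq_le_sq ?_ (norm_nonneg _)
    change ‖u - D (D u)‖ ^ 2 ≤ _
    rw [norm_sub_sq_real, ← hD, real_inner_self_eq_norm_sq]
    have := hle (D u)
    have := pow_le_pow_left₀ (norm_nonneg _) this 2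
    nlinarith [sq_nonneg ‖D u‖]
  obtain ⟨Y, hY1, hY2, hY3⟩ := sqrtIter _ hS ContinuousLinearMap.norm_id_le
  have hsymm : ∀ u v, ⟪Y u, v⟫_ℝ = ⟪u, Y v⟫_ℝ := by
    have := hY3 {a | ∀ u v, ⟪a u, v⟫_ℝ = ⟪u, a v⟫_ℝ} ?_ ?_ ?_
    · exact this
    · simp only [Set.ofPred_forall]
      refine isClosed_iInter fun u => isClosed_iInter fun v => isClosed_eq ?_ ?_
      · fun_prop
      · fun_prop
    · intro u v; simp
    · intro a ha _ u v
      have ha' : ∀ u v, ⟪a u, v⟫_ℝ = ⟪u, a v⟫_ℝ := ha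
      simp only [smul_apply, add_apply, sub_apply,
        one_apply_eq_self, ContinuousLinearMap.mul_apply', inner_smul_left, inner_smul_right,
        inner_add_left, inner_add_right, inner_sub_left, inner_sub_right, ha', hD]
      simp [ha', hD]
  have hcomm : Commute Y D := by
    refine hY3 {a | Commute a D} ?_ (Commute.zero_left _) ?_
    · exact isClosed_eq (f := fun a : G →L[ℝ] G => a * D) (g := fun a => D * a) (by fun_prop) (by fun_prop)
    · intro a ha _
      have ha' : Commute a D := ha
      exact ((((Commute.one_left _).sub_left ((Commute.refl D).mul_left (Commute.refl D)))).add_left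
        (ha'.mul_left ha')).smul_left _
  refine ⟨1 - Y, ?_, ?_, ?_, (Commute.one_left _).sub_left hcomm⟩
  · intro u v
    simp [inner_sub_left, inner_sub_right, hsymm]
  · intro u
    have h1 : ‖Y u‖ ≤ ‖u‖ := by simpa using Y.le_of_opNorm_le hY2 u
    have h2 := real_inner_le_norm (Y u) u
    simp only [sub_apply, one_apply_eq_self, inner_sub_left,
      real_inner_self_eq_norm_sq]
    nlinarith [norm_nonneg u]
  · rw [hY1]; simp

theorem specCut {G K : Type*} [NormedAddCommGroup G] [InnerProductSpace ℝ G] [CompleteSpace G]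
    [NormedAddCommGroup K] [InnerProductSpace ℝ K] [CompleteSpace K]
    (T : G →L[ℝ] K) (δ : ℝ) (hδ : 0 < δ) :
    ∃ H : Submodule ℝ G, (∀ h ∈ H, δ * ‖h‖ ≤ ‖T h‖) ∧
      ∀ u, ∃ h ∈ H, ‖T (u - h)‖ ≤ δ * ‖u‖ := by
  set B : G →L[ℝ] G := (ContinuousLinearMap.adjoint T).comp T - (δ^2) • (1 : G →L[ℝ] G) with hB
  have hBs : ∀ u v, ⟪B u, v⟫_ℝ = ⟪u, B v⟫_ℝ := by
    intro u v
    simp [hB, inner_sub_left, inner_sub_right, inner_smul_left, inner_smul_right,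
      ContinuousLinearMap.adjoint_inner_left, ContinuousLinearMap.adjoint_inner_right]
  have hBu : ∀ u, ⟪B u, u⟫_ℝ = ‖T u‖^2 - δ^2 * ‖u‖^2 := by
    intro u
    simp [hB, inner_sub_left, inner_smul_left, ContinuousLinearMap.adjoint_inner_left]
  set s : ℝ := (‖B‖ + 1)⁻¹ with hs
  have hspos : 0 < s := by positivity
  obtain ⟨R, hR1, hR2, hR3, hR4⟩ := absOp (s • B) (by
    intro u v; simp [inner_smul_left, inner_smul_right, hBs]) (by
    rw [norm_smul, Real.norm_of_nonneg hspos.le, hs, inv_mul_le_iff₀ (by positivity)]; linarith)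
  set D := s • B with hDd
  have hDs : ∀ u v, ⟪D u, v⟫_ℝ = ⟪u, D v⟫_ℝ := by
    intro u v; simp [hDd, inner_smul_left, inner_smul_right, hBs]
  have hDu : ∀ u, ⟪D u, u⟫_ℝ = s * (‖T u‖^2 - δ^2 * ‖u‖^2) := by
    intro u; simp [hDd, inner_smul_left, hBu]
  have hFz : (R + D) * (R - D) = 0 := by
    rw [add_mul, mul_sub, mul_sub, hR3, hR4.eq]; abel
  let L : Submodule ℝ G := LinearMap.ker (R + D).toLinearMap
  have : CompleteSpace L := (ContinuousLinearMap.isClosed_ker (R + D)).completeSpace_coe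
  refine ⟨Lᗮ, ?_, ?_⟩
  · intro h hh
    have h0 : R h - D h = 0 := by
      have hv : ∀ v, ⟪R h - D h, v⟫_ℝ = 0 := by
        intro v
        rw [inner_sub_left, hR1, hDs, ← inner_sub_right, real_inner_comm]
        refine hh _ ?_
        change (R + D) (R v - D v) = 0
        have := congrArg (fun f : G →L[ℝ] G => f v) hFz
        exact this
      exact inner_self_eq_zero.1 (hv _)
    have h1 := hR2 h
    rw [sub_eq_zero.1 h0, hDu] at h1
    have h2 := nonneg_of_mul_nonneg_right h1 hspos
    refine le_of_sq_le_sq ?_ (norm_nonneg _)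
    rw [mul_pow]; linarith
  · intro u
    refine ⟨u - L.starProjection u, Submodule.sub_starProjection_mem_orthogonal _, ?_⟩
    rw [sub_sub_cancel]
    set v := L.starProjection u with hv
    have hvL : v ∈ L := Submodule.starProjection_apply_mem _ _
    have hvn : ‖v‖ ≤ ‖u‖ := Submodule.norm_starProjection_apply_le _ _
    have h0 : R v + D v = 0 := hvL
    have h1 := hR2 v
    rw [eq_neg_of_add_eq_zero_left h0, inner_neg_left, hDu] at h1
    have h2 : 0 ≤ s * (δ^2 * ‖v‖^2 - ‖T v‖^2) := by linarith
    have h3 := nonneg_of_mul_nonneg_right h2 hspos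
    have : ‖T v‖ ≤ δ * ‖v‖ := by
      refine le_of_sq_le_sq ?_ (by positivity)
      rw [mul_pow]; linarith
    exact this.trans (by gcongr)

theorem lp_add_disjoint {q : ℝ} (hq : 0 < q) (x y : SeqP q)
    (h : ∀ i, (x : ℕ → ℝ) i = 0 ∨ (y : ℕ → ℝ) i = 0) :
    ‖x + y‖ ^ q = ‖x‖ ^ q + ‖y‖ ^ q := by
  have e : (ENNReal.ofReal q).toReal = q := ENNReal.toReal_ofReal hq.le
  have hq' : 0 < (ENNReal.ofReal q).toReal := by rwa [e]
  have hx := lp.norm_rpow_eq_tsum hq' x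
  have hy := lp.norm_rpow_eq_tsum hq' y
  have hxy := lp.norm_rpow_eq_tsum hq' (x + y)
  have sx := (lp.memℓp x).summable hq'
  have sy := (lp.memℓp y).summable hq'
  rw [e] at hx hy hxy sx sy
  rw [hx, hy, hxy, ← sx.tsum_add sy]
  refine tsum_congr fun i => ?_
  rw [lp.coeFn_add, Pi.add_apply]
  rcases h i with h | h <;> simp [h, hq.ne']

/-- the head of a sequence -/
def headP (p : ℝ) [Fact (1 ≤ ENNReal.ofReal p)] (N : ℕ) (a : SeqP p) : SeqP p :=
  ∑ i ∈ Finset.range N, lp.single (ENNReal.ofReal p) i ((a : ℕ → ℝ) i)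

theorem headP_apply (p : ℝ) [Fact (1 ≤ ENNReal.ofReal p)] (N : ℕ) (a : SeqP p) (i : ℕ) :
    (headP p N a : ℕ → ℝ) i = if i < N then (a : ℕ → ℝ) i else 0 := by
  unfold headP
  rw [lp.coeFn_sum, Finset.sum_apply]
  simp only [lp.single_apply]
  simp [Pi.single_apply]

theorem headP_norm {p : ℝ} (hp : 0 < p) [Fact (1 ≤ ENNReal.ofReal p)] (N : ℕ) (a : SeqP p) :
    ‖headP p N a‖ ≤ ‖a‖ ∧ ‖a - headP p N a‖ ≤ ‖a‖ := by
  have h := lp_add_disjoint hp (headP p N a) (a - headP p N a) (by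
    intro i
    rw [lp.coeFn_sub, Pi.sub_apply, headP_apply]
    by_cases h : i < N <;> simp [h])
  rw [add_sub_cancel] at h
  have h1 : 0 ≤ ‖headP p N a‖ ^ p := by positivity
  have h2 : 0 ≤ ‖a - headP p N a‖ ^ p := by positivity
  exact ⟨(Real.rpow_le_rpow_iff (norm_nonneg _) (norm_nonneg _) hp).1 (by linarith),
    (Real.rpow_le_rpow_iff (norm_nonneg _) (norm_nonneg _) hp).1 (by linarith)⟩

/-- Tail form of the theorem of Pitt. -/
theorem pittTail {p : ℝ} (hp : 2 < p) [Fact (1 ≤ ENNReal.ofReal p)] {K : Type*}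
    [NormedAddCommGroup K] [InnerProductSpace ℝ K] (S : SeqP p →L[ℝ] K) (η : ℝ) (hη : 0 < η) :
    ∃ N : ℕ, ∀ a : SeqP p, (∀ i < N, (a : ℕ → ℝ) i = 0) → ‖S a‖ ≤ η * ‖a‖ := by
  by_contra hcon
  push Not at hcon
  have hp0 : 0 < p := by linarith
  have key : ∀ N : ℕ, ∃ a : SeqP p, ∃ M : ℕ, (∀ i < N, (a : ℕ → ℝ) i = 0) ∧
      (∀ i ≥ M, (a : ℕ → ℝ) i = 0) ∧ ‖a‖ ≤ 1 ∧ η ≤ ‖S a‖ := by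
    intro N
    obtain ⟨a, ha, hlt⟩ := hcon N
    have hapos : 0 < ‖a‖ := by
      rcases (norm_nonneg a).eq_or_lt with h | h
      · have : a = 0 := norm_eq_zero.1 h.symm
        subst this
        simp at hlt
      · exact h
    have hlim : Filter.Tendsto (fun M => headP p M a) Filter.atTop (nhds a) :=
      (lp.hasSum_single ENNReal.ofReal_ne_top a).tendsto_sum_nat
    have hlim2 : Filter.Tendsto (fun M => ‖S (headP p M a)‖) Filter.atTop (nhds ‖S a‖) :=
      ((S.continuous.tendsto a).comp hlim).norm
    obtain ⟨M, hM⟩ := (hlim2.eventually (lt_mem_nhds hlt)).exists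
    refine ⟨‖a‖⁻¹ • headP p M a, M, ?_, ?_, ?_, ?_⟩
    · intro i hi
      rw [lp.coeFn_smul, Pi.smul_apply, headP_apply, ha i hi]; simp
    · intro i hi
      rw [lp.coeFn_smul, Pi.smul_apply, headP_apply, if_neg (by omega)]; simp
    · rw [norm_smul, norm_inv, norm_norm, inv_mul_le_iff₀ hapos, mul_one]
      exact (headP_norm hp0 M a).1
    · rw [map_smul, norm_smul, norm_inv, norm_norm, le_inv_mul_iff₀ hapos]
      linarith
  have build : ∀ n : ℕ, ∃ b : SeqP p, ∃ M : ℕ, (∀ i ≥ M, (b : ℕ → ℝ) i = 0) ∧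
      ‖b‖ ^ p ≤ n ∧ n * η ^ 2 ≤ ‖S b‖ ^ 2 := by
    intro n
    induction n with
    | zero =>
      refine ⟨0, 0, fun i _ => by simp, ?_, by simp⟩
      simp [hp0.ne']
    | succ n ih =>
      obtain ⟨b, M, hb, hbn, hbS⟩ := ih
      obtain ⟨a, M', ha, ha', han, haS⟩ := key M
      have hS2 : η ^ 2 ≤ ‖S a‖ ^ 2 := pow_le_pow_left₀ hη.le haS 2
      -- choose the sign
      obtain ⟨c, hc, hca⟩ : ∃ c : ℝ, |c| = 1 ∧ 0 ≤ inner ℝ (S b) (S (c • a)) := by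
        rcases le_total 0 (inner ℝ (S b) (S a)) with h | h
        · exact ⟨1, by simp, by simpa using h⟩
        · exact ⟨-1, by simp, by simpa using h⟩
      refine ⟨b + c • a, max M M', ?_, ?_, ?_⟩
      · intro i hi
        rw [lp.coeFn_add, Pi.add_apply, lp.coeFn_smul, Pi.smul_apply, hb i (le_trans (le_max_left _ _) hi),
          ha' i (le_trans (le_max_right _ _) hi)]
        simp
      · rw [lp_add_disjoint hp0]
        · have : ‖c • a‖ ^ p ≤ 1 := by
            rw [norm_smul, Real.norm_eq_abs, hc, one_mul]
            exact Real.rpow_le_one (norm_nonneg _) han hp0.le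
          push_cast; linarith
        · intro i
          by_cases hi : i < M
          · right; rw [lp.coeFn_smul, Pi.smul_apply, ha i hi]; simp
          · left; exact hb i (by omega)
      · rw [map_add, norm_add_sq_real]
        have : ‖S (c • a)‖ = ‖S a‖ := by
          rw [map_smul, norm_smul, Real.norm_eq_abs, hc, one_mul]
        rw [this]; push_cast; linarith
  -- contradiction
  have hbd : ∀ n : ℕ, (n : ℝ) * η ^ 2 ≤ ‖S‖ ^ 2 * (n : ℝ) ^ (2 / p) := by
    intro n
    obtain ⟨b, M, -, h1, h2⟩ := build n
    have h3 : ‖b‖ ^ 2 ≤ (n : ℝ) ^ (2 / p) := by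
      have := Real.rpow_le_rpow (by positivity) h1 (z := 2 / p) (by positivity)
      rw [← Real.rpow_mul (norm_nonneg _), mul_div_cancel₀ _ hp0.ne'] at this
      exact_mod_cast this
    calc (n : ℝ) * η ^ 2 ≤ ‖S b‖ ^ 2 := h2
      _ ≤ (‖S‖ * ‖b‖) ^ 2 := pow_le_pow_left₀ (norm_nonneg _) (S.le_opNorm b) 2
      _ = ‖S‖ ^ 2 * ‖b‖ ^ 2 := by ring
      _ ≤ _ := by gcongr
  have hα : 0 < 1 - 2 / p := by
    rw [sub_pos, div_lt_one hp0]; exact hp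
  have ht : Filter.Tendsto (fun n : ℕ => (n : ℝ) ^ (1 - 2 / p)) Filter.atTop Filter.atTop :=
    (tendsto_rpow_atTop hα).comp tendsto_natCast_atTop_atTop
  obtain ⟨n, hn, hn1⟩ := ((ht.eventually_gt_atTop (‖S‖ ^ 2 / η ^ 2)).and
    (Filter.eventually_gt_atTop 0)).exists
  have hnpos : (0 : ℝ) < n := by exact_mod_cast hn1
  have h := hbd n
  rw [div_lt_iff₀ (by positivity)] at hn
  have hmul : (n : ℝ) ^ (1 - 2 / p) * (n : ℝ) ^ (2 / p) = n := by
    rw [← Real.rpow_add hnpos]; simp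
  have hpos : 0 < (n : ℝ) ^ (2 / p) := by positivity
  have := mul_lt_mul_of_pos_right hn hpos
  have e : (n : ℝ) ^ (1 - 2 / p) * η ^ 2 * (n : ℝ) ^ (2 / p) = n * η ^ 2 := by
    calc _ = ((n : ℝ) ^ (1 - 2 / p) * (n : ℝ) ^ (2 / p)) * η ^ 2 := by ring
      _ = _ := by rw [hmul]
  linarith

/-- Projection to the weighted ℓ_2 part. -/
def toTwo (p : ℝ) (w : ℕ → ℝ) [Fact (1 ≤ ENNReal.ofReal p)] : Xpw p w →L[ℝ] Seq2 :=
  (ContinuousLinearMap.snd ℝ (SeqP p) Seq2).comp (XpwMod p w).subtypeL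

theorem nrm2_eq (p : ℝ) (w : ℕ → ℝ) [Fact (1 ≤ ENNReal.ofReal p)] (x : Xpw p w) :
    nrm2 x = ‖toTwo p w x‖ := rfl

theorem norm_eq_max (p : ℝ) (w : ℕ → ℝ) [Fact (1 ≤ ENNReal.ofReal p)] (x : Xpw p w) :
    ‖x‖ = max (nrmP x) (nrm2 x) := rfl

theorem nrmP_pos (p : ℝ) (w : ℕ → ℝ) [Fact (1 ≤ ENNReal.ofReal p)] (x : Xpw p w) (hx : x ≠ 0) :
    0 < nrmP x := by
  refine lt_of_le_of_ne (norm_nonneg _) fun h => hx ?_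
  have h1 : (Xpw.pair x).1 = 0 := norm_eq_zero.1 h.symm
  have h2 : (Xpw.pair x).2 = 0 := by
    apply lp.ext
    funext n
    have : ((Xpw.pair x).2 : ℕ → ℝ) n = w n * ((Xpw.pair x).1 : ℕ → ℝ) n :=
      (show ↥(XpwMod p w) from x).2 n
    rw [this, h1]; simp
  exact Subtype.ext (Prod.ext h1 h2)

/-- Proposition 2.4, converse: if a complemented subspace `X` of `X_p`
is isomorphic to a complemented subspace of `ℓ_p ⊕ ℓ_2`, then there exist a subspace
`Z` of `X` and constants `ε, β, β' > 0` with `ε ≤ 1` such that (a) `r(z) ≥ β'` for all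
nonzero `z ∈ Z` and (b) every `x ∈ X` with `r(x) > β` admits `z ∈ Z` with
`|x - z|_2 < ε |x|_2`. -/
theorem stmt14 (p : ℝ) (hp : 2 < p) [Fact (1 ≤ ENNReal.ofReal p)]
    (w : ℕ → ℝ) (hw : IsXpWeight p w)
    (X : Submodule ℝ (Xpw p w)) (hX : X.ClosedComplemented)
    (V : Submodule ℝ (SeqP p × Seq2)) (hV : V.ClosedComplemented)
    (hiso : Nonempty (↥X ≃L[ℝ] ↥V)) :
    ∃ Z : Submodule ℝ (Xpw p w), Z ≤ X ∧
      ∃ ε β β' : ℝ, 0 < ε ∧ ε ≤ 1 ∧ 0 < β ∧ 0 < β' ∧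
        (∀ z ∈ Z, z ≠ 0 → ratio z ≥ β') ∧
        (∀ x ∈ X, ratio x > β → ∃ z ∈ Z, nrm2 (x - z) < ε * nrm2 x) := by
  obtain ⟨π, hπ⟩ := hV
  obtain ⟨e⟩ := hiso
  -- the embedding and the left inverse
  let J : ↥X →L[ℝ] SeqP p × Seq2 := V.subtypeL.comp (e : ↥X →L[ℝ] ↥V)
  let Q : SeqP p × Seq2 →L[ℝ] ↥X := (e.symm : ↥V →L[ℝ] ↥X).comp π
  have hQJ : ∀ x, Q (J x) = x := by
    intro x
    change e.symm (π (e x : ↥V)) = x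
    rw [hπ, e.symm_apply_apply]
  let A : ↥X →L[ℝ] SeqP p := (ContinuousLinearMap.fst ℝ _ _).comp J
  let B : ↥X →L[ℝ] Seq2 := (ContinuousLinearMap.snd ℝ _ _).comp J
  let Q1 : SeqP p →L[ℝ] ↥X := Q.comp (ContinuousLinearMap.inl ℝ _ _)
  let Q2 : Seq2 →L[ℝ] ↥X := Q.comp (ContinuousLinearMap.inr ℝ _ _)
  have hdec : ∀ x, Q1 (A x) + Q2 (B x) = x := by
    intro x
    change Q (A x, 0) + Q (0, B x) = x
    rw [← map_add, Prod.mk_add_mk, add_zero, zero_add]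
    exact hQJ x
  let τ : ↥X →L[ℝ] Seq2 := (toTwo p w).comp X.subtypeL
  let η : ℝ := (4 * (‖A‖ + 1))⁻¹
  have hη : 0 < η := by positivity
  obtain ⟨N, hN⟩ := pittTail hp (τ.comp Q1) η hη
  let G := WithLp 2 (Seq2 × EuclideanSpace ℝ (Fin N))
  let E : EuclideanSpace ℝ (Fin N) →L[ℝ] SeqP p :=
    ∑ i : Fin N, (lp.singleContinuousLinearMap ℝ (fun _ : ℕ => ℝ) (ENNReal.ofReal p) (i : ℕ)).comp
      (EuclideanSpace.proj i)
  let U0 : SeqP p →L[ℝ] EuclideanSpace ℝ (Fin N) :=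
    ((EuclideanSpace.equiv (Fin N) ℝ).symm : (Fin N → ℝ) →L[ℝ] _).comp
      (ContinuousLinearMap.pi fun i : Fin N => lp.evalCLM ℝ (fun _ : ℕ => ℝ) (ENNReal.ofReal p) (i : ℕ))
  have hEU : ∀ a, E (U0 a) = headP p N a := by
    intro a
    unfold headP
    rw [Finset.sum_range]
    simp only [E, ContinuousLinearMap.sum_apply]
    rfl
  let R : G →L[ℝ] ↥X := (Q2.comp (ContinuousLinearMap.fst ℝ _ _)
    + (Q1.comp E).comp (ContinuousLinearMap.snd ℝ _ _)).comp
      (WithLp.prodContinuousLinearEquiv 2 ℝ Seq2 (EuclideanSpace ℝ (Fin N)) : G →L[ℝ] _)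
  let U : ↥X →L[ℝ] G :=
    ((WithLp.prodContinuousLinearEquiv 2 ℝ Seq2 (EuclideanSpace ℝ (Fin N))).symm : _ →L[ℝ] G).comp
      (B.prod (U0.comp A))
  have hRU : ∀ x, R (U x) + Q1 (A x - headP p N (A x)) = x := by
    intro x
    have : R (U x) = Q2 (B x) + Q1 (E (U0 (A x))) := rfl
    rw [this, hEU, map_sub]
    nth_rewrite 5 [← hdec x]
    abel
  let δ : ℝ := (4 * (‖U‖ + 1))⁻¹
  have hδ : 0 < δ := by positivity
  obtain ⟨H, hH1, hH2⟩ := specCut (τ.comp R) δ hδ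
  refine ⟨H.map ((X.subtypeL.comp R : G →L[ℝ] Xpw p w) : G →ₗ[ℝ] Xpw p w), ?_, 1, 1,
    δ / (‖R‖ + 1), one_pos, le_rfl, one_pos, by positivity, ?_, ?_⟩
  · rintro _ ⟨h, -, rfl⟩
    exact (R h).2
  · rintro _ ⟨h, hh, rfl⟩ hne
    have h1 := hH1 h hh
    have hP := nrmP_pos p w _ hne
    have h2 : nrmP (X.subtypeL.comp R h) ≤ (‖R‖ + 1) * ‖h‖ := by
      calc nrmP (X.subtypeL.comp R h) ≤ ‖X.subtypeL.comp R h‖ := by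
            rw [norm_eq_max]; exact le_max_left _ _
        _ = ‖R h‖ := rfl
        _ ≤ ‖R‖ * ‖h‖ := R.le_opNorm h
        _ ≤ _ := by nlinarith [norm_nonneg h]
    change _ / _ ≤ nrm2 (X.subtypeL.comp R h) / nrmP (X.subtypeL.comp R h)
    change 0 < nrmP (X.subtypeL.comp R h) at hP
    have h3 : δ * ‖h‖ ≤ nrm2 (X.subtypeL.comp R h) := h1
    rw [div_le_div_iff₀ (by positivity) hP]
    nlinarith [norm_nonneg R]
  · intro x hx hr
    have hPx : 0 < nrmP x := by
      refine nrmP_pos p w x ?_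
      rintro rfl
      have : ratio (0 : Xpw p w) = 0 := by
        have h0 : nrm2 (0 : Xpw p w) = 0 := by rw [nrm2_eq, map_zero, norm_zero]
        rw [ratio, h0, zero_div]
      linarith
    have h12 : nrmP x < nrm2 x := by
      have : 1 < nrm2 x / nrmP x := hr
      rwa [one_lt_div hPx] at this
    have hnx : ‖(⟨x, hx⟩ : ↥X)‖ = nrm2 x := by
      change ‖x‖ = _
      rw [norm_eq_max, max_eq_right h12.le]
    set ξ : ↥X := ⟨x, hx⟩ with hξ
    obtain ⟨h, hh, hle⟩ := hH2 (U ξ)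
    refine ⟨_, ⟨h, hh, rfl⟩, ?_⟩
    rw [one_mul]
    set t := A ξ - headP p N (A ξ) with ht
    have e1 : x - (X.subtypeL.comp R h) = ((R (U ξ - h) + Q1 t : ↥X) : Xpw p w) := by
      have : ξ = R (U ξ) + Q1 t := (hRU ξ).symm
      have h2 : ξ - R h = R (U ξ - h) + Q1 t := by
        rw [map_sub]; nth_rewrite 1 [this]; abel
      rw [← h2]; rfl
    have e2 : nrm2 (x - (X.subtypeL.comp R h)) = ‖τ (R (U ξ - h)) + τ (Q1 t)‖ := by
      rw [e1, nrm2_eq, ← map_add]; rfl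
    change nrm2 (x - (X.subtypeL.comp R h)) < _
    rw [e2]
    have b1 : ‖τ (R (U ξ - h))‖ ≤ δ * (‖U‖ * nrm2 x) := by
      refine le_trans hle ?_
      rw [← hnx]
      gcongr
      exact U.le_opNorm ξ
    have b2 : ‖τ (Q1 t)‖ ≤ η * (‖A‖ * nrm2 x) := by
      refine le_trans (hN t ?_) ?_
      · intro i hi
        rw [ht, lp.coeFn_sub, Pi.sub_apply, headP_apply, if_pos hi, sub_self]
      · rw [← hnx]
        gcongr
        exact (headP_norm (by linarith) N (A ξ)).2.trans (A.le_opNorm ξ)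
    have c1 : δ * ‖U‖ ≤ 1 / 4 := by
      change (4 * (‖U‖ + 1))⁻¹ * ‖U‖ ≤ 1 / 4
      rw [inv_mul_le_iff₀ (by positivity)]; linarith
    have c2 : η * ‖A‖ ≤ 1 / 4 := by
      change (4 * (‖A‖ + 1))⁻¹ * ‖A‖ ≤ 1 / 4
      rw [inv_mul_le_iff₀ (by positivity)]; linarith
    have hpos : 0 < nrm2 x := hPx.trans h12
    have := norm_add_le (τ (R (U ξ - h))) (τ (Q1 t))
    nlinarith
end
end

section
/- Let X be a complemented subspace of X_p, let P be a bounded projection on X with range Y, and let ε, α, α' be positive constants with ε ≤ ‖I − P‖^{-1} such that (a) r(y) ≤ α' for all nonzero y ∈ Y, and (b) for every x ∈ X with r(x) < α there exists y ∈ Y with ‖x − y‖ < ε·‖x‖. Then X is isomorphic to a complemented subspace of ℓ_p ⊕ ℓ_2. -/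
open scoped ENNReal

noncomputable section

variable {p : ℝ} {w : ℕ → ℝ}

/-- The odd power function. -/
def phi16 (k s : ℝ) : ℝ := if 0 ≤ s then s ^ k else -(-s) ^ k

lemma phi16_neg {k : ℝ} (hk : 0 < k) (s : ℝ) : phi16 k (-s) = - phi16 k s := by
  unfold phi16
  rcases lt_trichotomy s 0 with h | h | h
  · rw [if_pos (by linarith), if_neg (by linarith)]; simp
  · subst h; simp [Real.zero_rpow hk.ne']
  · rw [if_neg (by linarith), if_pos h.le]; simp

lemma mul_phi16 {k : ℝ} (hk : 0 < k) (s : ℝ) : s * phi16 k s = |s| ^ (k + 1) := by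
  unfold phi16
  rcases le_or_gt 0 s with h | h
  · rw [if_pos h, abs_of_nonneg h, Real.rpow_add_one' h (by linarith)]; ring
  · rw [if_neg (by linarith), abs_of_neg h, Real.rpow_add_one' (by linarith) (by linarith)]; ring

lemma abs_phi16 {k : ℝ} (s : ℝ) : |phi16 k s| = |s| ^ k := by
  unfold phi16
  rcases le_or_gt 0 s with h | h
  · rw [if_pos h, abs_of_nonneg h, abs_of_nonneg (Real.rpow_nonneg h _)]
  · rw [if_neg (by linarith), abs_of_neg h, abs_neg, abs_of_nonneg (Real.rpow_nonneg (by linarith) _)]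

lemma rpow_sub_holder {k a b : ℝ} (hk : 0 < k) (hk1 : k ≤ 1) (hb : 0 ≤ b) (hab : b ≤ a) :
    a ^ k - b ^ k ≤ (a - b) ^ k := by
  have := Real.rpow_add_le_add_rpow (sub_nonneg.2 hab) hb hk.le hk1
  simp at this
  linarith

lemma phi16_holder {k : ℝ} (hk : 0 < k) (hk1 : k ≤ 1) (a b : ℝ) :
    |phi16 k a - phi16 k b| ≤ 2 * |a - b| ^ k := by
  -- same sign nonneg
  have key : ∀ a b : ℝ, 0 ≤ b → b ≤ a → |phi16 k a - phi16 k b| ≤ 2 * |a - b| ^ k := by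
    intro a b hb hab
    have h1 := rpow_sub_holder hk hk1 hb hab
    have h2 : b ^ k ≤ a ^ k := Real.rpow_le_rpow hb hab hk.le
    rw [phi16, phi16, if_pos (hb.trans hab), if_pos hb, abs_of_nonneg (by linarith),
      abs_of_nonneg (by linarith)]
    have : 0 ≤ (a - b) ^ k := Real.rpow_nonneg (by linarith) _
    linarith
  have key2 : ∀ a b : ℝ, 0 ≤ b → 0 ≤ a → |phi16 k a - phi16 k b| ≤ 2 * |a - b| ^ k := by
    intro a b hb ha
    rcases le_total b a with h | h
    · exact key a b hb h
    · rw [abs_sub_comm, abs_sub_comm a b]; exact key b a ha h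
  have key3 : ∀ a b : ℝ, b ≤ 0 → 0 ≤ a → |phi16 k a - phi16 k b| ≤ 2 * |a - b| ^ k := by
    intro a b hb ha
    have h1 : |a| ^ k ≤ |a - b| ^ k := Real.rpow_le_rpow (abs_nonneg _)
      (by rw [abs_of_nonneg ha, abs_of_nonneg (by linarith)]; linarith) hk.le
    have h2 : |b| ^ k ≤ |a - b| ^ k := Real.rpow_le_rpow (abs_nonneg _)
      (by rw [abs_of_nonpos hb, abs_of_nonneg (by linarith)]; linarith) hk.le
    have := abs_sub (phi16 k a) (phi16 k b)
    rw [abs_phi16, abs_phi16] at this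
    linarith
  rcases le_total 0 a with ha | ha <;> rcases le_total 0 b with hb | hb
  · exact key2 a b hb ha
  · exact key3 a b hb ha
  · rw [abs_sub_comm, abs_sub_comm a b]; exact key3 b a ha hb
  · have := key2 (-a) (-b) (by linarith) (by linarith)
    rw [phi16_neg hk, phi16_neg hk] at this
    rw [abs_sub_comm, abs_sub_comm a b]
    simpa only [neg_sub_neg] using this

lemma rpow_sub_lip {k a b : ℝ} (hk : 1 ≤ k) (hb : 0 ≤ b) (hab : b ≤ a) :
    a ^ k - b ^ k ≤ k * (a - b) * a ^ (k - 1) := by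
  rcases eq_or_lt_of_le (hb.trans hab) with h | h
  · have : b = 0 := by linarith
    subst this; subst h; simp
  have h1 := one_add_mul_self_le_rpow_one_add (s := b / a - 1) (by
    have : 0 ≤ b / a := by positivity
    linarith) hk
  have h2 : 1 + (b / a - 1) = b / a := by ring
  rw [h2, Real.div_rpow hb h.le, le_div_iff₀ (by positivity)] at h1
  have h3 : a ^ k = a * a ^ (k - 1) := by
    rw [← Real.rpow_one_add' h.le (by linarith)]; ring_nf
  have h4 : (1 + k * (b / a - 1)) * a ^ k = a ^ k + k * (b - a) * a ^ (k - 1) := by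
    rw [h3]; field_simp
  rw [h4] at h1
  nlinarith

lemma phi16_lip {k : ℝ} (hk : 1 ≤ k) (a b : ℝ) :
    |phi16 k a - phi16 k b| ≤ k * |a - b| * (max |a| |b|) ^ (k - 1) := by
  have hk0 : 0 < k := by linarith
  have key : ∀ a b : ℝ, 0 ≤ b → b ≤ a →
      |phi16 k a - phi16 k b| ≤ k * |a - b| * (max |a| |b|) ^ (k - 1) := by
    intro a b hb hab
    have h1 := rpow_sub_lip hk hb hab
    have h2 : b ^ k ≤ a ^ k := Real.rpow_le_rpow hb hab (by linarith)
    rw [phi16, phi16, if_pos (hb.trans hab), if_pos hb, abs_of_nonneg (by linarith),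
      abs_of_nonneg (sub_nonneg.2 hab), abs_of_nonneg hb, abs_of_nonneg (hb.trans hab), max_eq_left hab]
    exact h1
  have key2 : ∀ a b : ℝ, 0 ≤ b → 0 ≤ a →
      |phi16 k a - phi16 k b| ≤ k * |a - b| * (max |a| |b|) ^ (k - 1) := by
    intro a b hb ha
    rcases le_total b a with h | h
    · exact key a b hb h
    · rw [abs_sub_comm, abs_sub_comm a b, max_comm]; exact key b a ha h
  have key3 : ∀ a b : ℝ, b ≤ 0 → 0 ≤ a →
      |phi16 k a - phi16 k b| ≤ k * |a - b| * (max |a| |b|) ^ (k - 1) := by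
    intro a b hb ha
    have e : ∀ c : ℝ, |c| ^ k = |c| * |c| ^ (k - 1) := fun c => by
      rw [← Real.rpow_one_add' (abs_nonneg c) (by linarith)]; ring_nf
    have h1 : |a| ^ (k-1) ≤ (max |a| |b|) ^ (k - 1) := Real.rpow_le_rpow (abs_nonneg _)
      (le_max_left _ _) (by linarith)
    have h2 : |b| ^ (k-1) ≤ (max |a| |b|) ^ (k - 1) := Real.rpow_le_rpow (abs_nonneg _)
      (le_max_right _ _) (by linarith)
    have h5 : |a - b| = |a| + |b| := by
      rw [abs_of_nonneg ha, abs_of_nonpos hb, abs_of_nonneg (by linarith)]; ring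
    have := abs_sub (phi16 k a) (phi16 k b)
    rw [abs_phi16, abs_phi16, e, e] at this
    have h6 := mul_le_mul_of_nonneg_left h1 (abs_nonneg a)
    have h7 := mul_le_mul_of_nonneg_left h2 (abs_nonneg b)
    have h8 : 0 ≤ (max |a| |b|) ^ (k - 1) := Real.rpow_nonneg (by positivity) _
    have h9 : (|a| + |b|) * (max |a| |b|) ^ (k - 1) ≤ k * ((|a| + |b|) * (max |a| |b|) ^ (k - 1)) :=
      le_mul_of_one_le_left (by positivity) hk
    rw [h5]
    linarith
  rcases le_total 0 a with ha | ha <;> rcases le_total 0 b with hb | hb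
  · exact key2 a b hb ha
  · exact key3 a b hb ha
  · rw [abs_sub_comm, abs_sub_comm a b, max_comm]; exact key3 b a ha hb
  · have := key2 (-a) (-b) (by linarith) (by linarith)
    rw [phi16_neg hk0, phi16_neg hk0, abs_neg, abs_neg] at this
    rw [abs_sub_comm, abs_sub_comm a b]
    simpa only [neg_sub_neg] using this

/-- The estimate used in the Rosenthal inequality. -/
lemma phi16_est {p : ℝ} (hp : 2 < p) (s x : ℝ) :
    x * (phi16 (p - 1) (s + x) - phi16 (p - 1) s) ≤
      ((p - 1) * 2 ^ (p - 2)) * (x ^ 2 * |s| ^ (p - 2) + |x| ^ p) := by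
  have h := phi16_lip (k := p - 1) (by linarith) (s + x) s
  have h1 : x * (phi16 (p - 1) (s + x) - phi16 (p - 1) s) ≤
      |x| * ((p - 1) * |x| * (max |s + x| |s|) ^ (p - 2)) := by
    refine (le_abs_self _).trans ?_
    rw [abs_mul]
    refine mul_le_mul_of_nonneg_left ?_ (abs_nonneg _)
    have e1 : s + x - s = x := by ring
    have e2 : p - 1 - 1 = p - 2 := by ring
    rwa [e1, e2] at h
  refine h1.trans ?_
  have h2 : max |s + x| |s| ≤ 2 * max |s| |x| := by
    have := abs_add_le s x
    have h3 := le_max_left |s| |x|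
    have h4 := le_max_right |s| |x|
    have := abs_nonneg s
    exact max_le (by linarith) (by linarith)
  have h3 : (max |s + x| |s|) ^ (p - 2) ≤ 2 ^ (p-2) * (|s| ^ (p - 2) + |x| ^ (p - 2)) := by
    refine (Real.rpow_le_rpow (by positivity) h2 (by linarith)).trans ?_
    rw [Real.mul_rpow (by norm_num) (by positivity)]
    refine mul_le_mul_of_nonneg_left ?_ (by positivity)
    have := Real.rpow_nonneg (abs_nonneg s) (p - 2)
    have := Real.rpow_nonneg (abs_nonneg x) (p - 2)
    rcases max_choice |s| |x| with h | h <;> rw [h] <;> linarith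
  have h4 : |x| ^ p = |x| ^ 2 * |x| ^ (p - 2) := by
    rw [← Real.rpow_natCast, ← Real.rpow_add' (abs_nonneg x) (by push_cast; linarith)]
    congr 1; push_cast; ring
  calc _ = ((p-1) * |x|^2) * (max |s + x| |s|) ^ (p - 2) := by ring
    _ ≤ ((p-1) * |x|^2) * (2 ^ (p-2) * (|s| ^ (p - 2) + |x| ^ (p - 2))) :=
      mul_le_mul_of_nonneg_left h3 (mul_nonneg (by linarith) (by positivity))
    _ = _ := by rw [h4, ← sq_abs x]; ring

section
variable {ι T : Type} [Fintype ι] [DecidableEq ι] [Fintype T]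

/-- Expectation over a finite product space. -/
def Ex16 (m : ι → T → ℝ) (F : (ι → T) → ℝ) : ℝ := ∑ ω, (∏ i, m i (ω i)) * F ω

lemma Ex16_coord (m : ι → T → ℝ) (hm1 : ∀ i, ∑ t, m i t = 1) (i : ι) (F : (ι → T) → ℝ) :
    Ex16 m F = Ex16 m (fun ω => ∑ t, m i t * F (Function.update ω i t)) := by
  classical
  let σ : ((ι → T) × T) → ((ι → T) × T) := fun z => (Function.update z.1 i z.2, z.1 i)
  have hσ : Function.Involutive σ := by
    rintro ⟨ω, t⟩
    simp [σ]
  have hM : ∀ ω t, (∏ j, m j (ω j)) * m i t =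
      (∏ j, m j (Function.update ω i t j)) * m i (ω i) := by
    intro ω t
    rw [← Finset.mul_prod_erase _ _ (Finset.mem_univ i),
      ← Finset.mul_prod_erase _ (fun j => m j (Function.update ω i t j)) (Finset.mem_univ i)]
    have : ∏ x ∈ Finset.univ.erase i, m x (Function.update ω i t x) =
        ∏ x ∈ Finset.univ.erase i, m x (ω x) := by
      refine Finset.prod_congr rfl fun x hx => ?_
      rw [Function.update_of_ne (Finset.ne_of_mem_erase hx)]
    rw [this]; simp; ring
  unfold Ex16
  have h1 : ∑ ω, (∏ j, m j (ω j)) * F ω =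
      ∑ z : (ι → T) × T, (∏ j, m j (z.1 j)) * m i z.2 * F z.1 := by
    rw [Fintype.sum_prod_type]
    refine Finset.sum_congr rfl fun ω _ => ?_
    simp only
    rw [← Finset.sum_mul, ← Finset.mul_sum, hm1, mul_one]
  have h2 : ∑ ω, (∏ j, m j (ω j)) * ∑ t, m i t * F (Function.update ω i t) =
      ∑ z : (ι → T) × T, (∏ j, m j (z.1 j)) * m i z.2 * F (Function.update z.1 i z.2) := by
    rw [Fintype.sum_prod_type]
    refine Finset.sum_congr rfl fun ω _ => ?_
    simp only
    rw [Finset.mul_sum]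
    refine Finset.sum_congr rfl fun t _ => by ring
  rw [h1, h2, ← Equiv.sum_comp hσ.toPerm]
  refine Finset.sum_congr rfl fun z _ => ?_
  simp only [Function.Involutive.coe_toPerm, σ]
  rw [← hM]

lemma Ex16_mono (m : ι → T → ℝ) (hm : ∀ i t, 0 ≤ m i t) {F G : (ι → T) → ℝ}
    (h : ∀ ω, F ω ≤ G ω) : Ex16 m F ≤ Ex16 m G :=
  Finset.sum_le_sum fun ω _ => mul_le_mul_of_nonneg_left (h ω) (Finset.prod_nonneg fun i _ => hm i _)

lemma Ex16_sum (m : ι → T → ℝ) {κ : Type} (s : Finset κ) (F : κ → (ι → T) → ℝ) :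
    Ex16 m (fun ω => ∑ i ∈ s, F i ω) = ∑ i ∈ s, Ex16 m (F i) := by
  unfold Ex16
  simp_rw [Finset.mul_sum]
  exact Finset.sum_comm

lemma Ex16_add (m : ι → T → ℝ) (F G : (ι → T) → ℝ) :
    Ex16 m (fun ω => F ω + G ω) = Ex16 m F + Ex16 m G := by
  unfold Ex16
  simp_rw [mul_add, Finset.sum_add_distrib]

lemma Ex16_mul (m : ι → T → ℝ) (c : ℝ) (F : (ι → T) → ℝ) :
    Ex16 m (fun ω => c * F ω) = c * Ex16 m F := by
  unfold Ex16
  simp_rw [Finset.mul_sum]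
  exact Finset.sum_congr rfl fun ω _ => by ring

lemma Ex16_one (m : ι → T → ℝ) (hm1 : ∀ i, ∑ t, m i t = 1) :
    ∑ ω : ι → T, (∏ i, m i (ω i)) = 1 := by
  rw [← Fintype.prod_sum]; simp [hm1]

lemma Ex16_const (m : ι → T → ℝ) (hm1 : ∀ i, ∑ t, m i t = 1) (c : ℝ) :
    Ex16 m (fun _ => c) = c := by
  unfold Ex16
  rw [← Finset.sum_mul, Ex16_one m hm1, one_mul]

lemma Ex16_rpow (m : ι → T → ℝ) (hm : ∀ i t, 0 ≤ m i t) (hm1 : ∀ i, ∑ t, m i t = 1)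
    {r : ℝ} (hr : 1 ≤ r) (F : (ι → T) → ℝ) (hF : ∀ ω, 0 ≤ F ω) :
    (Ex16 m F) ^ r ≤ Ex16 m (fun ω => F ω ^ r) :=
  Real.rpow_arith_mean_le_arith_mean_rpow _ _ _ (fun ω _ => Finset.prod_nonneg fun i _ => hm i _)
    (Ex16_one m hm1) (fun ω _ => hF ω) hr

/-- sum of independent variables -/
def S16 (x : ι → T → ℝ) (ω : ι → T) : ℝ := ∑ i, x i (ω i)

def Si16 (x : ι → T → ℝ) (i : ι) (ω : ι → T) : ℝ := ∑ j ∈ Finset.univ.erase i, x j (ω j)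

lemma S16_update (x : ι → T → ℝ) (i : ι) (ω : ι → T) (t : T) :
    S16 x (Function.update ω i t) = Si16 x i ω + x i t := by
  unfold S16 Si16
  rw [← Finset.sum_erase_add _ _ (Finset.mem_univ i)]
  congr 1
  · refine Finset.sum_congr rfl fun j hj => ?_
    rw [Function.update_of_ne (Finset.ne_of_mem_erase hj)]
  · simp

lemma Ex16_mulS (m : ι → T → ℝ) (hm1 : ∀ i, ∑ t, m i t = 1)
    (x : ι → T → ℝ) (f : T → ℝ) (i : ι) (hx : ∑ t, m i t * f t = 0) (φ : ℝ → ℝ) :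
    Ex16 m (fun ω => f (ω i) * φ (S16 x ω)) =
      Ex16 m (fun ω => ∑ t, m i t * (f t * (φ (Si16 x i ω + x i t) - φ (Si16 x i ω)))) := by
  rw [Ex16_coord m hm1 i]
  congr 1; ext ω
  simp only [Function.update_self, S16_update]
  have : ∀ t, m i t * (f t * (φ (Si16 x i ω + x i t) - φ (Si16 x i ω))) =
    m i t * (f t * φ (Si16 x i ω + x i t)) - (m i t * f t) * φ (Si16 x i ω) := fun t => by ring
  simp_rw [this, Finset.sum_sub_distrib, ← Finset.sum_mul, hx]
  simp

lemma Ex16_S_rpow (m : ι → T → ℝ) (hm1 : ∀ i, ∑ t, m i t = 1)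
    (x : ι → T → ℝ) (hx : ∀ i, ∑ t, m i t * x i t = 0) {k : ℝ} (hk : 0 < k) :
    Ex16 m (fun ω => |S16 x ω| ^ (k + 1)) =
      ∑ i, Ex16 m (fun ω => ∑ t, m i t * (x i t *
        (phi16 k (Si16 x i ω + x i t) - phi16 k (Si16 x i ω)))) := by
  simp_rw [← mul_phi16 hk]
  have : (fun ω => S16 x ω * phi16 k (S16 x ω)) =
      fun ω => ∑ i, (x i (ω i) * phi16 k (S16 x ω)) := by
    ext ω; rw [← Finset.sum_mul]; rfl
  rw [this, Ex16_sum]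
  exact Finset.sum_congr rfl fun i _ => Ex16_mulS m hm1 x (x i) i (hx i) _

/-- von Bahr--Esseen -/
lemma vBE16 (m : ι → T → ℝ) (hm : ∀ i t, 0 ≤ m i t) (hm1 : ∀ i, ∑ t, m i t = 1)
    (x : ι → T → ℝ) (hx : ∀ i, ∑ t, m i t * x i t = 0) {r : ℝ} (hr : 1 < r) (hr2 : r ≤ 2) :
    Ex16 m (fun ω => |S16 x ω| ^ r) ≤ 2 * ∑ i, ∑ t, m i t * |x i t| ^ r := by
  have h := Ex16_S_rpow m hm1 x hx (k := r - 1) (by linarith)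
  rw [sub_add_cancel] at h
  rw [h, Finset.mul_sum]
  refine Finset.sum_le_sum fun i _ => ?_
  rw [← Ex16_const m hm1 (2 * ∑ t, m i t * |x i t| ^ r)]
  refine Ex16_mono m hm fun ω => ?_
  rw [Finset.mul_sum]
  refine Finset.sum_le_sum fun t _ => ?_
  have h1 := phi16_holder (k := r - 1) (by linarith) (by linarith) (Si16 x i ω + x i t) (Si16 x i ω)
  rw [add_sub_cancel_left] at h1
  have h2 : |x i t| ^ r = |x i t| * |x i t| ^ (r - 1) := by
    rw [← Real.rpow_one_add' (abs_nonneg _) (by linarith)]; ring_nf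
  have h3 : x i t * (phi16 (r-1) (Si16 x i ω + x i t) - phi16 (r-1) (Si16 x i ω)) ≤
      2 * |x i t| ^ r := by
    refine (le_abs_self _).trans ?_
    rw [abs_mul, h2]
    calc _ ≤ |x i t| * (2 * |x i t| ^ (r-1)) := mul_le_mul_of_nonneg_left h1 (abs_nonneg _)
      _ = _ := by ring
  calc _ ≤ m i t * (2 * |x i t| ^ r) := mul_le_mul_of_nonneg_left h3 (hm i t)
    _ = _ := by ring

/-- Rosenthal's inequality -/
lemma ros16 {p : ℝ} (hp : 2 < p) : ∃ C : ℝ, 0 < C ∧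
    ∀ (ι T : Type) [Fintype ι] [DecidableEq ι] [Fintype T] (m : ι → T → ℝ)
    (_ : ∀ i t, 0 ≤ m i t) (_ : ∀ i, ∑ t, m i t = 1)
    (x : ι → T → ℝ) (_ : ∀ i, ∑ t, m i t * x i t = 0),
    Ex16 m (fun ω => |S16 x ω| ^ p) ≤
      C * ((∑ i, ∑ t, m i t * |x i t| ^ p) + (∑ i, ∑ t, m i t * x i t ^ 2) ^ (p / 2)) := by
  set K : ℝ := (p - 1) * 2 ^ (p - 2) with hK
  have hK0 : 0 < K := mul_pos (by linarith) (by positivity)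
  refine ⟨2 * K + (2 * K) ^ (p/2), by positivity, ?_⟩
  intro ι T _ _ _ m hm hm1 x hx
  set U := Ex16 m (fun ω => |S16 x ω| ^ p) with hU
  set D := ∑ i, ∑ t, m i t * |x i t| ^ p with hD
  set V := ∑ i, ∑ t, m i t * x i t ^ 2 with hV
  have hD0 : 0 ≤ D := Finset.sum_nonneg fun i _ => Finset.sum_nonneg fun t _ =>
    mul_nonneg (hm i t) (by positivity)
  have hV0 : 0 ≤ V := Finset.sum_nonneg fun i _ => Finset.sum_nonneg fun t _ =>
    mul_nonneg (hm i t) (by positivity)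
  have hU0 : 0 ≤ U := Finset.sum_nonneg fun ω _ => mul_nonneg (Finset.prod_nonneg fun i _ => hm i _)
    (by positivity)
  -- removal of one variable decreases the moments
  have hSi : ∀ i, Ex16 m (fun ω => |Si16 x i ω| ^ p) ≤ U := by
    intro i
    rw [hU, Ex16_coord m hm1 i (fun ω => |S16 x ω| ^ p)]
    refine Ex16_mono m hm fun ω => ?_
    simp only [S16_update]
    have h1 : |Si16 x i ω| ≤ ∑ t, m i t * |Si16 x i ω + x i t| := by
      have : Si16 x i ω = ∑ t, m i t * (Si16 x i ω + x i t) := by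
        simp_rw [mul_add, Finset.sum_add_distrib, ← Finset.sum_mul, hm1, hx]; ring
      calc |Si16 x i ω| = |∑ t, m i t * (Si16 x i ω + x i t)| := by rw [← this]
        _ ≤ _ := (Finset.abs_sum_le_sum_abs _ _).trans (le_of_eq (Finset.sum_congr rfl fun t _ => by
            rw [abs_mul, abs_of_nonneg (hm i t)]))
    refine (Real.rpow_le_rpow (abs_nonneg _) h1 (by linarith)).trans ?_
    exact Real.rpow_arith_mean_le_arith_mean_rpow _ _ _ (fun t _ => hm i t) (hm1 i)
      (fun t _ => abs_nonneg _) (by linarith)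
  have hSi2 : ∀ i, Ex16 m (fun ω => |Si16 x i ω| ^ (p - 2)) ≤ U ^ ((p - 2) / p) := by
    intro i
    have h1 := Ex16_rpow m hm hm1 (r := p / (p - 2)) (by
      rw [le_div_iff₀ (by linarith)]; linarith) (fun ω => |Si16 x i ω| ^ (p - 2))
        (fun ω => by positivity)
    have h2 : ∀ ω, (|Si16 x i ω| ^ (p - 2)) ^ (p / (p - 2)) = |Si16 x i ω| ^ p := by
      intro ω
      rw [← Real.rpow_mul (abs_nonneg _)]
      congr 1
      have : p - 2 ≠ 0 := by linarith
      field_simp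
    simp_rw [h2] at h1
    have h3 := h1.trans (hSi i)
    have h0 : 0 ≤ Ex16 m (fun ω => |Si16 x i ω| ^ (p - 2)) := 
      Finset.sum_nonneg fun ω _ => mul_nonneg (Finset.prod_nonneg fun i _ => hm i _) (by positivity)
    have h4 := Real.rpow_le_rpow (by positivity) h3 (z := (p - 2) / p) (div_nonneg (by linarith) (by linarith))
    rw [← Real.rpow_mul h0] at h4
    have h5 : p / (p - 2) * ((p - 2) / p) = 1 := by
      have : p - 2 ≠ 0 := by linarith
      have : p ≠ 0 := by linarith
      field_simp
    rwa [h5, Real.rpow_one] at h4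
  have hmain : U ≤ K * (V * U ^ ((p - 2) / p) + D) := by
    have h := Ex16_S_rpow m hm1 x hx (k := p - 1) (by linarith)
    rw [sub_add_cancel] at h
    refine (le_of_eq (hU.trans h)).trans ?_
    rw [hV, hD, Finset.sum_mul, ← Finset.sum_add_distrib, Finset.mul_sum]
    refine Finset.sum_le_sum fun i _ => ?_
    have h1 : Ex16 m (fun ω => ∑ t, m i t * (x i t *
        (phi16 (p-1) (Si16 x i ω + x i t) - phi16 (p-1) (Si16 x i ω)))) ≤ 
        Ex16 m (fun ω => (K * ∑ t, m i t * x i t ^ 2) * |Si16 x i ω| ^ (p - 2) + 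
          K * ∑ t, m i t * |x i t| ^ p) := by
      refine Ex16_mono m hm fun ω => ?_
      rw [mul_assoc, ← mul_add, Finset.sum_mul, ← Finset.sum_add_distrib, Finset.mul_sum]
      refine Finset.sum_le_sum fun t _ => ?_
      refine (mul_le_mul_of_nonneg_left (phi16_est hp _ _) (hm i t)).trans (le_of_eq ?_)
      rw [← hK]; ring
    refine h1.trans ?_
    rw [Ex16_add, Ex16_mul, Ex16_const m hm1, mul_add, mul_assoc]
    gcongr
    · exact Finset.sum_nonneg fun t _ => mul_nonneg (hm i t) (by positivity)
    · exact hSi2 i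
  have hC : (2 * K + (2 * K) ^ (p/2)) * (D + V ^ (p/2)) = 
    2 * K * D + 2 * K * V ^ (p/2) + (2*K) ^ (p/2) * D + (2 * K) ^ (p/2) * V ^ (p/2) := by ring
  rw [hC]
  have e1 : 0 ≤ 2 * K * D := by positivity
  have e2 : 0 ≤ 2 * K * V ^ (p/2) := by positivity
  have e3 : 0 ≤ (2*K) ^ (p/2) * D := by positivity
  have e4 : 0 ≤ (2*K) ^ (p/2) * V ^ (p/2) := by positivity
  rcases le_total (V * U ^ ((p - 2) / p)) D with hc | hc
  · nlinarith
  · rcases eq_or_lt_of_le hU0 with h0 | h0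
    · rw [← h0]; positivity
    have h1 : U ≤ (2 * K * V) * U ^ ((p - 2) / p) := by nlinarith
    have h2 : U = U ^ (2/p) * U ^ ((p - 2) / p) := by
      rw [← Real.rpow_add h0]
      have : 2 / p + (p - 2) / p = 1 := by field_simp; ring
      rw [this, Real.rpow_one]
    have h3 : U ^ (2/p) ≤ 2 * K * V := by
      have h4 : 0 < U ^ ((p - 2) / p) := by positivity
      rw [h2] at h1
      have : U ^ (2 / p) * U ^ ((p - 2) / p) ≤ (2 * K * V) * U ^ ((p - 2) / p) := by
        rw [← h2] at h1 ⊢; linarith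
      exact le_of_mul_le_mul_right this h4
    have h5 := Real.rpow_le_rpow (by positivity) h3 (z := p / 2) (by linarith)
    rw [← Real.rpow_mul hU0, Real.mul_rpow (by positivity) hV0] at h5
    have h6 : 2 / p * (p / 2) = 1 := by field_simp
    rw [h6, Real.rpow_one] at h5
    linarith
end

section
variable {ι T : Type} [Fintype ι] [DecidableEq ι] [Fintype T]

lemma Ex16_holder (m : ι → T → ℝ) (hm : ∀ i t, 0 ≤ m i t) {p q : ℝ} (hpq : p.HolderConjugate q)
    (F G : (ι → T) → ℝ) :
    Ex16 m (fun ω => F ω * G ω) ≤ (Ex16 m (fun ω => |F ω| ^ p)) ^ (1 / p) *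
      (Ex16 m (fun ω => |G ω| ^ q)) ^ (1 / q) := by
  have hM : ∀ ω : ι → T, 0 ≤ ∏ i, m i (ω i) := fun ω => Finset.prod_nonneg fun i _ => hm i _
  have h := Real.inner_le_Lp_mul_Lq Finset.univ (fun ω : ι → T => (∏ i, m i (ω i)) ^ (1/p) * F ω)
    (fun ω : ι → T => (∏ i, m i (ω i)) ^ (1/q) * G ω) hpq
  have e : ∀ (r : ℝ) (_ : 0 < r) (H : (ι → T) → ℝ) (ω : ι → T),
      |(∏ i, m i (ω i)) ^ (1/r) * H ω| ^ r = (∏ i, m i (ω i)) * |H ω| ^ r := by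
    intro r hr H ω
    rw [abs_mul, Real.mul_rpow (abs_nonneg _) (abs_nonneg _),
      abs_of_nonneg (Real.rpow_nonneg (hM ω) _), ← Real.rpow_mul (hM ω), one_div,
      inv_mul_cancel₀ hr.ne', Real.rpow_one]
  simp_rw [e p hpq.pos, e q hpq.symm.pos] at h
  refine le_trans (le_of_eq ?_) h
  unfold Ex16
  refine Finset.sum_congr rfl fun ω _ => ?_
  have : (∏ i, m i (ω i)) = (∏ i, m i (ω i)) ^ (1/p) * (∏ i, m i (ω i)) ^ (1/q) := by
    rw [← Real.rpow_add' (hM ω)]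
    · rw [one_div, one_div, hpq.inv_add_inv_eq_one, Real.rpow_one]
    · rw [one_div, one_div, hpq.inv_add_inv_eq_one]; norm_num
  conv_lhs => rw [this]
  ring

lemma sum_rpow_le16 {ι : Type} (s : Finset ι) (t : ι → ℝ) (ht : ∀ i, 0 ≤ t i) {r : ℝ} (hr : 1 ≤ r) :
    ∑ i ∈ s, t i ^ r ≤ (∑ i ∈ s, t i) ^ r := by
  have hS : 0 ≤ ∑ i ∈ s, t i := Finset.sum_nonneg fun i _ => ht i
  have e : ∀ c : ℝ, 0 ≤ c → c ^ r = c * c ^ (r - 1) := fun c hc => by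
      rw [← Real.rpow_one_add' hc (by linarith)]; ring_nf
  rw [e _ hS, Finset.sum_mul]
  refine Finset.sum_le_sum fun i hi => ?_
  rw [e _ (ht i)]
  refine mul_le_mul_of_nonneg_left ?_ (ht i)
  exact Real.rpow_le_rpow (ht i) (Finset.single_le_sum (fun j _ => ht j) hi) (by linarith)
end

lemma ww16 {W D r : ℝ} (hW : 0 ≤ W) (hD : 0 ≤ D) {p q : ℝ} (hpq : p.HolderConjugate q) (hr : 0 < r)
    (h : W ≤ D ^ (1/p) * (r * W) ^ (1/q)) : W ≤ r ^ (p - 1) * D := by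
  rcases eq_or_lt_of_le hW with h0 | h0
  · rw [← h0]; positivity
  have hp := hpq.pos
  have h1 := Real.rpow_le_rpow hW h hp.le
  rw [Real.mul_rpow (by positivity) (by positivity), ← Real.rpow_mul hD,
    ← Real.rpow_mul (by positivity)] at h1
  have e1 : 1 / p * p = 1 := by field_simp
  have e2 : 1 / q * p = p - 1 := by rw [← hpq.div_conj_eq_sub_one]; ring
  rw [e1, e2, Real.rpow_one, Real.mul_rpow hr.le hW] at h1
  have e3 : W ^ p = W * W ^ (p-1) := by
    rw [← Real.rpow_one_add' hW (by linarith)]; ring_nf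
  rw [e3] at h1
  have : 0 < W ^ (p - 1) := by positivity
  refine le_of_mul_le_mul_right ?_ this
  linarith

set_option maxHeartbeats 1000000 in
/-- Rosenthal's theorem: `ℓ_p ∩ ℓ_2(v)` on a finite set is uniformly complemented in `ℓ_p`. -/
lemma block16 {p : ℝ} (hp : 2 < p) : ∃ C : ℝ, 0 < C ∧
    ∀ (ι : Type) [Fintype ι] [DecidableEq ι] (v : ι → ℝ) (_ : ∀ i, 0 < v i),
    ∃ (A : (ι → ℝ) →ₗ[ℝ] ((ι → Fin 3) → ℝ)) (B : ((ι → Fin 3) → ℝ) →ₗ[ℝ] (ι → ℝ)),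
      (∀ a, ∑ ω, |A a ω| ^ p ≤ C * (∑ i, |a i| ^ p + (∑ i, (a i * v i) ^ 2) ^ (p/2))) ∧
      (∀ g, ∑ i, |B g i| ^ p ≤ C * ∑ ω, |g ω| ^ p) ∧
      (∀ g, ∑ i, (B g i * v i) ^ 2 ≤ C * (∑ ω, |g ω| ^ p) ^ (2/p)) ∧
      (∀ a, B (A a) = a) := by
  obtain ⟨K, hK0, hK⟩ := ros16 hp
  refine ⟨2 * K + 2 ^ (p - 1) + 2, by positivity, ?_⟩
  intro ι _ _ v hv
  have hpq : p.HolderConjugate (p / (p - 1)) := Real.HolderConjugate.conjExponent (by linarith)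
  set q := p / (p - 1) with hq
  have hp2 : p - 2 ≠ 0 := by linarith
  have hp1 : p - 1 ≠ 0 := by linarith
  have hp0 : p ≠ 0 := by linarith
  have hq1 : 1 < q := by rw [hq, lt_div_iff₀ (by linarith)]; linarith
  have hq2 : q ≤ 2 := by rw [hq, div_le_iff₀ (by linarith)]; linarith
  let μ : ι → ℝ := fun i => if v i ≤ 1 then v i ^ (2 * p / (p - 2)) else 1
  have hμ0 : ∀ i, 0 < μ i := by
    intro i; simp only [μ]; split_ifs
    · exact Real.rpow_pos_of_pos (hv i) _
    · norm_num
  have hμ1 : ∀ i, μ i ≤ 1 := by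
    intro i; simp only [μ]; split_ifs with h
    · exact Real.rpow_le_one (hv i).le h (div_nonneg (by linarith) (by linarith))
    · norm_num
  let c : ι → ℝ := fun i => v i * μ i ^ (-(1/2) : ℝ)
  have hc0 : ∀ i, 0 < c i := fun i => mul_pos (hv i) (Real.rpow_pos_of_pos (hμ0 i) _)
  have hcr : ∀ i (r : ℝ), μ i * c i ^ r = v i ^ r * μ i ^ (1 - r / 2) := by
    intro i r
    simp only [c]
    rw [Real.mul_rpow (hv i).le (Real.rpow_nonneg (hμ0 i).le _), ← Real.rpow_mul (hμ0 i).le,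
      sub_eq_add_neg, Real.rpow_add (hμ0 i), Real.rpow_one]
    ring_nf
  have hc2 : ∀ i, μ i * c i ^ 2 = v i ^ 2 := by
    intro i
    have := hcr i 2
    rw [show (1 : ℝ) - 2 / 2 = 0 by norm_num, Real.rpow_zero] at this
    simpa using this
  have hcp : ∀ i, μ i * c i ^ p ≤ 1 + v i ^ p := by
    intro i
    have hvp := Real.rpow_pos_of_pos (hv i) p
    rw [hcr]
    simp only [μ]; split_ifs with h
    · rw [← Real.rpow_mul (hv i).le, ← Real.rpow_add (hv i)]
      have : p + 2 * p / (p - 2) * (1 - p / 2) = 0 := by field_simp; ring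
      rw [this, Real.rpow_zero]; linarith
    · rw [Real.one_rpow]; linarith
  have hcq : ∀ i, μ i * c i ^ q ≤ (v i ^ 2) ^ q := by
    intro i
    have hvp := Real.rpow_pos_of_pos (hv i) q
    rw [hcr, pow_two, Real.mul_rpow (hv i).le (hv i).le]
    refine mul_le_mul_of_nonneg_left ?_ hvp.le
    simp only [μ]; split_ifs with h
    · rw [← Real.rpow_mul (hv i).le]
      have : 2 * p / (p - 2) * (1 - q / 2) = q := by rw [hq]; field_simp; ring
      rw [this]
    · rw [Real.one_rpow]; exact Real.one_le_rpow (by linarith) (by linarith)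
  let m : ι → Fin 3 → ℝ := fun i => ![μ i / 2, μ i / 2, 1 - μ i]
  let f : ι → Fin 3 → ℝ := fun i => ![c i, - c i, 0]
  have hm : ∀ i t, 0 ≤ m i t := by
    intro i t
    have := hμ0 i
    have := hμ1 i
    fin_cases t <;> simp [m] <;> linarith
  have hm1 : ∀ i, ∑ t, m i t = 1 := by
    intro i; simp [m, Fin.sum_univ_three]
  have hf0 : ∀ i, ∑ t, m i t * f i t = 0 := by
    intro i; simp [m, f, Fin.sum_univ_three]
  have hx0 : ∀ (a : ι → ℝ) i, ∑ t, m i t * (a i * f i t) = 0 := by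
    intro a i
    have := hf0 i
    calc _ = a i * ∑ t, m i t * f i t := by rw [Finset.mul_sum]; exact Finset.sum_congr rfl fun t _ => by ring
      _ = 0 := by rw [this, mul_zero]
  have hxr : ∀ (a : ι → ℝ) i (r : ℝ), 0 < r → ∑ t, m i t * |a i * f i t| ^ r = |a i| ^ r * (μ i * c i ^ r) := by
    intro a i r hr
    simp [m, f, Fin.sum_univ_three, abs_mul, Real.mul_rpow, abs_of_pos (hc0 i), Real.zero_rpow hr.ne']
    ring
  have hx2 : ∀ (a : ι → ℝ) i, ∑ t, m i t * (a i * f i t) ^ 2 = (a i * v i) ^ 2 := by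
    intro a i
    rw [mul_pow, ← hc2]
    simp [m, f, Fin.sum_univ_three]
    ring
  let M : (ι → Fin 3) → ℝ := fun ω => ∏ i, m i (ω i)
  have hM : ∀ ω, 0 ≤ M ω := fun ω => Finset.prod_nonneg fun i _ => hm i _
  -- the two operators
  let A : (ι → ℝ) →ₗ[ℝ] ((ι → Fin 3) → ℝ) :=
    { toFun := fun a ω => M ω ^ (1/p) * S16 (fun i t => a i * f i t) ω
      map_add' := by
        intro a b; ext ω
        simp only [S16, Pi.add_apply, add_mul, Finset.sum_add_distrib, mul_add]
      map_smul' := by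
        intro r a; ext ω
        simp only [S16, Pi.smul_apply, smul_eq_mul, RingHom.id_apply, mul_assoc, ← Finset.mul_sum]
        ring }
  let B : ((ι → Fin 3) → ℝ) →ₗ[ℝ] (ι → ℝ) :=
    { toFun := fun g i => Ex16 m (fun ω => (M ω ^ (-(1/p)) * g ω) * f i (ω i)) / v i ^ 2
      map_add' := by
        intro a b; ext i
        simp only [Pi.add_apply, mul_add, add_mul, Ex16_add, add_div]
      map_smul' := by
        intro r a; ext i
        simp only [Pi.smul_apply, smul_eq_mul, RingHom.id_apply]
        rw [← mul_div_assoc, ← Ex16_mul]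
        congr 2; ext ω; ring }
  have hG : ∀ g : (ι → Fin 3) → ℝ, Ex16 m (fun ω => |M ω ^ (-(1/p)) * g ω| ^ p) ≤ ∑ ω, |g ω| ^ p := by
    intro g
    refine Finset.sum_le_sum fun ω _ => ?_
    change M ω * |M ω ^ (-(1/p)) * g ω| ^ p ≤ _
    rcases eq_or_lt_of_le (hM ω) with h | h
    · rw [← h, zero_mul]; positivity
    · rw [abs_mul, Real.mul_rpow (abs_nonneg _) (abs_nonneg _), abs_of_pos (Real.rpow_pos_of_pos h _),
        ← Real.rpow_mul h.le, ← mul_assoc]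
      have : -(1/p) * p = -1 := by field_simp
      rw [this, Real.rpow_neg_one, mul_inv_cancel₀ h.ne', one_mul]
  have hG0 : ∀ (G : (ι → Fin 3) → ℝ) (r : ℝ), 0 ≤ Ex16 m (fun ω => |G ω| ^ r) := fun G r =>
    Finset.sum_nonneg fun ω _ => mul_nonneg (hM ω) (by positivity)
  have hdual : ∀ (G : (ι → Fin 3) → ℝ) (b : ι → ℝ),
      ∑ i, b i * Ex16 m (fun ω => G ω * f i (ω i)) =
        Ex16 m (fun ω => G ω * S16 (fun i t => b i * f i t) ω) := by
    intro G b
    simp_rw [S16, Finset.mul_sum]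
    rw [Ex16_sum]
    refine Finset.sum_congr rfl fun i _ => ?_
    rw [← Ex16_mul]; congr 1; ext ω; ring
  refine ⟨A, B, ?_, ?_, ?_, ?_⟩
  · intro a
    have h := hK ι (Fin 3) m hm hm1 (fun i t => a i * f i t) (hx0 a)
    have h1 : ∑ ω, |A a ω| ^ p = Ex16 m (fun ω => |S16 (fun i t => a i * f i t) ω| ^ p) := by
      refine Finset.sum_congr rfl fun ω _ => ?_
      change |M ω ^ (1/p) * _| ^ p = M ω * _
      rw [abs_mul, Real.mul_rpow (abs_nonneg _) (abs_nonneg _),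
        abs_of_nonneg (Real.rpow_nonneg (hM ω) _), ← Real.rpow_mul (hM ω)]
      have : 1/p * p = 1 := by field_simp
      rw [this, Real.rpow_one]
    rw [h1]
    refine h.trans ?_
    simp_rw [hx2, hxr a _ p (by linarith)]
    set W := ∑ i, (a i * v i) ^ 2
    have hW : 0 ≤ W := Finset.sum_nonneg fun i _ => by positivity
    have h2 : ∑ i, |a i| ^ p * (μ i * c i ^ p) ≤ ∑ i, |a i| ^ p + W ^ (p/2) := by
      have h3 := sum_rpow_le16 Finset.univ (fun i => (a i * v i) ^ 2) (fun i => by positivity)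
        (r := p / 2) (by linarith)
      refine le_trans ?_ (add_le_add_right h3 _)
      rw [← Finset.sum_add_distrib]
      refine Finset.sum_le_sum fun i _ => ?_
      have h4 : ((a i * v i) ^ 2) ^ (p/2) = |a i| ^ p * v i ^ p := by
        rw [← sq_abs, ← Real.rpow_natCast, ← Real.rpow_mul (abs_nonneg _), abs_mul,
          Real.mul_rpow (abs_nonneg _) (abs_nonneg _), abs_of_pos (hv i)]
        congr 2 <;> (push_cast; ring)
      rw [h4]
      calc _ ≤ |a i| ^ p * (1 + v i ^ p) := mul_le_mul_of_nonneg_left (hcp i) (by positivity)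
        _ = _ := by ring
    have h5 : 0 ≤ ∑ i, |a i| ^ p := Finset.sum_nonneg fun i _ => by positivity
    have h6 : 0 ≤ W ^ (p/2) := by positivity
    have h7 : (0:ℝ) < 2 ^ (p-1) := by positivity
    calc _ ≤ K * ((∑ i, |a i| ^ p + W ^ (p/2)) + W ^ (p/2)) := by gcongr
      _ ≤ (2 * K) * (∑ i, |a i| ^ p + W ^ (p/2)) := by nlinarith
      _ ≤ _ := by
        refine mul_le_mul_of_nonneg_right ?_ (by positivity)
        linarith
  · intro g
    set G : (ι → Fin 3) → ℝ := fun ω => M ω ^ (-(1/p)) * g ω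
    have hB : ∀ i, B g i = Ex16 m (fun ω => G ω * f i (ω i)) / v i ^ 2 := fun i => rfl
    set β := B g
    set W := ∑ i, |β i| ^ p
    have hW : 0 ≤ W := Finset.sum_nonneg fun i _ => by positivity
    have h1 : W = Ex16 m (fun ω => G ω * S16 (fun i t => (phi16 (p-1) (β i) / v i ^ 2) * f i t) ω) := by
      rw [← hdual G (fun i => phi16 (p-1) (β i) / v i ^ 2)]
      refine Finset.sum_congr rfl fun i _ => ?_
      have := mul_phi16 (k := p - 1) (by linarith) (β i)
      rw [sub_add_cancel] at this
      rw [← this, hB i]; ring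
    have h2 := Ex16_holder m hm hpq G (S16 (fun i t => (phi16 (p-1) (β i) / v i ^ 2) * f i t))
    have h3 := vBE16 m hm hm1 (fun i t => (phi16 (p-1) (β i) / v i ^ 2) * f i t)
      (hx0 _) hq1 hq2
    have h4 : ∑ i, ∑ t, m i t * |(phi16 (p-1) (β i) / v i ^ 2) * f i t| ^ q ≤ W := by
      refine Finset.sum_le_sum fun i _ => ?_
      rw [hxr (fun i => phi16 (p-1) (β i) / v i ^ 2) i q (by linarith), abs_div, abs_phi16,
        Real.div_rpow (by positivity) (abs_nonneg _), ← Real.rpow_mul (abs_nonneg _),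
        abs_of_pos (pow_pos (hv i) 2)]
      have : (p - 1) * q = p := by rw [hq]; field_simp
      rw [this, div_mul_eq_mul_div, div_le_iff₀ (Real.rpow_pos_of_pos (pow_pos (hv i) 2) _)]
      exact mul_le_mul_of_nonneg_left (hcq i) (by positivity)
    have h5 : W ≤ (Ex16 m fun ω => |G ω| ^ p) ^ (1 / p) * (2 * W) ^ (1/q) := by
      rw [← h1] at h2
      refine h2.trans (mul_le_mul_of_nonneg_left ?_ (Real.rpow_nonneg (hG0 _ _) _))
      refine Real.rpow_le_rpow (hG0 _ _) ?_ (by positivity)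
      linarith
    have h6 := ww16 hW (hG0 _ _) hpq (by norm_num) h5
    have h7 : (0:ℝ) < 2 ^ (p-1) := by positivity
    refine h6.trans (mul_le_mul ?_ (hG g) (hG0 _ _) (by positivity))
    linarith
  · intro g
    set G : (ι → Fin 3) → ℝ := fun ω => M ω ^ (-(1/p)) * g ω
    have hB : ∀ i, B g i = Ex16 m (fun ω => G ω * f i (ω i)) / v i ^ 2 := fun i => rfl
    set β := B g
    set W := ∑ i, (β i * v i) ^ 2
    have hW : 0 ≤ W := Finset.sum_nonneg fun i _ => by positivity
    have h1 : W = Ex16 m (fun ω => G ω * S16 (fun i t => β i * f i t) ω) := by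
      rw [← hdual G β]
      refine Finset.sum_congr rfl fun i _ => ?_
      have h := hB i
      rw [eq_div_iff (pow_pos (hv i) 2).ne'] at h
      rw [← h]; ring
    have h2 := Ex16_holder m hm Real.HolderConjugate.two_two G (S16 (fun i t => β i * f i t))
    have h3 := vBE16 m hm hm1 (fun i t => β i * f i t) (hx0 _) (r := 2) (by norm_num) le_rfl
    have h4 : ∑ i, ∑ t, m i t * |β i * f i t| ^ (2:ℝ) = W := by
      refine Finset.sum_congr rfl fun i _ => ?_
      rw [← hx2]
      refine Finset.sum_congr rfl fun t _ => ?_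
      rw [Real.rpow_two, sq_abs]
    have h5 : W ≤ (Ex16 m fun ω => |G ω| ^ (2:ℝ)) ^ (1 / (2:ℝ)) * (2 * W) ^ (1/(2:ℝ)) := by
      rw [← h1] at h2
      refine h2.trans (mul_le_mul_of_nonneg_left ?_ (Real.rpow_nonneg (hG0 _ _) _))
      refine Real.rpow_le_rpow (hG0 _ _) ?_ (by positivity)
      linarith
    have h6 := ww16 hW (hG0 _ _) Real.HolderConjugate.two_two (by norm_num) h5
    have h8 : (Ex16 m fun ω => |G ω| ^ (2:ℝ)) ≤ (∑ ω, |g ω| ^ p) ^ (2/p) := by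
      have h9 := Ex16_rpow m hm hm1 (r := p / 2) (by linarith) (fun ω => |G ω| ^ (2:ℝ))
        (fun ω => by positivity)
      have h10 : ∀ ω, (|G ω| ^ (2:ℝ)) ^ (p/2) = |G ω| ^ p := fun ω => by
        rw [← Real.rpow_mul (abs_nonneg _)]; congr 1; ring
      simp_rw [h10] at h9
      have h11 := Real.rpow_le_rpow (Real.rpow_nonneg (hG0 _ _) _) (h9.trans (hG g)) (z := 2/p) (by positivity)
      rw [← Real.rpow_mul (hG0 _ _)] at h11
      have : p / 2 * (2 / p) = 1 := by field_simp
      rwa [this, Real.rpow_one] at h11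
    have h7 : (0:ℝ) < 2 ^ (p-1) := by positivity
    refine h6.trans (mul_le_mul ?_ h8 (hG0 _ _) (by positivity))
    norm_num
    linarith
  · intro a
    ext i
    change Ex16 m (fun ω => (M ω ^ (-(1/p)) * (M ω ^ (1/p) * S16 (fun i t => a i * f i t) ω)) * f i (ω i))
      / v i ^ 2 = a i
    have h1 : Ex16 m (fun ω => (M ω ^ (-(1/p)) * (M ω ^ (1/p) * S16 (fun i t => a i * f i t) ω)) * f i (ω i))
        = Ex16 m (fun ω => f i (ω i) * id (S16 (fun i t => a i * f i t) ω)) := by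
      refine Finset.sum_congr rfl fun ω _ => ?_
      change M ω * ((M ω ^ (-(1/p)) * (M ω ^ (1/p) * S16 (fun i t => a i * f i t) ω)) * f i (ω i))
        = M ω * (f i (ω i) * id (S16 (fun i t => a i * f i t) ω))
      rcases eq_or_lt_of_le (hM ω) with h | h
      · rw [← h, zero_mul, zero_mul]
      · have : M ω ^ (-(1/p)) * M ω ^ (1/p) = 1 := by
          rw [← Real.rpow_add h]; simp
        rw [← mul_assoc (M ω ^ (-(1/p))), this, id]; ring
    rw [h1, Ex16_mulS m hm1 _ (f i) i (hf0 i)]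
    simp only [id, add_sub_cancel_left]
    rw [Ex16_const m hm1, div_eq_iff (pow_pos (hv i) 2).ne', ← hc2]
    simp [m, f, Fin.sum_univ_three]
    ring

/-! Basic facts on `X_{p,w}`. -/

lemma seq_add16 (x y : Xpw p w) [Fact (1 ≤ ENNReal.ofReal p)] : seq (x + y) = seq x + seq y := rfl

lemma seq_smul16 (c : ℝ) (x : Xpw p w) [Fact (1 ≤ ENNReal.ofReal p)] : seq (c • x) = c • seq x := rfl

lemma seq_sub16 (x y : Xpw p w) [Fact (1 ≤ ENNReal.ofReal p)] : seq (x - y) = seq x - seq y := rfl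

lemma pair2_16 (x : Xpw p w) (n : ℕ) : (Xpw.pair x).2 n = w n * seq x n :=
  (show ↥(XpwMod p w) from x).2 n

lemma hasSumP16 (hp : 0 < p) (x : Xpw p w) : HasSum (fun i => |seq x i| ^ p) (nrmP x ^ p) := by
  have e : (ENNReal.ofReal p).toReal = p := ENNReal.toReal_ofReal hp.le
  have h := lp.hasSum_norm (by rw [e]; exact hp) (Xpw.pair x).1
  rw [e] at h
  exact h

lemma hasSum2_16 (x : Xpw p w) : HasSum (fun i => (w i * seq x i) ^ 2) (nrm2 x ^ 2) := by
  have h := lp.hasSum_norm (p := 2) (by norm_num) (Xpw.pair x).2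
  simp only [ENNReal.toReal_ofNat, Real.rpow_two, Real.norm_eq_abs, sq_abs, pair2_16] at h
  exact h

section
variable [Fact (1 ≤ ENNReal.ofReal p)]

lemma norm16 (x : Xpw p w) : ‖x‖ = max (nrmP x) (nrm2 x) := rfl

lemma nrmP_nonneg16 (x : Xpw p w) : 0 ≤ nrmP x := norm_nonneg _
lemma nrm2_nonneg16 (x : Xpw p w) : 0 ≤ nrm2 x := norm_nonneg _
lemma nrmP_le16 (x : Xpw p w) : nrmP x ≤ ‖x‖ := le_max_left _ _
lemma nrm2_le16 (x : Xpw p w) : nrm2 x ≤ ‖x‖ := le_max_right _ _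
lemma nrmP_add16 (x y : Xpw p w) : nrmP (x + y) ≤ nrmP x + nrmP y := norm_add_le _ _
lemma nrm2_add16 (x y : Xpw p w) : nrm2 (x + y) ≤ nrm2 x + nrm2 y := norm_add_le _ _
lemma nrmP_smul16 (c : ℝ) (x : Xpw p w) : nrmP (c • x) = |c| * nrmP x := norm_smul c (Xpw.pair x).1
lemma nrm2_smul16 (c : ℝ) (x : Xpw p w) : nrm2 (c • x) = |c| * nrm2 x := norm_smul c (Xpw.pair x).2
lemma nrm2_sub_le16 (x y : Xpw p w) : nrm2 x ≤ nrm2 (x + y) + nrm2 y := by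
  have h := norm_sub_le (Xpw.pair (x + y)).2 (Xpw.pair y).2
  have e : (Xpw.pair (x + y)).2 - (Xpw.pair y).2 = (Xpw.pair x).2 := by
    change (Xpw.pair x).2 + (Xpw.pair y).2 - (Xpw.pair y).2 = _
    abel
  rw [e] at h
  exact h

lemma ext16 {x y : Xpw p w} (h : seq x = seq y) : x = y := by
  apply Subtype.ext
  apply Prod.ext
  · exact lp.ext h
  · apply lp.ext
    ext n
    have h1 := pair2_16 x n
    have h2 := pair2_16 y n
    rw [h] at h1
    exact h1.trans h2.symm

lemma nrmP_pos16 {x : Xpw p w} (hx : x ≠ 0) : 0 < nrmP x := by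
  rcases eq_or_lt_of_le (nrmP_nonneg16 x) with h | h
  · exfalso; apply hx
    have : (Xpw.pair x).1 = 0 := norm_eq_zero.mp h.symm
    apply ext16
    change ((Xpw.pair x).1 : ℕ → ℝ) = _
    rw [this]; rfl
  · exact h

lemma seq_restrict16 (E : Set ℕ) (x : Xpw p w) : seq (restrict E x) = E.indicator (seq x) := rfl

lemma seq_le16 (hp : 0 < p) (x : Xpw p w) (i : ℕ) : |seq x i| ≤ nrmP x := by
  have h := le_hasSum (hasSumP16 hp x) i (fun j _ => by positivity)
  exact (Real.rpow_le_rpow_iff (abs_nonneg _) (nrmP_nonneg16 x) hp).mp h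

lemma restrict_add16 (E : Set ℕ) (x y : Xpw p w) : restrict E (x + y) = restrict E x + restrict E y := by
  apply ext16
  rw [seq_add16, seq_restrict16, seq_restrict16, seq_restrict16, seq_add16, Set.indicator_add']

lemma restrict_smul16 (E : Set ℕ) (c : ℝ) (x : Xpw p w) : restrict E (c • x) = c • restrict E x := by
  apply ext16
  rw [seq_smul16, seq_restrict16, seq_restrict16, seq_smul16]
  exact Set.indicator_const_smul E c (seq x)

lemma restrict_compl16 (E : Set ℕ) (x : Xpw p w) : restrict Eᶜ x + restrict E x = x := by
  apply ext16
  rw [seq_add16, seq_restrict16, seq_restrict16, Set.indicator_compl_add_self]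

lemma nrm2_restrict_le16 (E : Set ℕ) (x : Xpw p w) : nrm2 (restrict E x) ≤ nrm2 x := by
  have h := hasSum_le (fun i => ?_) (hasSum2_16 (restrict E x)) (hasSum2_16 x)
  · exact (sq_le_sq₀ (nrm2_nonneg16 _) (nrm2_nonneg16 _)).mp h
  · rw [seq_restrict16]
    by_cases hi : i ∈ E
    · rw [Set.indicator_of_mem hi]
    · rw [Set.indicator_of_notMem hi]; simp; positivity

lemma nrmP_restrict_le16 (hp : 0 < p) (E : Set ℕ) (x : Xpw p w) : nrmP (restrict E x) ≤ nrmP x := by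
  have h := hasSum_le (fun i => ?_) (hasSumP16 hp (restrict E x)) (hasSumP16 hp x)
  · exact (Real.rpow_le_rpow_iff (nrmP_nonneg16 _) (nrmP_nonneg16 _) hp).mp h
  · rw [seq_restrict16]
    by_cases hi : i ∈ E
    · rw [Set.indicator_of_mem hi]
    · rw [Set.indicator_of_notMem hi]; simp [Real.zero_rpow hp.ne']; positivity

/-- The tail operator. -/
def tail16 (N : ℕ) (x : Xpw p w) : Xpw p w := restrict {i | N ≤ i} x

lemma tendsto_tail_aux16 {f : ℕ → ℝ} {a : ℝ} (hf : HasSum f a) {η : ℝ} (hη : 0 < η) (N : ℕ) :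
    ∃ M, N ≤ M ∧ ∀ M' ≥ M, ∀ b, HasSum ({i | M' ≤ i}.indicator f) b → b ≤ η := by
  have h1 := hf.tendsto_sum_nat
  have h2 := (h1.eventually (lt_mem_nhds (show a - η < a by linarith)))
  obtain ⟨M, hM⟩ := Filter.eventually_atTop.mp h2
  refine ⟨max M N, le_max_right _ _, fun M' hM' b hb => ?_⟩
  have h3 := hM M' (le_trans (le_max_left _ _) hM')
  have h4 : HasSum ((↑(Finset.range M') : Set ℕ).indicator f) (∑ i ∈ Finset.range M', f i) :=
    hasSum_subtype_iff_indicator.mp (Finset.hasSum _ _)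
  have h5 := hb.add h4
  have h6 : (fun i => {i | M' ≤ i}.indicator f i + (↑(Finset.range M') : Set ℕ).indicator f i) = f := by
    ext i
    by_cases hi : M' ≤ i
    · simp [Set.indicator, hi, not_lt.mpr hi]
    · simp [Set.indicator, hi, not_le.mp hi]
  rw [h6] at h5
  have := h5.unique hf
  linarith

lemma tail_small2_16 (x : Xpw p w) {η : ℝ} (hη : 0 < η) (N : ℕ) :
    ∃ M, N ≤ M ∧ ∀ M' ≥ M, nrm2 (tail16 M' x) ≤ η := by
  obtain ⟨M, hM, h⟩ := tendsto_tail_aux16 (hasSum2_16 x) (pow_pos hη 2) N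
  refine ⟨M, hM, fun M' hM' => ?_⟩
  have h2 := h M' hM' (nrm2 (tail16 M' x) ^ 2) ?_
  · exact (sq_le_sq₀ (nrm2_nonneg16 _) hη.le).mp h2
  · convert hasSum2_16 (tail16 M' x) using 1
    ext i
    simp only [tail16, seq_restrict16, Set.indicator]
    split_ifs <;> simp

lemma tail_smallP16 (hp : 0 < p) (x : Xpw p w) {η : ℝ} (hη : 0 < η) (N : ℕ) :
    ∃ M, N ≤ M ∧ ∀ M' ≥ M, nrmP (tail16 M' x) ≤ η := by
  obtain ⟨M, hM, h⟩ := tendsto_tail_aux16 (hasSumP16 hp x) (Real.rpow_pos_of_pos hη p) N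
  refine ⟨M, hM, fun M' hM' => ?_⟩
  have h2 := h M' hM' (nrmP (tail16 M' x) ^ p) ?_
  · exact (Real.rpow_le_rpow_iff (nrmP_nonneg16 _) hη.le hp).mp h2
  · convert hasSumP16 hp (tail16 M' x) using 1
    ext i
    simp only [tail16, seq_restrict16, Set.indicator]
    split_ifs <;> simp [Real.zero_rpow hp.ne']

/-- Disjointness formulas. -/
lemma disjP16 (hp : 0 < p) (x y : Xpw p w) (h : ∀ i, seq x i = 0 ∨ seq y i = 0) :
    nrmP (x + y) ^ p = nrmP x ^ p + nrmP y ^ p := by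
  refine HasSum.unique (hasSumP16 hp (x + y)) ?_
  convert (hasSumP16 hp x).add (hasSumP16 hp y) using 1
  ext i
  rw [seq_add16, Pi.add_apply]
  rcases h i with h | h <;> simp [h, Real.zero_rpow hp.ne']

lemma disj2_16 (x y : Xpw p w) (h : ∀ i, seq x i = 0 ∨ seq y i = 0) :
    nrm2 (x + y) ^ 2 = nrm2 x ^ 2 + nrm2 y ^ 2 := by
  refine HasSum.unique (hasSum2_16 (x + y)) ?_
  convert (hasSum2_16 x).add (hasSum2_16 y) using 1
  ext i
  rw [seq_add16, Pi.add_apply]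
  rcases h i with h | h <;> simp [h]

/-- One improvement step. -/
lemma step16 (hp : 2 < p) (Y : Submodule ℝ (Xpw p w)) {θ : ℝ} (hθ : 2 ^ (1/p) < √2 * θ)
    {c : ℝ} (hc : 0 < c) (N : ℕ)
    (h : ∀ y ∈ Y, (∀ i < N, seq y i = 0) → nrm2 y ≤ c * nrmP y) :
    ∃ N', ∀ y ∈ Y, (∀ i < N', seq y i = 0) → nrm2 y ≤ θ * c * nrmP y := by
  by_contra! hcon
  have hp0 : 0 < p := by linarith
  have hs2 : 0 < √2 := by positivity
  have hθ0 : 0 < θ := by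
    have : (0:ℝ) < 2 ^ (1/p) := by positivity
    have h3 := this.trans hθ
    exact (pos_iff_pos_of_mul_pos h3).mp hs2
  have key : ∀ N', ∃ y ∈ Y, (∀ i < N', seq y i = 0) ∧ nrmP y = 1 ∧ θ * c < nrm2 y := by
    intro N'
    obtain ⟨y, hy, hy0, hy1⟩ := hcon N'
    have hne : y ≠ 0 := by
      rintro rfl
      have e2 : nrm2 (0 : Xpw p w) = 0 := norm_zero
      have eP : nrmP (0 : Xpw p w) = 0 := norm_zero
      rw [e2, eP] at hy1; simp at hy1
    have hpos := nrmP_pos16 hne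
    refine ⟨(nrmP y)⁻¹ • y, Y.smul_mem _ hy, fun i hi => ?_, ?_, ?_⟩
    · rw [seq_smul16, Pi.smul_apply, hy0 i hi, smul_zero]
    · rw [nrmP_smul16, abs_of_pos (inv_pos.mpr hpos), inv_mul_cancel₀ hpos.ne']
    · rw [nrm2_smul16, abs_of_pos (inv_pos.mpr hpos), inv_mul_eq_div, lt_div_iff₀ hpos]
      exact hy1
  have main : ∀ δ : ℝ, 0 < δ → δ ≤ θ * c → √2 * (θ * c - δ) - δ ≤ c * (2 ^ (1/p) + δ) := by
    intro δ hδ hδ'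
    obtain ⟨y, hy, hy0, hyP, hy2⟩ := key N
    obtain ⟨M1, hM1, hM1'⟩ := tail_smallP16 hp0 y hδ N
    obtain ⟨M2, hM2, hM2'⟩ := tail_small2_16 y hδ M1
    obtain ⟨z, hz, hz0, hzP, hz2⟩ := key M2
    have hu := h (y + z) (Y.add_mem hy hz) (fun i hi => by
      rw [seq_add16, Pi.add_apply, hy0 i hi, hz0 i (by omega), add_zero])
    set t := tail16 M2 y
    set u := restrict {i | M2 ≤ i}ᶜ y
    have hut : u + t = y := restrict_compl16 _ _
    have ht2 : nrm2 t ≤ δ := hM2' _ le_rfl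
    have htP : nrmP t ≤ δ := hM1' _ hM2
    have hd : ∀ i, seq u i = 0 ∨ seq z i = 0 := by
      intro i
      by_cases hi : M2 ≤ i
      · left; simp [u, seq_restrict16, Set.indicator, hi]
      · right; exact hz0 i (by omega)
    have hyz : y + z = (u + z) + t := by rw [← hut]; abel
    have h1 : nrmP (u + z) ≤ 2 ^ (1/p) := by
      have h1 := disjP16 hp0 u z hd
      have h2 : nrmP u ≤ 1 := hyP ▸ nrmP_restrict_le16 hp0 _ y
      have h3 : nrmP u ^ p ≤ 1 := Real.rpow_le_one (nrmP_nonneg16 u) h2 hp0.le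
      rw [hzP, Real.one_rpow] at h1
      rw [one_div, Real.le_rpow_inv_iff_of_pos (nrmP_nonneg16 _) (by norm_num) hp0]
      linarith
    have h2 : √2 * (θ * c - δ) ≤ nrm2 (u + z) := by
      have h1 := disj2_16 u z hd
      have h2 : θ * c - δ ≤ nrm2 u := by
        have := nrm2_add16 u t
        rw [hut] at this; linarith
      have h3 : (θ * c - δ) ^ 2 ≤ nrm2 u ^ 2 := pow_le_pow_left₀ (by linarith) h2 2
      have h4 : (θ * c - δ) ^ 2 ≤ nrm2 z ^ 2 := pow_le_pow_left₀ (by linarith) (by linarith) 2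
      refine (sq_le_sq₀ (mul_nonneg hs2.le (by linarith)) (nrm2_nonneg16 _)).mp ?_
      rw [mul_pow, Real.sq_sqrt (by norm_num), h1]; linarith
    have h3 := nrm2_sub_le16 (u + z) t
    have h4 := nrmP_add16 (u + z) t
    rw [← hyz] at h3 h4
    have h5 : c * nrmP (y + z) ≤ c * (2 ^ (1/p) + δ) :=
      mul_le_mul_of_nonneg_left (by linarith) hc.le
    linarith
  have hlim : √2 * (θ * c) ≤ c * 2 ^ (1/p) := by
    refine le_of_forall_pos_le_add fun e he => ?_
    have hk : 0 < √2 + 1 + c := by positivity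
    have hδ : 0 < min (θ * c) (e / (√2 + 1 + c)) := lt_min (by positivity) (by positivity)
    have h1 := main _ hδ (min_le_left _ _)
    have h2 : min (θ * c) (e / (√2 + 1 + c)) * (√2 + 1 + c) ≤ e := by
      rw [← le_div_iff₀ hk]; exact min_le_right _ _
    linarith
  nlinarith
end

section
variable [Fact (1 ≤ ENNReal.ofReal p)]

/-- Vectors of `Y` supported far out have arbitrarily small ratio. -/
lemma far16 (hp : 2 < p) (Y : Submodule ℝ (Xpw p w)) {c : ℝ} (hc : 0 < c)
    (h : ∀ y ∈ Y, nrm2 y ≤ c * nrmP y) {η : ℝ} (hη : 0 < η) :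
    ∃ N, ∀ y ∈ Y, (∀ i < N, seq y i = 0) → nrm2 y ≤ η * nrmP y := by
  have hs : (2:ℝ) ^ (1/p) < √2 := by
    rw [Real.sqrt_eq_rpow]
    refine Real.rpow_lt_rpow_of_exponent_lt (by norm_num) ?_
    rw [div_lt_div_iff₀ (by linarith) (by norm_num)]; linarith
  have hs2 : 0 < √2 := by positivity
  obtain ⟨θ, hθ1, hθ2⟩ : ∃ θ, (2:ℝ) ^ (1/p) / √2 < θ ∧ θ < 1 :=
    exists_between ((div_lt_one hs2).mpr hs)
  have hθ0 : 0 < θ := lt_trans (by positivity) hθ1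
  have hθ : (2:ℝ) ^ (1/p) < √2 * θ := by
    rw [div_lt_iff₀ hs2] at hθ1; linarith
  have it : ∀ k : ℕ, ∃ N, ∀ y ∈ Y, (∀ i < N, seq y i = 0) → nrm2 y ≤ θ ^ k * c * nrmP y := by
    intro k
    induction k with
    | zero => exact ⟨0, fun y hy _ => by simpa using h y hy⟩
    | succ k ih =>
      obtain ⟨N, hN⟩ := ih
      obtain ⟨N', hN'⟩ := step16 hp Y hθ (by positivity) N hN
      refine ⟨N', fun y hy h0 => (hN' y hy h0).trans (le_of_eq ?_)⟩
      ring
  obtain ⟨k, hk⟩ := exists_pow_lt_of_lt_one (show 0 < η / c by positivity) hθ2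
  obtain ⟨N, hN⟩ := it k
  refine ⟨N, fun y hy h0 => (hN y hy h0).trans ?_⟩
  rw [lt_div_iff₀ hc] at hk
  exact mul_le_mul_of_nonneg_right hk.le (nrmP_nonneg16 y)

/-- Uniform smallness of the tails of the unit ball of `Y`. -/
lemma unif16 (hp : 2 < p) (Y : Submodule ℝ (Xpw p w)) {c : ℝ} (hc : 0 < c)
    (h : ∀ y ∈ Y, nrm2 y ≤ c * nrmP y) {η : ℝ} (hη : 0 < η) :
    ∃ M, ∀ y ∈ Y, nrm2 (tail16 M y) ≤ η * ‖y‖ := by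
  have hp0 : 0 < p := by linarith
  obtain ⟨e, he0, he1, he⟩ : ∃ e : ℝ, 0 < e ∧ e ≤ 1 ∧ 5 * e ≤ η :=
    ⟨min 1 (η / 5), lt_min one_pos (by positivity), min_le_left _ _, by
      have := min_le_right 1 (η / 5); linarith⟩
  obtain ⟨N, hN⟩ := far16 hp Y hc h he0
  let ρ : ↥Y →ₗ[ℝ] (Fin N → ℝ) :=
    { toFun := fun y i => seq (y : Xpw p w) i
      map_add' := fun _ _ => rfl
      map_smul' := fun _ _ => rfl }
  obtain ⟨σ, hσ⟩ := LinearMap.exists_rightInverse_of_surjective ρ.rangeRestrict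
    (LinearMap.range_eq_top.mpr ρ.surjective_rangeRestrict)
  have hσ' : ∀ r, ρ (σ r) = r := fun r => by
    have := congrArg Subtype.val (LinearMap.congr_fun hσ r)
    simpa using this
  obtain ⟨K, hK0, hK⟩ : ∃ K : ℝ, 0 < K ∧ ∀ r, ‖σ r‖ ≤ K * ‖r‖ := by
    obtain ⟨K, hK0, hK⟩ := (LinearMap.toContinuousLinearMap σ).bound
    exact ⟨K, hK0, hK⟩
  have hρ : ∀ y, ‖ρ y‖ ≤ ‖y‖ := fun y => by
    rw [pi_norm_le_iff_of_nonneg (norm_nonneg _)]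
    exact fun i => (seq_le16 hp0 (y : Xpw p w) i).trans (nrmP_le16 _)
  have htb : TotallyBounded (ρ '' Metric.closedBall 0 1) := by
    refine (isCompact_closedBall (0 : Fin N → ℝ) 1).totallyBounded.subset ?_
    rintro _ ⟨y, hy, rfl⟩
    rw [mem_closedBall_zero_iff] at hy ⊢
    exact (hρ y).trans hy
  obtain ⟨t, hts, htf, hcov⟩ := Metric.finite_approx_of_totallyBounded htb (e / K) (by positivity)
  have hsel : ∀ r : Fin N → ℝ, ∃ y : ↥Y, r ∈ t → ‖y‖ ≤ 1 ∧ ρ y = r := by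
    intro r
    by_cases hr : r ∈ t
    · obtain ⟨y, hy, hyr⟩ := hts hr
      exact ⟨y, fun _ => ⟨mem_closedBall_zero_iff.mp hy, hyr⟩⟩
    · exact ⟨0, fun h => absurd h hr⟩
  choose g hg using hsel
  have hM : ∀ r : Fin N → ℝ, ∃ M, ∀ M' ≥ M, nrm2 (tail16 M' (g r : Xpw p w)) ≤ e := fun r => by
    obtain ⟨M, -, hM⟩ := tail_small2_16 (g r : Xpw p w) he0 0
    exact ⟨M, hM⟩
  choose m hm using hM
  obtain ⟨M, hMt⟩ : ∃ M, ∀ r ∈ t, m r ≤ M :=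
    ⟨htf.toFinset.sup m, fun r hr => Finset.le_sup (f := m) (htf.mem_toFinset.mpr hr)⟩
  have unit : ∀ y : ↥Y, ‖y‖ ≤ 1 → nrm2 (tail16 M (y : Xpw p w)) ≤ η := by
    intro y hy
    have hy' := hcov ⟨y, mem_closedBall_zero_iff.mpr hy, rfl⟩
    simp only [Set.mem_iUnion, Metric.mem_ball, exists_prop] at hy'
    obtain ⟨r, hr, hd⟩ := hy'
    obtain ⟨hg1, hg2⟩ := hg r hr
    set d : ↥Y := y - g r
    have hρd : ‖ρ.rangeRestrict d‖ ≤ e / K := by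
      change ‖ρ (y - g r)‖ ≤ _
      rw [map_sub, hg2, ← dist_eq_norm]; exact hd.le
    set q : ↥Y := σ (ρ.rangeRestrict d)
    have hq : ‖q‖ ≤ e := by
      refine (hK _).trans ?_
      calc _ ≤ K * (e / K) := mul_le_mul_of_nonneg_left hρd hK0.le
        _ = e := by field_simp
    set z : ↥Y := d - q
    have hz0 : ∀ i < N, seq (z : Xpw p w) i = 0 := by
      intro i hi
      have : ρ z = 0 := by
        change ρ (d - q) = 0
        rw [map_sub, hσ']; simp
      exact congrFun this ⟨i, hi⟩
    have hz := hN z z.2 hz0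
    have hzn : ‖z‖ ≤ 3 := by
      have h1 := norm_sub_le d q
      have h2 := norm_sub_le y (g r)
      change ‖z‖ ≤ _ at h1
      change ‖d‖ ≤ _ at h2
      linarith
    have hz3 : nrm2 (z : Xpw p w) ≤ 3 * e := by
      have : nrmP (z : Xpw p w) ≤ 3 := (nrmP_le16 _).trans hzn
      nlinarith
    have hdec : (y : Xpw p w) = (g r : Xpw p w) + ((q : Xpw p w) + (z : Xpw p w)) := by
      have : y = g r + (q + z) := by simp [z, d]
      rw [this]; rfl
    have t1 : nrm2 (tail16 M (g r : Xpw p w)) ≤ e := hm r M (hMt r hr)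
    have t2 : nrm2 (tail16 M (q : Xpw p w)) ≤ e :=
      (nrm2_restrict_le16 _ _).trans ((nrm2_le16 _).trans hq)
    have t3 : nrm2 (tail16 M (z : Xpw p w)) ≤ 3 * e := (nrm2_restrict_le16 _ _).trans hz3
    rw [hdec]
    unfold tail16 at *
    rw [restrict_add16, restrict_add16]
    refine (nrm2_add16 _ _).trans ?_
    have := nrm2_add16 (restrict {i | M ≤ i} (q : Xpw p w)) (restrict {i | M ≤ i} (z : Xpw p w))
    linarith
  refine ⟨M, fun y hy => ?_⟩
  rcases eq_or_ne y 0 with rfl | hne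
  · have : nrm2 (0 : Xpw p w) = 0 := norm_zero
    have h2 := nrm2_restrict_le16 {i | M ≤ i} (0 : Xpw p w)
    rw [norm_zero, mul_zero]
    exact h2.trans this.le
  · have hn : 0 < ‖y‖ := norm_pos_iff.mpr hne
    have h1 := unit (‖y‖⁻¹ • ⟨y, hy⟩) (by
      rw [norm_smul, norm_inv, norm_norm]
      change ‖y‖⁻¹ * ‖y‖ ≤ 1
      rw [inv_mul_cancel₀ hn.ne'])
    change nrm2 (restrict _ (‖y‖⁻¹ • y)) ≤ η at h1
    rw [restrict_smul16, nrm2_smul16, abs_of_pos (inv_pos.mpr hn), inv_mul_eq_div,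
      div_le_iff₀ hn] at h1
    exact h1

/-- Decomposition of the index set into finite blocks. -/
lemma blocks16 (hp : 2 < p) (Y : Submodule ℝ (Xpw p w)) {c : ℝ} (hc : 0 < c)
    (h : ∀ y ∈ Y, nrm2 y ≤ c * nrmP y) :
    ∃ κ : ℕ → ℕ, (∀ k, {i | κ i = k}.Finite) ∧
      ∀ k, ∀ y ∈ Y, ∀ s : Finset ℕ, (∀ i ∈ s, κ i = k) →
        ∑ i ∈ s, (w i * seq y i) ^ 2 ≤ ((1/4) ^ k * ‖y‖) ^ 2 := by
  choose M hM using fun k : ℕ => unif16 hp Y hc h (η := (1/4 : ℝ) ^ k) (by positivity)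
  classical
  refine ⟨fun i => Nat.findGreatest (fun k => M k ≤ i) i, fun k => ?_, fun k y hy s hs => ?_⟩
  · refine (Set.finite_lt_nat (max (M (k+1)) (k+1))).subset ?_
    intro i hi
    simp only [Set.mem_setOf_eq] at hi ⊢
    by_contra! hcon
    have := Nat.le_findGreatest (P := fun k => M k ≤ i) (n := i) (m := k + 1)
      (le_trans (le_max_right _ _) hcon) (le_trans (le_max_left _ _) hcon)
    omega
  · have hkey : ∀ E : Set ℕ, (∀ i ∈ s, i ∈ E) → ∑ i ∈ s, (w i * seq y i) ^ 2 ≤ nrm2 (restrict E y) ^ 2 := by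
      intro E hE
      refine le_trans (le_of_eq ?_) (sum_le_hasSum s (fun i _ => by positivity) (hasSum2_16 (restrict E y)))
      refine Finset.sum_congr rfl fun i hi => ?_
      rw [seq_restrict16, Set.indicator_of_mem (hE i hi)]
    rcases Nat.eq_zero_or_pos k with rfl | hk
    · refine (hkey Set.univ (fun i _ => Set.mem_univ i)).trans ?_
      refine pow_le_pow_left₀ (nrm2_nonneg16 _) ?_ 2
      simpa using (nrm2_restrict_le16 _ y).trans (nrm2_le16 y)
    · refine (hkey {i | M k ≤ i} fun i hi => ?_).trans (pow_le_pow_left₀ (nrm2_nonneg16 _) (hM k y hy) 2)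
      exact Nat.findGreatest_of_ne_zero (P := fun k => M k ≤ i) (hs i hi) hk.ne'
end

section
variable [Fact (1 ≤ ENNReal.ofReal p)]

lemma ofSeqP16 (hp : 0 < p) {F : Type*} [NormedAddCommGroup F] [NormedSpace ℝ F]
    (L : F →ₗ[ℝ] (ℕ → ℝ)) (C : ℝ) (hC : 0 ≤ C)
    (h : ∀ g (s : Finset ℕ), ∑ i ∈ s, |L g i| ^ p ≤ (C * ‖g‖) ^ p) :
    ∃ T : F →L[ℝ] SeqP p, ∀ g i, T g i = L g i := by
  have e : (ENNReal.ofReal p).toReal = p := ENNReal.toReal_ofReal hp.le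
  have hmem : ∀ g, Memℓp (L g) (ENNReal.ofReal p) := fun g =>
    memℓp_gen' (C := (C * ‖g‖) ^ p) fun s => by rw [e]; exact h g s
  let T0 : F →ₗ[ℝ] SeqP p :=
    { toFun := fun g => ⟨L g, hmem g⟩
      map_add' := fun a b => Subtype.ext (L.map_add a b)
      map_smul' := fun c a => Subtype.ext (L.map_smul c a) }
  refine ⟨T0.mkContinuous C fun g => ?_, fun g i => rfl⟩
  refine lp.norm_le_of_forall_sum_le (by rw [e]; exact hp) (by positivity) fun s => ?_
  rw [e]; exact h g s

lemma ofSeqX16 (hp : 0 < p) {F : Type*} [NormedAddCommGroup F] [NormedSpace ℝ F]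
    (L : F →ₗ[ℝ] (ℕ → ℝ)) (C : ℝ) (hC : 0 ≤ C)
    (h : ∀ g (s : Finset ℕ), ∑ i ∈ s, |L g i| ^ p ≤ (C * ‖g‖) ^ p)
    (h2 : ∀ g (s : Finset ℕ), ∑ i ∈ s, (w i * L g i) ^ 2 ≤ (C * ‖g‖) ^ 2) :
    ∃ T : F →L[ℝ] Xpw p w, ∀ g, seq (T g) = L g := by
  have e : (ENNReal.ofReal p).toReal = p := ENNReal.toReal_ofReal hp.le
  have hmem : ∀ g, Memℓp (L g) (ENNReal.ofReal p) := fun g =>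
    memℓp_gen' (C := (C * ‖g‖) ^ p) fun s => by rw [e]; exact h g s
  have h2' : ∀ g (s : Finset ℕ), ∑ i ∈ s, ‖w i * L g i‖ ^ (2 : ℝ≥0∞).toReal ≤
      (C * ‖g‖) ^ (2 : ℝ≥0∞).toReal := by
    intro g s
    simpa only [ENNReal.toReal_ofNat, Real.rpow_two, Real.norm_eq_abs, sq_abs] using h2 g s
  have hmem2 : ∀ g, Memℓp (fun i => w i * L g i) 2 := fun g => memℓp_gen' (h2' g)
  let T0 : F →ₗ[ℝ] Xpw p w :=
    { toFun := fun g => show ↥(XpwMod p w) from ⟨(⟨L g, hmem g⟩, ⟨_, hmem2 g⟩), fun n => rfl⟩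
      map_add' := fun a b => ext16 (L.map_add a b)
      map_smul' := fun c a => ext16 (L.map_smul c a) }
  refine ⟨T0.mkContinuous C fun g => ?_, fun g => rfl⟩
  refine max_le ?_ ?_
  · refine lp.norm_le_of_forall_sum_le (by rw [e]; exact hp) (by positivity) fun s => ?_
    rw [e]; exact h g s
  · exact lp.norm_le_of_forall_sum_le (by norm_num) (by positivity) fun s => h2' g s

lemma fin_sigma16 {β : ℕ → Type} [∀ k, Fintype (β k)] (f : (Σ k, β k) → ℝ) (hf : ∀ x, 0 ≤ f x)
    (s : Finset (Σ k, β k)) : ∃ n, ∑ x ∈ s, f x ≤ ∑ k ∈ Finset.range n, ∑ b, f ⟨k, b⟩ := by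
  classical
  refine ⟨(s.image Sigma.fst).sup id + 1, ?_⟩
  rw [← Finset.sum_sigma (Finset.range _) (fun _ => Finset.univ) f]
  refine Finset.sum_le_sum_of_subset_of_nonneg (fun x hx => ?_) (fun x _ _ => hf x)
  simp only [Finset.mem_sigma, Finset.mem_range, Finset.mem_univ, and_true]
  exact Nat.lt_succ_of_le (Finset.le_sup (f := id) (Finset.mem_image_of_mem _ hx))

lemma sigma_le16 {β : ℕ → Type} [∀ k, Fintype (β k)] (e : (Σ k, β k) ≃ ℕ) (f : ℕ → ℝ)
    (hf : ∀ x, 0 ≤ f x) {a : ℝ} (ha : HasSum f a) (n : ℕ) :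
    ∑ k ∈ Finset.range n, ∑ b, f (e ⟨k, b⟩) ≤ a := by
  rw [← Finset.sum_sigma (Finset.range n) (fun _ => Finset.univ) (fun x => f (e x))]
  exact sum_le_hasSum _ (fun x _ => hf _) ((Equiv.hasSum_iff e).mpr ha)

lemma geom16 (n : ℕ) : ∑ k ∈ Finset.range n, ((1:ℝ)/2) ^ k ≤ 2 := by
  have := sum_le_hasSum (Finset.range n) (fun i _ => by positivity) hasSum_geometric_two
  exact this

set_option maxHeartbeats 1000000 in
lemma Ypart16 (hp : 2 < p) (hw : ∀ n, 0 < w n) (Y : Submodule ℝ (Xpw p w))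
    (κ : ℕ → ℕ) (hfin : ∀ k, {i | κ i = k}.Finite)
    (hκ : ∀ k, ∀ y ∈ Y, ∀ s : Finset ℕ, (∀ i ∈ s, κ i = k) →
        ∑ i ∈ s, (w i * seq y i) ^ 2 ≤ ((1/4) ^ k * ‖y‖) ^ 2) :
    ∃ (A : ↥Y →L[ℝ] SeqP p) (B : SeqP p →L[ℝ] Xpw p w), ∀ y : ↥Y, B (A y) = y := by
  classical
  have hp0 : 0 < p := by linarith
  obtain ⟨C, hC, hblock⟩ := block16 hp
  haveI : ∀ k, Fintype {i // κ i = k} := fun k => (hfin k).fintype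
  choose A B hA hB hB2 hBA using fun k : ℕ => hblock {i // κ i = k} (fun i => 2 ^ k * w i)
    (fun i => mul_pos (by positivity) (hw i))
  let β : ℕ → Type := fun k => {i // κ i = k} → Fin 3
  letI : ∀ k, Fintype (β k) := fun k => inferInstanceAs (Fintype ({i // κ i = k} → Fin 3))
  have : Infinite (Σ k, β k) :=
    Infinite.of_injective (fun k : ℕ => (⟨k, fun _ => 0⟩ : Σ k, β k)) fun a b h => congrArg Sigma.fst h
  obtain ⟨e⟩ : Nonempty ((Σ k, β k) ≃ ℕ) := nonempty_equiv_of_countable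
  let e' : (Σ k, {i // κ i = k}) ≃ ℕ := Equiv.sigmaFiberEquiv κ
  -- sums over ℕ are dominated by sums over blocks
  have hdom : ∀ (f : ℕ → ℝ) (_ : ∀ i, 0 ≤ f i) (s : Finset ℕ), ∃ n, ∑ i ∈ s, f i ≤
      ∑ k ∈ Finset.range n, ∑ i : {i // κ i = k}, f i := by
    intro f hf s
    obtain ⟨n, hn⟩ := fin_sigma16 (fun x => f (e' x)) (fun x => hf _) (s.map e'.symm.toEmbedding)
    refine ⟨n, le_trans (le_of_eq ?_) hn⟩
    simp
  let A0 : ↥Y →ₗ[ℝ] (ℕ → ℝ) :=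
    { toFun := fun y n => A (e.symm n).1 (fun i => seq (y : Xpw p w) i) (e.symm n).2
      map_add' := by
        intro x y; ext n
        exact congrFun ((A (e.symm n).1).map_add (fun i => seq (x : Xpw p w) i) (fun i => seq (y : Xpw p w) i)) _
      map_smul' := by
        intro c x; ext n
        exact congrFun ((A (e.symm n).1).map_smul c (fun i => seq (x : Xpw p w) i)) _ }
  let B0 : SeqP p →ₗ[ℝ] (ℕ → ℝ) :=
    { toFun := fun g i => B (κ i) (fun ω => g (e ⟨κ i, ω⟩)) ⟨i, rfl⟩
      map_add' := by
        intro x y; ext i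
        exact congrFun ((B (κ i)).map_add (fun ω => x (e ⟨κ i, ω⟩)) (fun ω => y (e ⟨κ i, ω⟩))) _
      map_smul' := by
        intro c x; ext i
        exact congrFun ((B (κ i)).map_smul c (fun ω => x (e ⟨κ i, ω⟩))) _ }
  have hB0 : ∀ g k (i : {i // κ i = k}), B0 g i = B k (fun ω => g (e ⟨k, ω⟩)) i := by
    rintro g k ⟨i, rfl⟩; rfl
  have hgsum : ∀ g : SeqP p, HasSum (fun i => |g i| ^ p) (‖g‖ ^ p) := by
    intro g
    have e1 : (ENNReal.ofReal p).toReal = p := ENNReal.toReal_ofReal hp0.le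
    have h := lp.hasSum_norm (by rw [e1]; exact hp0) g
    rw [e1] at h; exact h
  obtain ⟨A1, hA1⟩ := ofSeqP16 hp0 A0 ((3 * C) ^ (1/p)) (by positivity) (by
    intro y s
    obtain ⟨n, hn⟩ := fin_sigma16 (fun x : Σ k, β k => |A0 y (e x)| ^ p) (fun x => by positivity)
      (s.map e.symm.toEmbedding)
    have e1 : ∑ x ∈ s.map e.symm.toEmbedding, |A0 y (e x)| ^ p = ∑ i ∈ s, |A0 y i| ^ p := by simp
    rw [e1] at hn
    refine hn.trans ?_
    have e2 : ∀ k (b : β k), A0 y (e ⟨k, b⟩) = A k (fun i => seq (y : Xpw p w) i) b := by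
      intro k b
      change A (e.symm (e ⟨k, b⟩)).1 _ (e.symm (e ⟨k, b⟩)).2 = _
      rw [Equiv.symm_apply_apply]
    simp_rw [e2]
    have e3 : ∀ k, (∑ i : {i // κ i = k}, (seq (y : Xpw p w) i * (2 ^ k * w i)) ^ 2) ^ (p/2) ≤
        (1/2) ^ k * ‖y‖ ^ p := by
      intro k
      have h1 := hκ k y y.2 (Finset.univ.map (Function.Embedding.subtype (fun i => κ i = k))) (by simp)
      simp only [Finset.sum_map, Function.Embedding.subtype_apply] at h1
      have h2 : ∑ i : {i // κ i = k}, (seq (y : Xpw p w) i * (2 ^ k * w i)) ^ 2 ≤ ((1/2) ^ k * ‖y‖) ^ 2 := by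
        calc _ = (2 ^ k) ^ 2 * ∑ i : {i // κ i = k}, (w i * seq (y : Xpw p w) i) ^ 2 := by
              rw [Finset.mul_sum]; exact Finset.sum_congr rfl fun i _ => by ring
          _ ≤ (2 ^ k) ^ 2 * ((1/4) ^ k * ‖y‖) ^ 2 := mul_le_mul_of_nonneg_left h1 (by positivity)
          _ = ((2 * (1/4)) ^ k * ‖y‖) ^ 2 := by rw [mul_pow (2:ℝ)]; ring
          _ = _ := by norm_num
      have h3 := Real.rpow_le_rpow (Finset.sum_nonneg fun i _ => by positivity) h2 (z := p/2) (by linarith)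
      refine h3.trans ?_
      rw [← Real.rpow_natCast, ← Real.rpow_mul (by positivity)]
      have : ((2:ℕ):ℝ) * (p/2) = p := by push_cast; ring
      rw [this, Real.mul_rpow (by positivity) (norm_nonneg _)]
      refine mul_le_mul_of_nonneg_right ?_ (by positivity)
      exact Real.rpow_le_self_of_le_one (by positivity) (pow_le_one₀ (by norm_num) (by norm_num)) (by linarith)
    have e4 : ∑ k ∈ Finset.range n, ∑ i : {i // κ i = k}, |seq (y : Xpw p w) i| ^ p ≤ ‖y‖ ^ p := by
      refine (sigma_le16 e' _ (fun i => by positivity) (hasSumP16 hp0 (y : Xpw p w)) n).trans ?_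
      exact Real.rpow_le_rpow (nrmP_nonneg16 _) (nrmP_le16 _) hp0.le
    have e5 : ((3 * C) ^ (1/p) * ‖y‖) ^ p = 3 * C * ‖y‖ ^ p := by
      rw [Real.mul_rpow (by positivity) (norm_nonneg _), ← Real.rpow_mul (by positivity)]
      have : 1/p * p = 1 := by field_simp
      rw [this, Real.rpow_one]
    rw [e5]
    have hyp : 0 ≤ ‖y‖ ^ p := by positivity
    calc _ ≤ ∑ k ∈ Finset.range n, C * (∑ i : {i // κ i = k}, |seq (y : Xpw p w) i| ^ p + (1/2) ^ k * ‖y‖ ^ p) := by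
          refine Finset.sum_le_sum fun k _ => (hA k _).trans (mul_le_mul_of_nonneg_left ?_ hC.le)
          exact add_le_add_right (e3 k) _
      _ = C * (∑ k ∈ Finset.range n, ∑ i : {i // κ i = k}, |seq (y : Xpw p w) i| ^ p +
            (∑ k ∈ Finset.range n, (1/2) ^ k) * ‖y‖ ^ p) := by
          rw [← Finset.mul_sum, Finset.sum_add_distrib, Finset.sum_mul]
      _ ≤ C * (‖y‖ ^ p + 2 * ‖y‖ ^ p) := by
          refine mul_le_mul_of_nonneg_left (add_le_add e4 ?_) hC.le
          exact mul_le_mul_of_nonneg_right (geom16 n) hyp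
      _ = _ := by ring)
  obtain ⟨B1, hB1⟩ := ofSeqX16 (w := w) hp0 B0 (max (C ^ (1/p)) (√(2 * C))) (by positivity) (by
    intro g s
    obtain ⟨n, hn⟩ := hdom (fun i => |B0 g i| ^ p) (fun i => by positivity) s
    refine hn.trans ?_
    have e5 : (C ^ (1/p) * ‖g‖) ^ p = C * ‖g‖ ^ p := by
      rw [Real.mul_rpow (by positivity) (norm_nonneg _), ← Real.rpow_mul (by positivity)]
      have : 1/p * p = 1 := by field_simp
      rw [this, Real.rpow_one]
    refine le_trans ?_ (Real.rpow_le_rpow (by positivity)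
      (mul_le_mul_of_nonneg_right (le_max_left (C ^ (1/p)) (√(2 * C))) (norm_nonneg g)) hp0.le)
    rw [e5]
    simp_rw [hB0]
    calc _ ≤ ∑ k ∈ Finset.range n, C * ∑ ω : β k, |g (e ⟨k, ω⟩)| ^ p :=
          Finset.sum_le_sum fun k _ => hB k _
      _ = C * ∑ k ∈ Finset.range n, ∑ ω : β k, |g (e ⟨k, ω⟩)| ^ p := by rw [Finset.mul_sum]
      _ ≤ _ := mul_le_mul_of_nonneg_left
          (sigma_le16 e (fun i => |g i| ^ p) (fun i => by positivity) (hgsum g) n) hC.le) (by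
    intro g s
    obtain ⟨n, hn⟩ := hdom (fun i => (w i * B0 g i) ^ 2) (fun i => by positivity) s
    refine hn.trans ?_
    refine le_trans ?_ (pow_le_pow_left₀ (by positivity)
      (mul_le_mul_of_nonneg_right (le_max_right (C ^ (1/p)) (√(2 * C))) (norm_nonneg g)) 2)
    rw [mul_pow, Real.sq_sqrt (by positivity)]
    simp_rw [hB0]
    have hk : ∀ k, ∑ i : {i // κ i = k}, (w i * B k (fun ω => g (e ⟨k, ω⟩)) i) ^ 2 ≤
        (1/2) ^ k * (C * ‖g‖ ^ 2) := by
      intro k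
      have h1 := hB2 k (fun ω => g (e ⟨k, ω⟩))
      have h2 : (∑ ω : β k, |g (e ⟨k, ω⟩)| ^ p) ≤ ‖g‖ ^ p := by
        refine le_trans ?_ (sigma_le16 e (fun i => |g i| ^ p) (fun i => by positivity) (hgsum g) (k+1))
        rw [Finset.sum_range_succ]
        exact le_add_of_nonneg_left (Finset.sum_nonneg fun k _ => Finset.sum_nonneg fun ω _ => by positivity)
      have h3 : (∑ ω : β k, |g (e ⟨k, ω⟩)| ^ p) ^ (2/p) ≤ ‖g‖ ^ 2 := by
        refine (Real.rpow_le_rpow (Finset.sum_nonneg fun ω _ => by positivity) h2 (by positivity)).trans ?_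
        rw [← Real.rpow_mul (norm_nonneg _)]
        have : p * (2/p) = 2 := by field_simp
        rw [this, Real.rpow_two]
      have h4 : ∑ i : {i // κ i = k}, (B k (fun ω => g (e ⟨k, ω⟩)) i * (2 ^ k * w i)) ^ 2 =
          (2 ^ k) ^ 2 * ∑ i : {i // κ i = k}, (w i * B k (fun ω => g (e ⟨k, ω⟩)) i) ^ 2 := by
        rw [Finset.mul_sum]; exact Finset.sum_congr rfl fun i _ => by ring
      rw [h4] at h1
      set V := ∑ i : {i // κ i = k}, (w i * B k (fun ω => g (e ⟨k, ω⟩)) i) ^ 2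
      have hV : 0 ≤ V := Finset.sum_nonneg fun i _ => by positivity
      have h5 : (2 ^ k) ^ 2 * V ≤ C * ‖g‖ ^ 2 := h1.trans (mul_le_mul_of_nonneg_left h3 hC.le)
      have h6 : (1:ℝ) ≤ 2 ^ k := one_le_pow₀ (by norm_num)
      rw [one_div, inv_pow, inv_mul_eq_div, le_div_iff₀ (by positivity)]
      nlinarith [mul_nonneg hV (sub_nonneg.mpr h6)]
    calc _ ≤ ∑ k ∈ Finset.range n, (1/2) ^ k * (C * ‖g‖ ^ 2) := Finset.sum_le_sum fun k _ => hk k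
      _ = (∑ k ∈ Finset.range n, (1/2) ^ k) * (C * ‖g‖ ^ 2) := by rw [Finset.sum_mul]
      _ ≤ 2 * (C * ‖g‖ ^ 2) := mul_le_mul_of_nonneg_right (geom16 n) (by positivity)
      _ = _ := by ring)
  refine ⟨A1, B1, fun y => ext16 ?_⟩
  rw [hB1]
  ext i
  change B (κ i) (fun ω => (A1 y) (e ⟨κ i, ω⟩)) ⟨i, rfl⟩ = _
  have : (fun ω => (A1 y) (e ⟨κ i, ω⟩)) = A (κ i) (fun j => seq (y : Xpw p w) j) := by
    ext ω
    rw [hA1]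
    change A (e.symm (e ⟨κ i, ω⟩)).1 _ (e.symm (e ⟨κ i, ω⟩)).2 = _
    rw [Equiv.symm_apply_apply]
  rw [this, hBA]
end

lemma Zpart16 {E H : Type*} [NormedAddCommGroup E] [NormedSpace ℝ E] [CompleteSpace E]
    [NormedAddCommGroup H] [InnerProductSpace ℝ H] [CompleteSpace H]
    (S : E →L[ℝ] H) (Z : Submodule ℝ E) (hZ : IsClosed (Z : Set E)) (c : ℝ) (hc : 0 < c)
    (h : ∀ z ∈ Z, ‖z‖ ≤ c * ‖S z‖) : ∃ L : H →L[ℝ] E, ∀ z ∈ Z, L (S z) = z := by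
  haveI : CompleteSpace ↥Z := hZ.completeSpace_coe
  let f : ↥Z →L[ℝ] H := S.comp Z.subtypeL
  have hanti : AntilipschitzWith ⟨c, hc.le⟩ f :=
    AddMonoidHomClass.antilipschitz_of_bound f fun z => h z z.2
  have hcl : IsClosed (Set.range f) := hanti.isClosed_range f.uniformContinuous
  let e := ContinuousLinearMap.equivRange hanti.injective hcl
  haveI : CompleteSpace ↥(f : ↥Z →ₗ[ℝ] H).range := by
    apply IsClosed.completeSpace_coe (hs := ?_)
    exact hcl
  refine ⟨(Z.subtypeL.comp (e.symm : _ →L[ℝ] ↥Z)).comp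
    (Submodule.orthogonalProjectionOnto (f : ↥Z →ₗ[ℝ] H).range), fun z hz => ?_⟩
  have h1 : S z = (e ⟨z, hz⟩ : H) := rfl
  rw [h1]
  simp

lemma final16 {E F : Type*} [NormedAddCommGroup E] [NormedSpace ℝ E]
    [NormedAddCommGroup F] [NormedSpace ℝ F] (J : E →L[ℝ] F) (L : F →L[ℝ] E)
    (h : ∀ x, L (J x) = x) :
    ∃ V : Submodule ℝ F, V.ClosedComplemented ∧ Nonempty (E ≃L[ℝ] ↥V) := by
  let V := (J : E →ₗ[ℝ] F).range
  let J' : E →L[ℝ] ↥V := J.codRestrict V (fun x => ⟨x, rfl⟩)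
  refine ⟨V, ⟨J'.comp L, ?_⟩, ⟨ContinuousLinearEquiv.equivOfInverse J' (L.comp V.subtypeL) ?_ ?_⟩⟩
  · rintro ⟨_, x, rfl⟩
    apply Subtype.ext
    change J (L (J x)) = J x
    rw [h]
  · intro x; exact h x
  · rintro ⟨_, x, rfl⟩
    apply Subtype.ext
    change J (L (J x)) = J x
    rw [h]

lemma complete16 [Fact (1 ≤ ENNReal.ofReal p)] : CompleteSpace (Xpw p w) := by
  have hcl : IsClosed (XpwMod p w : Set (SeqP p × Seq2)) := by
    have : (XpwMod p w : Set (SeqP p × Seq2)) =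
        ⋂ n, {z | (z.2 : ℕ → ℝ) n = w n * (z.1 : ℕ → ℝ) n} := by
      ext z; simp only [Set.mem_iInter]; rfl
    rw [this]
    refine isClosed_iInter fun n => isClosed_eq ?_ ?_
    · exact ((continuous_apply n).comp (lp.uniformContinuous_coe.continuous)).comp continuous_snd
    · exact continuous_const.mul
        (((continuous_apply n).comp (lp.uniformContinuous_coe.continuous)).comp continuous_fst)
  exact hcl.completeSpace_coe

/-- Proposition 2.6, direct implication: let `X` be a complemented
subspace of `X_p`, `P` a bounded projection on `X` with range `Y`, and `ε, α, α' > 0`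
with `ε ≤ ‖I - P‖⁻¹` (stated multiplicatively as `ε ‖I - P‖ ≤ 1`) such that
(a) `r(y) ≤ α'` for all nonzero `y ∈ Y` and (b) every nonzero `x ∈ X` with `r(x) < α`
admits `y ∈ Y` with `‖x - y‖ < ε ‖x‖`.  Then `X` is isomorphic to a complemented
subspace of `ℓ_p ⊕ ℓ_2`. -/
theorem stmt16 (p : ℝ) (hp : 2 < p) [Fact (1 ≤ ENNReal.ofReal p)]
    (w : ℕ → ℝ) (hw : IsXpWeight p w)
    (X : Submodule ℝ (Xpw p w)) (hX : X.ClosedComplemented)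
    (P : ↥X →L[ℝ] ↥X) (hP : ∀ x : ↥X, P (P x) = P x)
    (Y : Submodule ℝ ↥X) (hY : Y = LinearMap.range (P : ↥X →ₗ[ℝ] ↥X))
    (ε α α' : ℝ) (hε0 : 0 < ε) (hα : 0 < α) (hα' : 0 < α')
    (hεP : ε * ‖ContinuousLinearMap.id ℝ ↥X - P‖ ≤ 1)
    (ha : ∀ y : ↥X, y ∈ Y → y ≠ 0 → ratio (y : Xpw p w) ≤ α')
    (hb : ∀ x : ↥X, x ≠ 0 → ratio (x : Xpw p w) < α → ∃ y ∈ Y, ‖x - y‖ < ε * ‖x‖) :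
    ∃ V : Submodule ℝ (SeqP p × Seq2), V.ClosedComplemented ∧
      Nonempty (↥X ≃L[ℝ] ↥V) := by
  have hp0 : 0 < p := by linarith
  have hcX : CompleteSpace (Xpw p w) := complete16
  obtain ⟨Q, hQ⟩ := id hX
  have hXcl : IsClosed (X : Set (Xpw p w)) := hX.isClosed
  have hcX' : CompleteSpace ↥X := hXcl.completeSpace_coe
  have hPY : ∀ x, P x ∈ Y := fun x => by rw [hY]; exact ⟨x, rfl⟩
  have hYP : ∀ y ∈ Y, P y = y := by
    intro y hy
    rw [hY] at hy
    obtain ⟨x, rfl⟩ := hy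
    exact hP x
  -- the part in `Y`
  obtain ⟨κ, hκ1, hκ2⟩ := blocks16 hp (Y.map X.subtype) hα' (by
    rintro _ ⟨y, hy, rfl⟩
    rcases eq_or_ne y 0 with rfl | hne
    · have e2 : nrm2 (0 : Xpw p w) = 0 := norm_zero
      have eP : nrmP (0 : Xpw p w) = 0 := norm_zero
      rw [map_zero, e2, eP, mul_zero]
    · have h1 := ha y hy hne
      have hne' : (y : Xpw p w) ≠ 0 := fun h => hne (Subtype.ext h)
      rw [ratio, div_le_iff₀ (nrmP_pos16 hne')] at h1
      exact h1)
  obtain ⟨A, B, hBA⟩ := Ypart16 hp hw.1 (Y.map X.subtype) κ hκ1 hκ2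
  -- the part in the kernel
  let S : ↥X →L[ℝ] Seq2 :=
    (ContinuousLinearMap.snd ℝ (SeqP p) Seq2).comp ((XpwMod p w).subtypeL.comp X.subtypeL)
  have hS : ∀ x : ↥X, ‖S x‖ = nrm2 (x : Xpw p w) := fun x => rfl
  have hker : ∀ z : ↥X, P z = 0 → z ≠ 0 → α ≤ ratio (z : Xpw p w) := by
    intro z hz hne
    by_contra! hlt
    obtain ⟨y, hy, hyz⟩ := hb z hne hlt
    have h1 : (ContinuousLinearMap.id ℝ ↥X - P) (z - y) = z := by
      simp [hz, hYP y hy]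
    have h2 := (ContinuousLinearMap.id ℝ ↥X - P).le_opNorm (z - y)
    rw [h1] at h2
    have hzn : 0 < ‖z‖ := norm_pos_iff.mpr hne
    have hn := norm_nonneg (ContinuousLinearMap.id ℝ ↥X - P)
    rcases eq_or_lt_of_le hn with h0 | h0
    · rw [← h0, zero_mul] at h2; linarith
    · have h3 := mul_lt_mul_of_pos_left hyz h0
      have h4 := mul_le_mul_of_nonneg_right hεP hzn.le
      linarith
  let Z : Submodule ℝ ↥X := (P : ↥X →ₗ[ℝ] ↥X).ker
  have hZcl : IsClosed (Z : Set ↥X) := P.isClosed_ker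
  obtain ⟨L₂, hL₂⟩ := Zpart16 S Z hZcl (max 1 α⁻¹) (by positivity) (by
    intro z hz
    rcases eq_or_ne z 0 with rfl | hne
    · simp
    · have h1 := hker z hz hne
      have hne' : (z : Xpw p w) ≠ 0 := fun h => hne (Subtype.ext h)
      rw [ratio, le_div_iff₀ (nrmP_pos16 hne')] at h1
      rw [hS]
      change max (nrmP (z : Xpw p w)) (nrm2 (z : Xpw p w)) ≤ _
      have h2 := nrm2_nonneg16 (z : Xpw p w)
      refine max_le ?_ ?_
      · calc nrmP (z : Xpw p w) ≤ α⁻¹ * nrm2 (z : Xpw p w) := by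
              rw [inv_mul_eq_div, le_div_iff₀ hα]; linarith
          _ ≤ _ := mul_le_mul_of_nonneg_right (le_max_right _ _) h2
      · calc nrm2 (z : Xpw p w) = 1 * nrm2 (z : Xpw p w) := (one_mul _).symm
          _ ≤ _ := mul_le_mul_of_nonneg_right (le_max_left _ _) h2)
  let PY : ↥X →L[ℝ] ↥(Y.map X.subtype) :=
    (X.subtypeL.comp P).codRestrict (Y.map X.subtype) (fun x => ⟨P x, hPY x, rfl⟩)
  refine final16 ((A.comp PY).prod (S.comp (ContinuousLinearMap.id ℝ ↥X - P)))
    (((P.comp Q).comp B).coprod L₂) fun x => ?_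
  have h1 : B (A (PY x)) = ((P x : ↥X) : Xpw p w) := hBA (PY x)
  have h2 : L₂ (S (x - P x)) = x - P x := by
    apply hL₂
    change P (x - P x) = 0
    rw [map_sub, hP, sub_self]
  change P (Q (B (A (PY x)))) + L₂ (S (x - P x)) = x
  rw [h1, h2, hQ, hP]
  abel
end
end

section
/- Let X be a complemented subspace of X_p which is isomorphic to a complemented subspace of ℓ_p ⊕ ℓ_2. Then there exist a bounded projection P on X with range Y and positive constants ε, α, α' with ε ≤ ‖I − P‖^{-1} such that (a) r(y) ≤ α' for all nonzero y ∈ Y, and (b) for every x ∈ X with r(x) < α there exists y ∈ Y with ‖x − y‖ < ε·‖x‖. -/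
open scoped ENNReal

noncomputable section

variable {p : ℝ} {w : ℕ → ℝ}

section
open Filter Topology

theorem lp_bl {q : ℝ≥0∞} [Fact (1 ≤ q)] (hq : q ≠ ⊤) {ι : Type*} {l : Filter ι}
    (u : lp (fun _ : ℕ => ℝ) q) (x : ι → lp (fun _ : ℕ => ℝ) q) (M R : ℝ)
    (hM : ∀ᶠ n in l, ‖x n‖ ≤ M) (hx : ∀ k, Tendsto (fun n => (x n : ℕ → ℝ) k) l (𝓝 0))
    (hR : (‖u‖ ^ q.toReal + M ^ q.toReal) ^ (1 / q.toReal) < R) :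
    ∀ᶠ n in l, ‖u + x n‖ < R := by
  have hq0 : 0 < q.toReal := ENNReal.toReal_pos (zero_lt_one.trans_le Fact.out).ne' hq
  set B := (‖u‖ ^ q.toReal + M ^ q.toReal) ^ (1 / q.toReal) with hB
  set η := (R - B) / 2 with hη
  have hη0 : 0 < η := by rw [hη]; linarith
  have h1 := lp.hasSum_single hq u
  obtain ⟨s, hs⟩ := ((Metric.tendsto_nhds.1 h1) η hη0).exists
  have h2 : Tendsto (fun n => ∑ i ∈ s, lp.single (E := fun _ : ℕ => ℝ) q i ((x n : ℕ → ℝ) i)) l (𝓝 0) := by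
    have : Tendsto (fun n => ∑ i ∈ s, lp.single (E := fun _ : ℕ => ℝ) q i ((x n : ℕ → ℝ) i)) l
        (𝓝 (∑ i ∈ s, lp.single (E := fun _ : ℕ => ℝ) q i (0:ℝ))) := by
      refine tendsto_finsetSum _ fun i _ => ?_
      exact ((lp.isometry_single (E := fun _ : ℕ => ℝ) (p := q) i).continuous.tendsto 0).comp (hx i)
    simpa using this
  filter_upwards [hM, (Metric.tendsto_nhds.1 h2) η hη0] with n hn hn2
  set us := ∑ i ∈ s, lp.single (E := fun _ : ℕ => ℝ) q i ((u : ℕ → ℝ) i) with hus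
  set xs := ∑ i ∈ s, lp.single (E := fun _ : ℕ => ℝ) q i ((x n : ℕ → ℝ) i) with hxs
  have husc : ∀ i, (us : ℕ → ℝ) i = if i ∈ s then (u : ℕ → ℝ) i else 0 := by
    intro i; simp only [hus, lp.coeFn_sum, lp.coeFn_single, Finset.sum_apply, Finset.sum_pi_single]
  have hxsc : ∀ i, (xs : ℕ → ℝ) i = if i ∈ s then (x n : ℕ → ℝ) i else 0 := by
    intro i; simp only [hxs, lp.coeFn_sum, lp.coeFn_single, Finset.sum_apply, Finset.sum_pi_single]
  set f := us + (x n - xs) with hf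
  have hfc : ∀ i ∈ s, (f : ℕ → ℝ) i = (u : ℕ → ℝ) i := by
    intro i hi
    have : (f : ℕ → ℝ) i = (us : ℕ → ℝ) i + ((x n : ℕ → ℝ) i - (xs : ℕ → ℝ) i) := by
      rw [hf]; rfl
    rw [this, husc, hxsc]; simp [hi]
  have e1 := lp.norm_sub_norm_compl_sub_single hq0 f s
  have e2 : ∑ i ∈ s, lp.single (E := fun _ : ℕ => ℝ) q i ((f : ℕ → ℝ) i) = us := by
    rw [hus]; exact Finset.sum_congr rfl fun i hi => by rw [hfc i hi]
  have e2' : f - us = x n - xs := by rw [hf]; abel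
  have e3 : ∑ i ∈ s, ‖(f : ℕ → ℝ) i‖ ^ q.toReal ≤ ‖u‖ ^ q.toReal := by
    rw [Finset.sum_congr rfl fun i hi => by rw [hfc i hi]]
    exact lp.sum_rpow_le_norm_rpow hq0 u s
  have e4 := lp.norm_sub_norm_compl_sub_single hq0 (x n) s
  have e5 : 0 ≤ ∑ i ∈ s, ‖(x n : ℕ → ℝ) i‖ ^ q.toReal := Finset.sum_nonneg fun i _ => by positivity
  rw [e2, e2'] at e1
  rw [← hxs] at e4
  have e6 : ‖x n‖ ^ q.toReal ≤ M ^ q.toReal := Real.rpow_le_rpow (norm_nonneg _) hn hq0.le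
  have e7 : ‖f‖ ≤ B := by
    rw [hB, one_div, Real.le_rpow_inv_iff_of_pos (norm_nonneg _) _ hq0]
    · linarith
    · have := norm_nonneg (x n)
      have : 0 ≤ M := by linarith
      positivity
  have e8 : u + x n = f + ((u - us) + xs) := by rw [hf]; abel
  have e9 : ‖u - us‖ < η := by rw [← dist_eq_norm, dist_comm]; exact hs
  have e10 : ‖xs‖ < η := by simpa using hn2
  calc ‖u + x n‖ ≤ ‖f‖ + (‖u - us‖ + ‖xs‖) := by
        rw [e8]; exact (norm_add_le _ _).trans (by gcongr; exact norm_add_le _ _)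
    _ < B + (η + η) := by linarith
    _ = R := by rw [hη]; ring

theorem key_step {q : ℝ≥0∞} [Fact (1 ≤ q)] (hq : q ≠ ⊤)
    {E F H : Type*} [NormedAddCommGroup E] [NormedSpace ℝ E] [NormedAddCommGroup F]
    [NormedSpace ℝ F] [NormedAddCommGroup H] [InnerProductSpace ℝ H]
    (i : E →L[ℝ] lp (fun _ : ℕ => ℝ) q) (j : E →L[ℝ] F) (T : E →L[ℝ] H)
    {ι : Type*} {l : Filter ι} (x : ι → E) (M : ℝ) (hM0 : 0 ≤ M)
    (hM : ∀ᶠ n in l, ‖i (x n)‖ ≤ M) (hx : ∀ k, Tendsto (fun n => (i (x n) : ℕ → ℝ) k) l (𝓝 0))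
    (hj : Tendsto (fun n => j (x n)) l (𝓝 0)) (δ : ℝ) (hδ : 0 < δ) (hT : ∃ᶠ n in l, δ ≤ ‖T (x n)‖)
    (N : ℕ) : ∃ u : E, ‖i u‖ ^ q.toReal < 1 + N * M ^ q.toReal ∧ ‖j u‖ < 1 ∧
      N * δ ^ 2 ≤ ‖T u‖ ^ 2 := by
  have hq0 : 0 < q.toReal := ENNReal.toReal_pos (zero_lt_one.trans_le Fact.out).ne' hq
  induction N with
  | zero => exact ⟨0, by simp [Real.zero_rpow hq0.ne'], by simp, by simp⟩
  | succ N ih =>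
    obtain ⟨u, hu1, hu2, hu3⟩ := ih
    have hMq : 0 ≤ M ^ q.toReal := by positivity
    have hR : (‖i u‖ ^ q.toReal + M ^ q.toReal) ^ (1 / q.toReal) <
        (1 + (N + 1 : ℕ) * M ^ q.toReal) ^ (1 / q.toReal) := by
      apply Real.rpow_lt_rpow (by positivity) _ (by positivity)
      push_cast; linarith
    have a1 := lp_bl hq (i u) (fun n => i (x n)) M _ hM hx hR
    have a2 := lp_bl hq (i u) (fun n => -i (x n)) M _ (by simpa using hM)
      (fun k => by simpa using (hx k).neg) hR
    have b1 : ∀ᶠ n in l, ‖j u + j (x n)‖ < 1 :=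
      Tendsto.eventually_lt_const hu2 (by simpa using (hj.const_add (j u)).norm)
    have b2 : ∀ᶠ n in l, ‖j u - j (x n)‖ < 1 :=
      Tendsto.eventually_lt_const hu2 (by simpa using (hj.const_sub (j u)).norm)
    obtain ⟨n, hn, ha1, ha2, hb1, hb2⟩ :=
      (hT.and_eventually (a1.and (a2.and (b1.and b2)))).exists
    have hpow : ∀ t : ℝ, 0 ≤ t → t < (1 + (N + 1 : ℕ) * M ^ q.toReal) ^ (1 / q.toReal) →
        t ^ q.toReal < 1 + (N + 1 : ℕ) * M ^ q.toReal := by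
      intro t ht h
      rwa [one_div, Real.lt_rpow_inv_iff_of_pos ht (by positivity) hq0] at h
    have hd : δ ^ 2 ≤ ‖T (x n)‖ ^ 2 := by gcongr
    rcases le_total 0 (inner ℝ (T u) (T (x n))) with h | h
    · refine ⟨u + x n, ?_, ?_, ?_⟩
      · rw [map_add]; exact hpow _ (norm_nonneg _) ha1
      · rw [map_add]; exact hb1
      · rw [map_add, norm_add_sq_real]; push_cast; linarith
    · refine ⟨u - x n, ?_, ?_, ?_⟩
      · rw [map_sub, sub_eq_add_neg]; exact hpow _ (norm_nonneg _) ha2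
      · rw [map_sub]; exact hb2
      · rw [map_sub, norm_sub_sq_real]; push_cast; linarith

theorem key_lemma {q : ℝ≥0∞} [Fact (1 ≤ q)] (hq : q ≠ ⊤) (hq2 : 2 < q.toReal)
    {E F H : Type*} [NormedAddCommGroup E] [NormedSpace ℝ E] [NormedAddCommGroup F]
    [NormedSpace ℝ F] [NormedAddCommGroup H] [InnerProductSpace ℝ H]
    (i : E →L[ℝ] lp (fun _ : ℕ => ℝ) q) (j : E →L[ℝ] F)
    (hij : ∀ x, ‖x‖ ≤ max ‖i x‖ ‖j x‖) (T : E →L[ℝ] H)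
    {ι : Type*} {l : Filter ι} (x : ι → E) (M : ℝ)
    (hM : ∀ᶠ n in l, ‖i (x n)‖ ≤ M) (hx : ∀ k, Tendsto (fun n => (i (x n) : ℕ → ℝ) k) l (𝓝 0))
    (hj : Tendsto (fun n => j (x n)) l (𝓝 0)) : Tendsto (fun n => T (x n)) l (𝓝 0) := by
  have hq0 : 0 < q.toReal := by linarith
  rw [Metric.tendsto_nhds]
  intro δ hδ
  by_contra hcon
  have hT : ∃ᶠ n in l, δ ≤ ‖T (x n)‖ := by
    rw [not_eventually] at hcon
    exact hcon.mono fun n hn => by simpa using hn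
  set C := 1 + |M| ^ q.toReal with hC
  have hCpos : 1 ≤ C := by have : 0 ≤ |M| ^ q.toReal := by positivity
                           linarith
  have main : ∀ N : ℕ, 1 ≤ N → (N:ℝ) * δ ^ 2 ≤ ‖T‖ ^ 2 * (N * C) ^ (2 / q.toReal) := by
    intro N hN
    obtain ⟨u, h1, h2, h3⟩ := key_step hq i j T x |M| (abs_nonneg _)
      (hM.mono fun n hn => hn.trans (le_abs_self _)) hx hj δ hδ hT N
    have hN1 : (1:ℝ) ≤ N := by exact_mod_cast hN
    have hNC : 1 ≤ N * C := by nlinarith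
    have k1 : ‖i u‖ ≤ (N * C) ^ (1 / q.toReal) := by
      rw [one_div, Real.le_rpow_inv_iff_of_pos (norm_nonneg _) (by positivity) hq0]
      rw [hC]; linarith
    have k2 : ‖j u‖ ≤ (N * C) ^ (1 / q.toReal) := by
      exact h2.le.trans (Real.one_le_rpow hNC (by positivity))
    have k3 : ‖T u‖ ≤ ‖T‖ * (N * C) ^ (1 / q.toReal) :=
      (T.le_opNorm u).trans (by gcongr; exact (hij u).trans (max_le k1 k2))
    calc (N:ℝ) * δ ^ 2 ≤ ‖T u‖ ^ 2 := h3
      _ ≤ (‖T‖ * (N * C) ^ (1 / q.toReal)) ^ 2 := by gcongr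
      _ = _ := by
        rw [mul_pow, ← Real.rpow_natCast ((N * C) ^ (1 / q.toReal)) 2, ← Real.rpow_mul (by positivity)]
        congr 2; push_cast; ring
  have hθ : 0 < 1 - 2 / q.toReal := by
    have : 2 / q.toReal < 1 := by rw [div_lt_one hq0]; exact hq2
    linarith
  have ht : Tendsto (fun N : ℕ => ((N:ℝ)) ^ (1 - 2 / q.toReal)) atTop atTop :=
    (tendsto_rpow_atTop hθ).comp tendsto_natCast_atTop_atTop
  obtain ⟨N, hN1, hN2⟩ := ((ht.eventually_gt_atTop (‖T‖ ^ 2 * C ^ (2 / q.toReal) / δ ^ 2)).and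
    (eventually_ge_atTop 1)).exists
  have := main N hN2
  have hNp : (0:ℝ) < N := by exact_mod_cast hN2
  rw [div_lt_iff₀ (by positivity), Real.rpow_sub hNp, Real.rpow_one] at hN1
  rw [Real.mul_rpow hNp.le (by positivity)] at this
  have hpp : 0 < (N:ℝ) ^ (2 / q.toReal) := by positivity
  rw [div_mul_eq_mul_div, lt_div_iff₀ hpp] at hN1
  linarith

theorem pitt {q : ℝ≥0∞} [Fact (1 ≤ q)] (hq : q ≠ ⊤) (hq2 : 2 < q.toReal)
    {H : Type*} [NormedAddCommGroup H] [InnerProductSpace ℝ H]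
    (T : lp (fun _ : ℕ => ℝ) q →L[ℝ] H) : IsCompactOperator T := by
  have hq0 : q ≠ 0 := (zero_lt_one.trans_le (Fact.out : 1 ≤ q)).ne'
  refine ⟨T '' Metric.closedBall 0 1, ?_, ?_⟩
  · apply IsSeqCompact.isCompact
    intro y hy
    choose x hx hxy using hy
    have hpi : IsCompact (Set.pi Set.univ fun _ : ℕ => Metric.closedBall (0:ℝ) 1) :=
      isCompact_univ_pi fun _ => isCompact_closedBall _ _
    have hxn : ∀ n, ‖x n‖ ≤ 1 := fun n => by simpa using hx n
    obtain ⟨a, -, φ, hφ, ha⟩ := hpi.isSeqCompact (x := fun n => (x n : ℕ → ℝ)) (by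
      intro n k _
      simpa using (lp.norm_apply_le_norm hq0 (x n) k).trans (hxn n))
    have hmem : Memℓp a q := lp.memℓp_of_tendsto (F := fun n => x (φ n)) (l := atTop)
      ((isBounded_iff_forall_norm_le).2 ⟨1, by rintro _ ⟨n, rfl⟩; exact hxn _⟩) ha
    set b : lp (fun _ : ℕ => ℝ) q := ⟨a, hmem⟩ with hb
    have hbn : ‖b‖ ≤ 1 := lp.norm_le_of_tendsto (F := fun n => x (φ n)) (l := atTop)
      (Eventually.of_forall fun n => hxn _) ha
    refine ⟨T b, ⟨b, by simpa using hbn, rfl⟩, φ, hφ, ?_⟩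
    have := key_lemma hq hq2 (ContinuousLinearMap.id ℝ _) (0 : _ →L[ℝ] ℝ) (by simp) T (l := atTop)
      (fun n => x (φ n) - b) 2 (Eventually.of_forall fun n => by
        have := norm_sub_le (x (φ n)) b
        have := hxn (φ n)
        simp only [ContinuousLinearMap.id_apply]
        linarith) (fun k => by
        have := (tendsto_pi_nhds.1 ha k).sub_const (a k)
        simpa using this) (by simp)
    have h2 := this.add_const (T b)
    simp only [map_sub, sub_add_cancel, zero_add] at h2
    exact h2.congr fun n => by simp [hxy]
  · filter_upwards [Metric.closedBall_mem_nhds (0 : lp (fun _ : ℕ => ℝ) q) one_pos] with z hz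
    exact ⟨z, hz, rfl⟩

end

section
open Filter Topology Polynomial
variable {X : Type*} [NormedAddCommGroup X] [NormedSpace ℝ X]

/-- polynomial `(2 g_c - 1)^2 + s`, `g_c = z + c z (1 - z)` -/
noncomputable def badPoly (c s : ℝ) : ℝ[X] :=
  (2 * (Polynomial.X + C c * (Polynomial.X * (1 - Polynomial.X))) - 1) ^ 2 + C s

theorem badPoly_coprime {c d s r : ℝ} (hcd : c ≠ d) (hs : 0 ≤ s) (hr : 0 ≤ r) :
    IsCoprime (badPoly c s) (badPoly d r) := by
  have key : ∀ (w : ℂ) (t : ℝ), 0 ≤ t → w ^ 2 + t = 0 → w.re = 0 := by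
    intro w t ht h
    have h1 := congrArg Complex.re h
    have h2 := congrArg Complex.im h
    simp [pow_two] at h1 h2
    have h3 : w.re * w.im = 0 := by linarith
    rcases mul_eq_zero.1 h3 with h4 | h4
    · exact h4
    · rw [h4] at h1; nlinarith [mul_self_nonneg w.re, mul_self_eq_zero (a := w.re)]
  refine (Polynomial.isCoprime_iff_aeval_ne_zero_of_isAlgClosed (k := ℝ) ℂ _ _).2 ?_
  intro a
  by_contra! hcon
  obtain ⟨h1, h2⟩ := hcon
  simp only [badPoly, map_add, map_pow, map_sub, map_mul, aeval_X, aeval_C, map_one, map_ofNat] at h1 h2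
  have e1 := key _ s hs (by simpa using h1)
  have e2 := key _ r hr (by simpa using h2)
  simp at e1 e2
  have e3 : (c - d) * (a.re * (1 - a.re) + a.im * a.im) = 0 := by linarith
  have e4 : a.re * (1 - a.re) + a.im * a.im = 0 := by
    rcases mul_eq_zero.1 e3 with h | h
    · exact absurd (sub_eq_zero.1 h) hcd
    · exact h
  have e5 : a.re = 1 / 2 := by
    have : c * (a.re * (1 - a.re) + a.im * a.im) = 0 := by rw [e4, mul_zero]
    linarith
  rw [e5] at e4
  nlinarith [mul_self_nonneg a.im]

theorem exists_good_c (A : X →L[ℝ] X) (hK : IsCompactOperator (A - A * A : X →L[ℝ] X)) :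
    ∃ c : ℝ, ∀ s : ℝ, 0 ≤ s → ∀ x : X, (aeval A (badPoly c s)) x = 0 → x = 0 := by
  by_contra! hcon
  choose s hs v hv hv0 using fun n : ℕ => hcon (1 / ((n : ℝ) + 1))
  set c : ℕ → ℝ := fun n => 1 / ((n : ℝ) + 1) with hc
  have hcinj : Function.Injective c := by
    intro m n h
    simp only [hc, one_div, inv_inj] at h
    exact_mod_cast (add_right_cancel h)
  set K := A - A * A with hKdef
  let pr : ℕ → ℝ[X] := fun n => ∏ i ∈ Finset.range n, badPoly (c i) (s i)
  let Nn : ℕ → Submodule ℝ X := fun n => LinearMap.ker ((aeval A (pr n) : X →L[ℝ] X) : X →ₗ[ℝ] X)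
  have hNmem : ∀ n x, x ∈ Nn n ↔ aeval A (pr n) x = 0 := fun n x => by simp [Nn]
  have hclosed : ∀ n, IsClosed (Nn n : Set X) := fun n => (aeval A (pr n)).isClosed_ker
  have hstep : ∀ n x, x ∈ Nn (n + 1) → aeval A (badPoly (c n) (s n)) x ∈ Nn n := by
    intro n x hx
    rw [hNmem] at hx ⊢
    simpa [pr, Finset.prod_range_succ, mul_apply_eq_comp] using hx
  have hpoly : ∀ n x (q : ℝ[X]), x ∈ Nn n → aeval A q x ∈ Nn n := by
    intro n x q hx
    rw [hNmem] at hx ⊢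
    rw [← mul_apply_eq_comp, ← map_mul, mul_comm, map_mul,
      mul_apply_eq_comp, hx, map_zero]
  have hmono : ∀ n x, x ∈ Nn n → x ∈ Nn (n + 1) := by
    intro n x hx
    rw [hNmem] at hx ⊢
    simp only [pr, Finset.prod_range_succ_comm, map_mul, mul_apply_eq_comp]
    change aeval A (badPoly (c n) (s n)) (aeval A (pr n) x) = 0
    rw [hx, map_zero]
  have hmono' : ∀ m n, m ≤ n → ∀ x, x ∈ Nn m → x ∈ Nn n := by
    intro m n hmn
    induction n, hmn using Nat.le_induction with
    | base => exact fun x hx => hx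
    | succ n _ ih => exact fun x hx => hmono n x (ih x hx)
  have hvn : ∀ n, v n ∈ Nn (n + 1) := by
    intro n
    rw [hNmem]
    simp only [pr, Finset.prod_range_succ, map_mul, mul_apply_eq_comp]
    change aeval A (∏ i ∈ Finset.range n, badPoly (c i) (s i)) (aeval A (badPoly (c n) (s n)) (v n)) = 0
    rw [hv n, map_zero]
  have hvn' : ∀ n, v n ∉ Nn n := by
    intro n hn
    rw [hNmem] at hn
    have hcop : IsCoprime (pr n) (badPoly (c n) (s n)) := by
      apply IsCoprime.prod_left
      intro i hi
      apply badPoly_coprime _ (hs i) (hs n)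
      exact hcinj.ne (Finset.mem_range.1 hi).ne
    obtain ⟨a, b, hab⟩ := hcop
    apply hv0 n
    have := congrArg (fun q => aeval A q (v n)) hab
    simp only [map_add, map_mul, map_one, add_apply,
      mul_apply_eq_comp, one_apply_eq_self] at this
    rw [hn, hv n] at this
    simpa using this.symm
  have hy : ∀ n, ∃ y ∈ Nn (n + 1), ‖y‖ = 1 ∧ ∀ z ∈ Nn n, 1 / 2 ≤ ‖y - z‖ := by
    intro n
    obtain ⟨y, -, hy1, hy2⟩ := riesz_lemma_of_lt_one (𝕜 := ℝ) (E := Nn (n + 1))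
      (F := (Nn n).comap (Nn (n + 1)).subtype)
      ((hclosed n).preimage continuous_subtype_val) ⟨⟨v n, hvn n⟩, hvn' n⟩
      (r := 1 / 2) (by norm_num)
    exact ⟨y, y.2, hy1, fun z hz => hy2 ⟨z, hmono n z hz⟩ hz⟩
  choose y hyN hy1 hy2 using hy
  -- `badPoly c s = (1 + s) - K * D`
  let D : ℕ → ℝ[X] := fun n => 4 * (1 + C (c n) - 2 * C (c n) * Polynomial.X
    - C (c n) ^ 2 * (Polynomial.X * (1 - Polynomial.X)))
  have hD : ∀ n, badPoly (c n) (s n) = C (1 + s n) - (Polynomial.X - Polynomial.X * Polynomial.X) * D n := by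
    intro n
    simp only [badPoly, D, map_add, map_one]
    ring
  have hKp : aeval A (Polynomial.X - Polynomial.X * Polynomial.X : ℝ[X]) = K := by simp [hKdef]
  have hKD : ∀ n x, K (aeval A (D n) x) = (1 + s n) • x - aeval A (badPoly (c n) (s n)) x := by
    intro n x
    rw [hD n]
    generalize D n = q
    rw [map_sub, map_mul, hKp, aeval_C]
    simp [Algebra.algebraMap_eq_smul_one]
  have hc01 : ∀ n, ‖c n‖ ≤ 1 := by
    intro n
    have : (0:ℝ) ≤ n := n.cast_nonneg
    rw [hc, Real.norm_of_nonneg (by positivity)]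
    simp only
    rw [div_le_one (by positivity)]; linarith
  obtain ⟨R, hR⟩ : ∃ R, ∀ n, ‖aeval A (D n) (y n)‖ ≤ R := by
    let f : ℝ → X →L[ℝ] X := fun t => aeval A (4 * (1 + C t - 2 * C t * Polynomial.X
    - C t ^ 2 * (Polynomial.X * (1 - Polynomial.X))) : ℝ[X])
    have hf : Continuous f := by
      have : f = fun t : ℝ => 4 * (1 + t • (1 : X →L[ℝ] X) - 2 * (t • (1 : X →L[ℝ] X)) * A -
          (t • (1 : X →L[ℝ] X)) ^ 2 * (A * (1 - A))) := by
        funext t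
        simp [f, Algebra.algebraMap_eq_smul_one, map_ofNat (aeval A)]
      rw [this]
      fun_prop
    obtain ⟨R, hR⟩ := (isCompact_closedBall (0:ℝ) 1).exists_bound_of_continuousOn hf.continuousOn
    refine ⟨R, fun n => ?_⟩
    have h1 := hR (c n) (by simpa using hc01 n)
    calc ‖aeval A (D n) (y n)‖ ≤ ‖f (c n)‖ * ‖y n‖ := (f (c n)).le_opNorm _
      _ ≤ R := by rw [hy1, mul_one]; exact h1
  obtain ⟨S, hS, hSs⟩ := hK.image_closedBall_subset_compact (𝕜₁ := ℝ) (f := (K : X →ₗ[ℝ] X)) R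
  obtain ⟨z, -, ψ, hψ, hz⟩ := hS.tendsto_subseq (x := fun n => K (aeval A (D n) (y n)))
    (fun n => hSs ⟨_, by simpa using hR n, rfl⟩)
  have hcau := hz.cauchySeq
  rw [Metric.cauchySeq_iff'] at hcau
  obtain ⟨N, hN⟩ := hcau (1 / 2) (by norm_num)
  have h3 := hN (N + 1) (by omega)
  set n := ψ (N + 1)
  set m := ψ N
  have hmn : m + 1 ≤ n := hψ (Nat.lt_succ_self N)
  simp only [Function.comp_apply, dist_eq_norm] at h3
  change ‖K (aeval A (D n) (y n)) - K (aeval A (D m) (y m))‖ < 1 / 2 at h3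
  have hm1 : K (aeval A (D m) (y m)) ∈ Nn n := by
    rw [← hKp]
    exact hpoly _ _ _ (hpoly _ _ _ (hmono' _ _ hmn _ (hyN m)))
  have hn1 := hstep n _ (hyN n)
  rw [hKD n] at h3
  have hsn : 0 < 1 + s n := by linarith [hs n]
  have h4 := hy2 n ((1 + s n)⁻¹ • (aeval A (badPoly (c n) (s n)) (y n) + K (aeval A (D m) (y m))))
    ((Nn n).smul_mem _ ((Nn n).add_mem hn1 hm1))
  have h5 : (1 + s n) • y n - aeval A (badPoly (c n) (s n)) (y n) - K (aeval A (D m) (y m)) =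
      (1 + s n) • (y n - (1 + s n)⁻¹ • (aeval A (badPoly (c n) (s n)) (y n) + K (aeval A (D m) (y m)))) := by
    rw [smul_sub, smul_smul, mul_inv_cancel₀ hsn.ne', one_smul]; abel
  rw [h5, norm_smul, Real.norm_of_nonneg hsn.le] at h3
  nlinarith [hs n]

/-- compact operators in the bicommutant of `A` -/
def bicomp (A : X →L[ℝ] X) : NonUnitalSubalgebra ℝ (X →L[ℝ] X) where
  carrier := {k | IsCompactOperator k ∧ ∀ T, Commute A T → Commute k T}
  add_mem' := fun ha hb => ⟨ha.1.add hb.1, fun T hT => (ha.2 T hT).add_left (hb.2 T hT)⟩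
  zero_mem' := ⟨isCompactOperator_zero, fun T _ => Commute.zero_left T⟩
  mul_mem' := fun {_ b} ha hb => ⟨ha.1.comp_clm b, fun T hT => (ha.2 T hT).mul_left (hb.2 T hT)⟩
  smul_mem' := fun c _ ha => ⟨ha.1.smul c, fun T hT => (ha.2 T hT).smul_left c⟩

theorem bicomp_comm {A k T : X →L[ℝ] X} (hk : k ∈ bicomp A) (hT : T ∈ bicomp A) : Commute k T :=
  hk.2 T (hT.2 A (Commute.refl A)).symm

theorem bicomp_closed [CompleteSpace X] (A : X →L[ℝ] X) :
    IsClosed (bicomp A : Set (X →L[ℝ] X)) := by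
  have : (bicomp A : Set (X →L[ℝ] X)) = {k : X →L[ℝ] X | IsCompactOperator k} ∩
      ⋂ (T : X →L[ℝ] X) (_ : Commute A T), {k : X →L[ℝ] X | k * T = T * k} := by
    ext k
    simp only [bicomp, Set.mem_inter_iff, Set.mem_iInter, Set.mem_ofPred_eq]
    rfl
  rw [this]
  refine isClosed_setOfPred_isCompactOperator.inter (isClosed_iInter fun T => isClosed_iInter fun _ => ?_)
  exact isClosed_eq (by fun_prop) (by fun_prop)

noncomputable instance bicomp_normedSpace (A : X →L[ℝ] X) : NormedSpace ℝ (bicomp A) where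
  norm_smul_le := fun c x => norm_smul_le c (x : X →L[ℝ] X)

theorem bicomp_sqrt_small [CompleteSpace X] (A : X →L[ℝ] X) :
    ∀ᶠ k : bicomp A in 𝓝 (0 : bicomp A), ∃ h ∈ bicomp A,
      (1 + h) * (1 + h) = 1 + (k : X →L[ℝ] X) := by
  have : CompleteSpace (bicomp A) := (bicomp_closed A).completeSpace_coe
  let f : bicomp A → bicomp A := fun h => (2:ℝ) • h + h * h
  let e : bicomp A ≃L[ℝ] bicomp A :=
    ContinuousLinearEquiv.smulLeft (Units.mk0 (2:ℝ) two_ne_zero)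
  have hf : HasStrictFDerivAt f (e : bicomp A →L[ℝ] bicomp A) 0 := by
    have h1 : HasStrictFDerivAt (fun h : bicomp A => (2:ℝ) • h)
      ((2:ℝ) • ContinuousLinearMap.id ℝ (bicomp A)) 0 := ((2:ℝ) • ContinuousLinearMap.id ℝ (bicomp A)).hasStrictFDerivAt
    have hpr : HasStrictFDerivAt (fun h : bicomp A => (h, h))
      ((ContinuousLinearMap.id ℝ (bicomp A)).prod (ContinuousLinearMap.id ℝ (bicomp A))) 0 :=
      ((ContinuousLinearMap.id ℝ (bicomp A)).prod
        (ContinuousLinearMap.id ℝ (bicomp A))).hasStrictFDerivAt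
    have h2 := HasStrictFDerivAt.comp (f := fun h : bicomp A => (h, h)) (0 : bicomp A)
      ((ContinuousLinearMap.mul ℝ (bicomp A)).isBoundedBilinearMap.hasStrictFDerivAt (0, 0)) hpr
    refine ((h1.add h2).congr_fderiv ?_)
    refine ContinuousLinearMap.ext fun x => ?_
    have hd := IsBoundedBilinearMap.deriv_apply
      (ContinuousLinearMap.mul ℝ (bicomp A)).isBoundedBilinearMap (0, 0) (x, x)
    change (2:ℝ) • x + IsBoundedBilinearMap.deriv
      (ContinuousLinearMap.mul ℝ (bicomp A)).isBoundedBilinearMap (0, 0) (x, x) = (2:ℝ) • x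
    rw [hd]
    change (2:ℝ) • x + (0 * x + x * 0) = (2:ℝ) • x
    rw [zero_mul, mul_zero, add_zero, add_zero]
  have h3 := HasStrictFDerivAt.map_nhds_eq_of_equiv (f := f) (f' := e) (a := 0) hf
  have h4 : f 0 = 0 := by simp [f]
  rw [h4] at h3
  rw [← h3, Filter.eventually_map]
  refine Filter.Eventually.of_forall fun h => ⟨h, h.2, ?_⟩
  change (1 + (h : X →L[ℝ] X)) * (1 + (h : X →L[ℝ] X)) =
    1 + ((2:ℝ) • (h : X →L[ℝ] X) + (h : X →L[ℝ] X) * (h : X →L[ℝ] X))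
  rw [two_smul]
  noncomm_ring

theorem bicomp_inv {A k : X →L[ℝ] X} (hk : k ∈ bicomp A) (hu : IsUnit (1 + k)) :
    ∃ k' ∈ bicomp A, (1 + k) * (1 + k') = 1 := by
  obtain ⟨u, hu⟩ := hu
  have hc : ∀ T, Commute A T → Commute (↑u⁻¹ : X →L[ℝ] X) T := by
    intro T hT
    apply Commute.units_inv_left
    rw [hu]
    exact (Commute.one_left T).add_left (hk.2 T hT)
  refine ⟨-(↑u⁻¹ * k), ⟨?_, ?_⟩, ?_⟩
  · exact (hk.1.clm_comp (↑u⁻¹ : X →L[ℝ] X)).neg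
  · exact fun T hT => ((hc T hT).mul_left (hk.2 T hT)).neg_left
  · have h1 : (↑u⁻¹ : X →L[ℝ] X) * (1 + k) = 1 := by rw [← hu]; simp
    have h2 : (1 + k) * (↑u⁻¹ : X →L[ℝ] X) = 1 := by rw [← hu]; simp
    have h3 : 1 + -(↑u⁻¹ * k) = (↑u⁻¹ : X →L[ℝ] X) := by
      have : (↑u⁻¹ : X →L[ℝ] X) * k = 1 - ↑u⁻¹ := by
        rw [mul_add, mul_one] at h1
        rw [← h1]; abel
      rw [this]; abel
    rw [h3, h2]

def HasSq (A L : X →L[ℝ] X) : Prop := ∃ k ∈ bicomp A, (1 + k) * (1 + k) = L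

theorem HasSq.mul {A L M : X →L[ℝ] X} (hL : HasSq A L) (hM : HasSq A M) : HasSq A (L * M) := by
  obtain ⟨k, hk, rfl⟩ := hL
  obtain ⟨h, hh, rfl⟩ := hM
  refine ⟨k + h + k * h, add_mem (add_mem hk hh) (mul_mem hk hh), ?_⟩
  have hc : h * k = k * h := (bicomp_comm hh hk).eq
  have : 1 + (k + h + k * h) = (1 + k) * (1 + h) := by noncomm_ring
  rw [this]
  have h2 : (1 + h) * (1 + k) = (1 + k) * (1 + h) := by
    simp only [mul_add, add_mul, mul_one, one_mul, hc]; abel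
  calc (1 + k) * (1 + h) * ((1 + k) * (1 + h)) = (1 + k) * ((1 + h) * (1 + k)) * (1 + h) := by
        simp only [mul_assoc]
    _ = _ := by rw [h2]; simp only [mul_assoc]

theorem HasSq.inv {A L M : X →L[ℝ] X} (hL : HasSq A L) (hu : IsUnit L) (hM : L * M = 1) :
    HasSq A M := by
  obtain ⟨k, hk, rfl⟩ := hL
  have hu' : IsUnit (1 + k) := by
    rw [← pow_two, isUnit_pow_iff two_ne_zero] at hu
    exact hu
  obtain ⟨k', hk', h⟩ := bicomp_inv hk hu'
  refine ⟨k', hk', ?_⟩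
  apply hu.mul_left_cancel
  rw [hM]
  calc (1 + k) * (1 + k) * ((1 + k') * (1 + k')) = (1 + k) * ((1 + k) * (1 + k')) * (1 + k') := by
        simp only [mul_assoc]
    _ = 1 := by rw [h, mul_one, h]

theorem hasSq_path [CompleteSpace X] {A C : X →L[ℝ] X} (hC : C ∈ bicomp A)
    (hu : ∀ t ∈ Set.Icc (0:ℝ) 1, IsUnit (1 - t • C)) : HasSq A (1 - C) := by
  have key : ∀ t ∈ Set.Icc (0:ℝ) 1, ∀ᶠ r in 𝓝[Set.Icc (0:ℝ) 1] t,
      (HasSq A (1 - t • C) ↔ HasSq A (1 - r • C)) := by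
    intro t ht
    have hk : -(t • C) ∈ bicomp A := neg_mem ((bicomp A).smul_mem' t hC)
    obtain ⟨k', hk', hinv⟩ := bicomp_inv hk (by rw [← sub_eq_add_neg]; exact hu t ht)
    rw [← sub_eq_add_neg] at hinv
    have hUC : (1 + k') * C ∈ bicomp A := by
      rw [add_mul, one_mul]; exact add_mem hC (mul_mem hk' hC)
    let g : ℝ → bicomp A := fun r => (t - r) • ⟨(1 + k') * C, hUC⟩
    have hg : Tendsto g (𝓝 t) (𝓝 0) := by
      have : Continuous g := by fun_prop
      have h := this.tendsto t
      have h0 : g t = 0 := by simp only [g, sub_self, zero_smul]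
      rwa [h0] at h
    have h1 := hg.eventually (bicomp_sqrt_small A)
    filter_upwards [mem_nhdsWithin_of_mem_nhds h1, self_mem_nhdsWithin] with r hr hrI
    have hr' : HasSq A (1 + (t - r) • ((1 + k') * C)) := hr
    have hfac : (1 - t • C) * (1 + (t - r) • ((1 + k') * C)) = 1 - r • C := by
      rw [mul_add, mul_one, mul_smul_comm, ← mul_assoc, hinv, one_mul, sub_smul]; abel
    set M := 1 + (t - r) • ((1 + k') * C) with hMdef
    have hcomm : ∀ T, Commute A T → Commute M T := by
      intro T hT
      exact (Commute.one_left T).add_left ((hUC.2 T hT).smul_left _)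
    constructor
    · intro h
      rw [← hfac]; exact h.mul hr'
    · intro h
      -- `M` is a unit
      have hMu : IsUnit M := by
        have : M = (1 + k') * (1 - r • C) := by
          have h5 : (1 + k') * (1 - t • C) = 1 := by
            refine Eq.trans ?_ hinv
            exact (((Commute.one_left _).add_left
              ((Commute.one_right k').sub_right ((bicomp_comm hk' hC).smul_right t))).eq)
          rw [← hfac, ← mul_assoc, h5, one_mul]
        rw [this]
        refine IsUnit.mul ?_ (hu r hrI)
        obtain ⟨v, hv⟩ := hu t ht
        have : (1 + k') = ↑v⁻¹ := by
          rw [← hv] at hinv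
          exact (Units.inv_eq_of_mul_eq_one_right hinv).symm
        rw [this]; exact v⁻¹.isUnit
      obtain ⟨v, hv⟩ := hMu
      have h6 : HasSq A (↑v⁻¹ : X →L[ℝ] X) := hr'.inv ⟨v, hv⟩ (by rw [← hv]; simp)
      have h7 : (1 - t • C) = (1 - r • C) * ↑v⁻¹ := by
        rw [← hfac, ← hv, mul_assoc]; simp
      rw [h7]; exact h.mul h6
  have := isPreconnected_Icc.induction₂ (s := Set.Icc (0:ℝ) 1)
    (fun t r => HasSq A (1 - t • C) ↔ HasSq A (1 - r • C)) key
    (fun x y z _ _ _ h1 h2 => h1.trans h2) (fun x y _ _ h => h.symm)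
    (x := 0) (y := 1) (by simp) (by simp)
  have h0 : HasSq A (1 - (0:ℝ) • C) := ⟨0, zero_mem _, by simp⟩
  simpa using this.1 h0

theorem lift_idem [CompleteSpace X] (A : X →L[ℝ] X)
    (hK : IsCompactOperator (A - A * A : X →L[ℝ] X)) :
    ∃ P : X →L[ℝ] X, P * P = P ∧ IsCompactOperator (P - A : X →L[ℝ] X) := by
  obtain ⟨c, hc⟩ := exists_good_c A hK
  set K := A - A * A with hKdef
  have hKA : ∀ T, Commute A T → Commute K T := fun T hT => hT.sub_left (hT.mul_left hT)
  have hKm : K ∈ bicomp A := ⟨hK, hKA⟩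
  set B := A + c • K with hB
  have hBA : ∀ T, Commute A T → Commute B T := fun T hT => hT.add_left ((hKA T hT).smul_left c)
  have hAB : Commute A B := (hBA A (Commute.refl A)).symm
  set W := (2:ℝ) • B - 1 with hW
  set C := 1 - W * W with hC
  have hCB : C = (4:ℝ) • (B - B * B) := by
    have : (4:ℝ) = 2 * 2 := by norm_num
    rw [hC, hW, this, mul_smul, two_smul, two_smul, two_smul]; noncomm_ring
  have hBB : B - B * B = K * (1 + c • 1 - (2 * c) • A - (c * c) • K) := by
    have hcom : A * K = K * A := (hKA A (Commute.refl A)).symm.eq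
    rw [hB]
    simp only [mul_add, add_mul, mul_sub, mul_one, mul_smul_comm, smul_mul_assoc, hcom]
    have h2 : A * A = A - K := by rw [hKdef]; abel
    rw [h2]
    module
  have hCm : C ∈ bicomp A := by
    refine ⟨?_, ?_⟩
    · rw [hCB, hBB]
      exact (hK.comp_clm _).smul (4:ℝ)
    · intro T hT
      rw [hCB]
      exact ((hBA T hT).sub_left ((hBA T hT).mul_left (hBA T hT))).smul_left _
  have hae : ∀ s x, aeval A (badPoly c s) x = (1 + s) • x - C x := by
    intro s x
    have : aeval A (badPoly c s) = W * W + s • 1 := by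
      simp only [badPoly, map_add, map_pow, map_sub, map_mul, aeval_X, aeval_C, map_one,
        map_ofNat (aeval A), Algebra.algebraMap_eq_smul_one]
      have : A + c • (1 : X →L[ℝ] X) * (A * (1 - A)) = B := by
        rw [hB, hKdef, smul_mul_assoc, one_mul, mul_sub, mul_one]
      rw [this, pow_two, hW, two_smul, two_mul]
    rw [this, hC]
    simp [add_smul, add_comm]
  have hunit : ∀ t ∈ Set.Icc (0:ℝ) 1, IsUnit (1 - t • C) := by
    intro t ht
    rcases ht.1.eq_or_lt with h | h
    · rw [← h]; simp
    · have hs : 0 ≤ 1 / t - 1 := by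
        rw [sub_nonneg, le_div_iff₀ h]; linarith [ht.2]
      have hμ : (1 / t) ≠ 0 := by positivity
      rcases IsCompactOperator.hasEigenvalue_or_mem_resolventSet hCm.1 hμ with h1 | h1
      · obtain ⟨x, hx⟩ := h1.exists_hasEigenvector
        exfalso
        apply hx.2
        apply hc _ hs
        rw [hae]
        have := hx.apply_eq_smul
        simp only [ContinuousLinearMap.coe_coe] at this
        rw [this]; simp
      · rw [spectrum.mem_resolventSet_iff] at h1
        have h2 : 1 - t • C = t • (algebraMap ℝ (X →L[ℝ] X) (1 / t) - C) := by
          generalize C = D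
          rw [Algebra.algebraMap_eq_smul_one, smul_sub, smul_smul, mul_one_div_cancel h.ne', one_smul]
        rw [h2]
        exact (IsUnit.smul (Units.mk0 t h.ne') h1)
  have hsq := hasSq_path hCm hunit
  have hu1 : IsUnit (1 - C) := by simpa using hunit 1 (by simp)
  obtain ⟨v, hv⟩ := hu1
  obtain ⟨k, hk, hkk⟩ := hsq.inv ⟨v, hv⟩ (M := (↑v⁻¹ : X →L[ℝ] X)) (by rw [← hv]; simp)
  have hkW : W * (1 + k) = (1 + k) * W := by
    have : Commute k B := hk.2 B hAB
    have h2 : Commute (1 + k) W :=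
      (Commute.one_left W).add_left ((this.smul_right (2:ℝ)).sub_right (Commute.one_right k))
    exact h2.symm.eq
  obtain ⟨J, hJ⟩ : ∃ J, J = W * (1 + k) := ⟨_, rfl⟩
  have hJJ : J * J = 1 := by
    have hWW : W * W = ↑v := by rw [hv, hC]; abel
    calc J * J = W * ((1 + k) * W) * (1 + k) := by rw [hJ]; simp only [mul_assoc]
      _ = W * W * ((1 + k) * (1 + k)) := by rw [← hkW]; simp only [mul_assoc]
      _ = 1 := by rw [hkk, hWW]; simp
  refine ⟨(1/2:ℝ) • (1 + J), ?_, ?_⟩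
  · rw [smul_mul_smul_comm, mul_add, add_mul, add_mul, hJJ]
    simp only [mul_one, one_mul]
    module
  · have : (1/2:ℝ) • (1 + J) - A = c • K + (1/2:ℝ) • (W * k) := by
      rw [hJ, mul_add, mul_one, hW, hB]
      simp only [sub_mul, smul_mul_assoc, add_mul]
      module
    rw [this]
    exact (hK.smul c).add ((hk.1.clm_comp W).smul (1/2:ℝ))
end

section
open Filter Topology

theorem core_thm {q : ℝ≥0∞} [Fact (1 ≤ q)] (hq : q ≠ ⊤) (hq2 : 2 < q.toReal)
    {X : Type*} [NormedAddCommGroup X] [NormedSpace ℝ X] [CompleteSpace X]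
    (i : X →L[ℝ] lp (fun _ : ℕ => ℝ) q) (j : X →L[ℝ] lp (fun _ : ℕ => ℝ) 2)
    (hij : ∀ x, ‖x‖ ≤ max ‖i x‖ ‖j x‖) (hi : ∀ x, ‖i x‖ ≤ ‖x‖) (hj : ∀ x, ‖j x‖ ≤ ‖x‖)
    (w : ℕ → ℝ) (hw : ∀ n, 0 < w n)
    (hwij : ∀ x n, (j x : ℕ → ℝ) n = w n * (i x : ℕ → ℝ) n)
    (T : X →L[ℝ] lp (fun _ : ℕ => ℝ) q × lp (fun _ : ℕ => ℝ) 2)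
    (Q : lp (fun _ : ℕ => ℝ) q × lp (fun _ : ℕ => ℝ) 2 →L[ℝ] X)
    (hQT : ∀ x, Q (T x) = x) :
    ∃ P : X →L[ℝ] X, (∀ x, P (P x) = P x) ∧
      ∃ ε α α' : ℝ, 0 < ε ∧ 0 < α ∧ 0 < α' ∧
        ε * ‖ContinuousLinearMap.id ℝ X - P‖ ≤ 1 ∧
        (∀ y : X, P y ≠ 0 → ‖j (P y)‖ / ‖i (P y)‖ ≤ α') ∧
        (∀ x : X, x ≠ 0 → ‖j x‖ / ‖i x‖ < α → ‖x - P x‖ < ε * ‖x‖) := by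
  have hq0 : q ≠ 0 := (zero_lt_one.trans_le (Fact.out : 1 ≤ q)).ne'
  obtain ⟨T₁, hT₁⟩ : ∃ T₁ : X →L[ℝ] lp (fun _ : ℕ => ℝ) q, ∀ x, T₁ x = (T x).1 :=
    ⟨(ContinuousLinearMap.fst ℝ _ _).comp T, fun _ => rfl⟩
  obtain ⟨T₂, hT₂⟩ : ∃ T₂ : X →L[ℝ] lp (fun _ : ℕ => ℝ) 2, ∀ x, T₂ x = (T x).2 :=
    ⟨(ContinuousLinearMap.snd ℝ _ _).comp T, fun _ => rfl⟩
  obtain ⟨Q₁, hQ₁⟩ : ∃ Q₁ : lp (fun _ : ℕ => ℝ) q →L[ℝ] X, ∀ x, Q₁ x = Q (x, 0) :=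
    ⟨Q.comp (ContinuousLinearMap.inl ℝ _ _), fun _ => rfl⟩
  obtain ⟨Q₂, hQ₂⟩ : ∃ Q₂ : lp (fun _ : ℕ => ℝ) 2 →L[ℝ] X, ∀ x, Q₂ x = Q (0, x) :=
    ⟨Q.comp (ContinuousLinearMap.inr ℝ _ _), fun _ => rfl⟩
  have hsum : ∀ x, Q₁ (T₁ x) + Q₂ (T₂ x) = x := by
    intro x
    rw [hQ₁, hQ₂, hT₁, hT₂, ← map_add]
    simp [hQT]
  obtain ⟨A, hA⟩ : ∃ A : X →L[ℝ] X, A = Q₁.comp T₁ := ⟨_, rfl⟩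
  have hAA : A - A * A = Q₂.comp ((T₂.comp Q₁).comp T₁) := by
    ext x
    have := hsum (Q₁ (T₁ x))
    simp only [hA, sub_apply, mul_apply_eq_comp, ContinuousLinearMap.comp_apply]
    rw [sub_eq_iff_eq_add, add_comm]
    exact this.symm
  have hK : IsCompactOperator (A - A * A : X →L[ℝ] X) := by
    rw [hAA]
    exact ((pitt hq hq2 (T₂.comp Q₁)).comp_clm T₁).clm_comp Q₂
  obtain ⟨P, hPP, hPA⟩ := lift_idem A hK
  have hPP' : ∀ x, P (P x) = P x := fun x => by
    have := congrArg (fun L : X →L[ℝ] X => L x) hPP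
    simpa [mul_apply_eq_comp] using this
  -- `j ∘ P` is compact
  have hjP : IsCompactOperator (j.comp P) := by
    have h1 : j.comp P = (j.comp Q₁).comp T₁ + j.comp (P - A) := by
      ext1 x
      simp [hA]
    rw [h1]
    exact ((pitt hq hq2 (j.comp Q₁)).comp_clm T₁).add (hPA.clm_comp j)
  have ha : ∃ α' : ℝ, 0 < α' ∧ ∀ y : X, P y ≠ 0 → ‖j (P y)‖ / ‖i (P y)‖ ≤ α' := by
    by_contra! hcon
    choose y hy0 hy using fun n : ℕ => hcon ((n : ℝ) + 1) (by positivity)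
    let u : ℕ → X := fun n => ‖P (y n)‖⁻¹ • P (y n)
    have hun : ∀ n, 0 < ‖P (y n)‖ := fun n => norm_pos_iff.2 (hy0 n)
    have hu1 : ∀ n, ‖u n‖ = 1 := fun n => by
      simp only [u, norm_smul, norm_inv, norm_norm]
      exact inv_mul_cancel₀ (hun n).ne'
    have hPu : ∀ n, P (u n) = u n := fun n => by simp only [u, map_smul, hPP']
    have hiu : ∀ n : ℕ, ((n : ℝ) + 1) * ‖i (u n)‖ ≤ ‖j (u n)‖ := by
      intro n
      have h1 := hy n
      have h2 : 0 < ‖i (P (y n))‖ := by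
        by_contra h
        have h3 : ‖i (P (y n))‖ = 0 := le_antisymm (not_lt.1 h) (norm_nonneg _)
        rw [h3, div_zero] at h1
        have : (0:ℝ) ≤ n := n.cast_nonneg
        linarith
      rw [lt_div_iff₀ h2] at h1
      simp only [u, map_smul, norm_smul, norm_inv, norm_norm]
      have h3 : 0 < ‖P (y n)‖⁻¹ := inv_pos.2 (hun n)
      nlinarith
    have hju : ∀ n, 1 ≤ ‖j (u n)‖ := by
      intro n
      have h1 := hij (u n)
      rw [hu1] at h1
      rcases le_max_iff.1 h1 with h | h
      · have : (0:ℝ) ≤ n := n.cast_nonneg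
        have := hiu n
        nlinarith
      · exact h
    have hi0 : Tendsto (fun n => ‖i (u n)‖) atTop (𝓝 0) := by
      refine squeeze_zero (fun _ => norm_nonneg _) (fun n => ?_) tendsto_one_div_add_atTop_nhds_zero_nat
      have h1 : (0:ℝ) < (n:ℝ) + 1 := by positivity
      rw [le_div_iff₀ h1, mul_comm]
      exact (hiu n).trans ((hj _).trans (hu1 n).le)
    obtain ⟨S, hS, hSs⟩ := hjP.image_closedBall_subset_compact (𝕜₁ := ℝ)
      (f := (j.comp P : X →ₗ[ℝ] lp (fun _ : ℕ => ℝ) 2)) 1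
    obtain ⟨z, -, ψ, hψ, hz⟩ := hS.tendsto_subseq (x := fun n => j (u n))
      (fun n => hSs ⟨u n, by simp [hu1 n], by
        change j (P (u n)) = j (u n)
        rw [hPu]⟩)
    have hz0 : z = 0 := by
      ext k
      have h1 : Tendsto (fun n => (j (u (ψ n)) : ℕ → ℝ) k) atTop (𝓝 ((z : ℕ → ℝ) k)) := by
        rw [tendsto_iff_norm_sub_tendsto_zero] at hz ⊢
        refine squeeze_zero (fun _ => norm_nonneg _) (fun n => ?_) hz
        exact lp.norm_apply_le_norm two_ne_zero (j (u (ψ n)) - z) k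
      have h2 : Tendsto (fun n => (j (u (ψ n)) : ℕ → ℝ) k) atTop (𝓝 0) := by
        rw [tendsto_zero_iff_norm_tendsto_zero]
        have h3 := (hi0.comp hψ.tendsto_atTop).const_mul (w k)
        rw [mul_zero] at h3
        refine squeeze_zero (fun _ => norm_nonneg _) (fun n => ?_) h3
        rw [hwij, norm_mul, Real.norm_of_nonneg (hw k).le]
        exact mul_le_mul_of_nonneg_left (lp.norm_apply_le_norm hq0 (i (u (ψ n))) k) (hw k).le
      exact tendsto_nhds_unique h1 h2
    have h5 : (1:ℝ) ≤ ‖z‖ := ge_of_tendsto hz.norm (Eventually.of_forall fun n => hju _)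
    rw [hz0, norm_zero] at h5
    linarith
  obtain ⟨α', hα', hA'⟩ := ha
  obtain ⟨ε, hε⟩ : ∃ ε : ℝ, ε = 1 / (‖ContinuousLinearMap.id ℝ X - P‖ + 1) := ⟨_, rfl⟩
  have hε0 : 0 < ε := by rw [hε]; positivity
  have hεP : ε * ‖ContinuousLinearMap.id ℝ X - P‖ ≤ 1 := by
    rw [hε, one_div, inv_mul_le_iff₀ (by positivity)]; linarith
  have hb : ∃ α : ℝ, 0 < α ∧
      ∀ x : X, x ≠ 0 → ‖j x‖ / ‖i x‖ < α → ‖x - P x‖ < ε * ‖x‖ := by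
    by_contra! hcon
    choose y hy0 hy hyP using fun n : ℕ => hcon (1 / ((n : ℝ) + 1)) (by positivity)
    let u : ℕ → X := fun n => ‖y n‖⁻¹ • y n
    have hun : ∀ n, 0 < ‖y n‖ := fun n => norm_pos_iff.2 (hy0 n)
    have hu1 : ∀ n, ‖u n‖ = 1 := fun n => by
      simp only [u, norm_smul, norm_inv, norm_norm]
      exact inv_mul_cancel₀ (hun n).ne'
    have huP : ∀ n, ε ≤ ‖u n - P (u n)‖ := by
      intro n
      simp only [u, map_smul, ← smul_sub, norm_smul, norm_inv, norm_norm]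
      rw [← div_eq_inv_mul, le_div_iff₀ (hun n)]
      exact hyP n
    have hju : ∀ n : ℕ, ‖j (u n)‖ ≤ 1 / ((n : ℝ) + 1) := by
      intro n
      have h2 : 0 < ‖i (y n)‖ := by
        by_contra h
        have h3 : i (y n) = 0 := norm_eq_zero.1 (le_antisymm (not_lt.1 h) (norm_nonneg _))
        have h4 : j (y n) = 0 := by
          ext k
          rw [hwij, h3]; simp
        have := hij (y n)
        rw [h3, h4] at this
        simp only [norm_zero, max_self] at this
        linarith [hun n]
      have h1 := hy n
      rw [div_lt_iff₀ h2] at h1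
      simp only [u, map_smul, norm_smul, norm_inv, norm_norm]
      rw [← div_eq_inv_mul, div_le_iff₀ (hun n)]
      exact h1.le.trans (mul_le_mul_of_nonneg_left (hi _) (by positivity))
    have hj0' : Tendsto (fun n => ‖j (u n)‖) atTop (𝓝 0) :=
      squeeze_zero (fun _ => norm_nonneg _) hju tendsto_one_div_add_atTop_nhds_zero_nat
    have hj0 : Tendsto (fun n => j (u n)) atTop (𝓝 0) := tendsto_zero_iff_norm_tendsto_zero.2 hj0'
    have hcoord : ∀ k, Tendsto (fun n => (i (u n) : ℕ → ℝ) k) atTop (𝓝 0) := by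
      intro k
      rw [tendsto_zero_iff_norm_tendsto_zero]
      have h3 := hj0'.const_mul (w k)⁻¹
      rw [mul_zero] at h3
      refine squeeze_zero (fun _ => norm_nonneg _) (fun n => ?_) h3
      rw [← div_eq_inv_mul, le_div_iff₀ (hw k)]
      have h4 := lp.norm_apply_le_norm two_ne_zero (j (u n)) k
      rw [hwij, norm_mul, Real.norm_of_nonneg (hw k).le] at h4
      linarith
    have hM : ∀ n, ‖i (u n)‖ ≤ 1 := fun n => (hi _).trans (hu1 n).le
    have hT2 := key_lemma hq hq2 i j hij T₂ (l := atTop) u 1 (Eventually.of_forall hM) hcoord hj0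
    have hB : Tendsto (fun n => Q₂ (T₂ (u n))) atTop (𝓝 0) := by
      have := (Q₂.continuous.tendsto 0).comp hT2
      rw [map_zero] at this
      exact this
    obtain ⟨S, hS, hSs⟩ := hPA.image_closedBall_subset_compact (𝕜₁ := ℝ)
      (f := ((P - A : X →L[ℝ] X) : X →ₗ[ℝ] X)) 1
    obtain ⟨z, -, ψ, hψ, hz⟩ := hS.tendsto_subseq (x := fun n => (P - A) (u n))
      (fun n => hSs ⟨u n, by simp [hu1 n], rfl⟩)
    have hz0 : z = 0 := by
      apply SeparatingDual.eq_zero_of_forall_dual_eq_zero (R := ℝ)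
      intro f
      have h1 := key_lemma hq hq2 i j hij (f.comp (P - A)) (l := atTop) u 1
        (Eventually.of_forall hM) hcoord hj0
      have h2 := (f.continuous.tendsto z).comp hz
      exact tendsto_nhds_unique h2 (h1.comp hψ.tendsto_atTop)
    have hfin : Tendsto (fun n => u (ψ n) - P (u (ψ n))) atTop (𝓝 0) := by
      have h1 := (hB.comp hψ.tendsto_atTop).sub hz
      rw [hz0, sub_zero] at h1
      refine h1.congr fun n => ?_
      have h2 := hsum (u (ψ n))
      simp only [Function.comp_apply, sub_apply, hA, ContinuousLinearMap.comp_apply]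
      have h3 : Q₂ (T₂ (u (ψ n))) = u (ψ n) - Q₁ (T₁ (u (ψ n))) :=
        eq_sub_of_add_eq' h2
      rw [h3]
      abel
    have h5 : ε ≤ ‖(0:X)‖ := ge_of_tendsto hfin.norm (Eventually.of_forall fun n => huP _)
    rw [norm_zero] at h5
    linarith
  obtain ⟨α, hα, hb⟩ := hb
  exact ⟨P, hPP', ε, α, α', hε0, hα, hα', hεP, hA', hb⟩

end

/-- Proposition 2.6, converse: if a complemented subspace `X` of `X_p`
is isomorphic to a complemented subspace of `ℓ_p ⊕ ℓ_2`, then there exist a bounded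
projection `P` on `X` with range `Y` and constants `ε, α, α' > 0` with
`ε ≤ ‖I - P‖⁻¹` (stated multiplicatively as `ε ‖I - P‖ ≤ 1`) such that (a) `r(y) ≤ α'`
for all nonzero `y ∈ Y` and (b) every nonzero `x ∈ X` with `r(x) < α` admits `y ∈ Y`
with `‖x - y‖ < ε ‖x‖`. -/
theorem stmt17 (p : ℝ) (hp : 2 < p) [Fact (1 ≤ ENNReal.ofReal p)]
    (w : ℕ → ℝ) (hw : IsXpWeight p w)
    (X : Submodule ℝ (Xpw p w)) (hX : X.ClosedComplemented)
    (V : Submodule ℝ (SeqP p × Seq2)) (hV : V.ClosedComplemented)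
    (hiso : Nonempty (↥X ≃L[ℝ] ↥V)) :
    ∃ P : ↥X →L[ℝ] ↥X, (∀ x : ↥X, P (P x) = P x) ∧
      ∃ ε α α' : ℝ, 0 < ε ∧ 0 < α ∧ 0 < α' ∧
        ε * ‖ContinuousLinearMap.id ℝ ↥X - P‖ ≤ 1 ∧
        (∀ y : ↥X, y ∈ LinearMap.range (P : ↥X →ₗ[ℝ] ↥X) → y ≠ 0 → ratio (y : Xpw p w) ≤ α') ∧
        (∀ x : ↥X, x ≠ 0 → ratio (x : Xpw p w) < α →
          ∃ y ∈ LinearMap.range (P : ↥X →ₗ[ℝ] ↥X), ‖x - y‖ < ε * ‖x‖) := by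
  have hq : ENNReal.ofReal p ≠ ⊤ := ENNReal.ofReal_ne_top
  have hq2 : 2 < (ENNReal.ofReal p).toReal := by
    rw [ENNReal.toReal_ofReal (by linarith)]; exact hp
  obtain ⟨e⟩ := hiso
  obtain ⟨π, hπ⟩ := hV
  have hVc : IsClosed (V : Set (SeqP p × Seq2)) :=
    Submodule.ClosedComplemented.isClosed ⟨π, hπ⟩
  have hVcomp : CompleteSpace ↥V := hVc.completeSpace_coe
  have hXcomp : CompleteSpace ↥X :=
    (completeSpace_congr (e := e.toEquiv) e.isUniformEmbedding).2 hVcomp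
  let i : ↥X →L[ℝ] SeqP p := (ContinuousLinearMap.fst ℝ (SeqP p) Seq2).comp
    ((XpwMod p w).subtypeL.comp X.subtypeL)
  let j : ↥X →L[ℝ] Seq2 := (ContinuousLinearMap.snd ℝ (SeqP p) Seq2).comp
    ((XpwMod p w).subtypeL.comp X.subtypeL)
  have hn : ∀ x : ↥X, ‖x‖ = max ‖i x‖ ‖j x‖ := fun x => rfl
  obtain ⟨P, hPP, ε, α, α', h1, h2, h3, h4, h5, h6⟩ := core_thm hq hq2 i j
    (fun x => (hn x).le) (fun x => (le_max_left _ _).trans (hn x).ge)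
    (fun x => (le_max_right _ _).trans (hn x).ge) w hw.1
    (fun x n => (show ↥(XpwMod p w) from x.1).2 n)
    (V.subtypeL.comp (e : ↥X →L[ℝ] ↥V)) ((e.symm : ↥V →L[ℝ] ↥X).comp π)
    (fun x => by
      change e.symm (π (e x : SeqP p × Seq2)) = x
      rw [hπ, e.symm_apply_apply])
  refine ⟨P, hPP, ε, α, α', h1, h2, h3, h4, ?_, ?_⟩
  · rintro y ⟨x, rfl⟩ hy
    exact h5 x hy
  · intro x hx hr
    exact ⟨P x, ⟨x, rfl⟩, h6 x hx hr⟩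
end
end
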